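/- (Existence and extremality of the plus and minus measures.) Let G = (V,E) be an infinite connected graph in which every vertex has finite degree, with fixed origin o. Let J be reasonable interactions on V (with function f, exponent r > 0 and constant c ∈ (0,1)) that are moreover ferromagnetic (J_{x,y} ≥ 0), let β ≥ 0, and let ρ be a measure on ℝ with 0 < ∫_ℝ e^{a|u|²} dρ(u) < ∞ for all a > 0. Suppose there exists c₀ > 0 such that for all integers j, k ≥ 1, f(k^{−r}) ≥ c₀ √( log|B_{k+j}(o)| / log|B_j(o)| ). Define ξ⁺ ∈ ℝ^V by ξ⁺_x = √(log|B_{d_G(o,x)}(o)|) and ξ⁻ = −ξ⁺. Then there exist (2βM_f/c)-regular Gibbs measures ν⁺ and ν⁻ on ℝ^V such that ν^{ξ⁺}_{Λ,β,ρ,J} → ν⁺ and ν^{ξ⁻}_{Λ,β,ρ,J} → ν⁻ as Λ ↗ V (convergence of all finite-dimensional marginals along every sequence of finite sets increasing to V). Moreover, for every a > 0, every a-regular Gibbs measure ν satisfies ν⁻ ⪯ ν ⪯ ν⁺ (stochastic domination). -/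

import Mathlib

open MeasureTheory Filter
open scoped ENNReal Classical

/-- The Hamiltonian `-H^ξ_{Λ,J}` (already multiplied by `β`). -/
noncomputable def hamil {V : Type*} (J : V → V → ℝ) (β : ℝ) (Λ : Finset V)
    (ξ : V → ℝ) (φ : ↥Λ → ℝ) : ℝ :=
  β * ((1 / 2) * ∑ x : ↥Λ, ∑ y : ↥Λ,
      (if x.1 ≠ y.1 then J x.1 y.1 * φ x * φ y else 0)
    + ∑ x : ↥Λ, φ x * ∑' y : {y : V // y ∉ Λ}, J x.1 y.1 * ξ y.1)

/-- The finite-volume Gibbs measure `ν^ξ_{Λ,β,ρ,J}` on `ℝ^Λ`. -/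
noncomputable def gibbs {V : Type*} (J : V → V → ℝ) (β : ℝ) (ρ : Measure ℝ)
    (Λ : Finset V) (ξ : V → ℝ) : Measure (↥Λ → ℝ) :=
  (((Measure.pi fun _ : ↥Λ => ρ).withDensity
      fun φ => ENNReal.ofReal (Real.exp (hamil J β Λ ξ φ))) Set.univ)⁻¹ •
    (Measure.pi fun _ : ↥Λ => ρ).withDensity
      fun φ => ENNReal.ofReal (Real.exp (hamil J β Λ ξ φ))

/-- The `Λ'`-marginal of a measure on `ℝ^Λ`, for `Λ' ⊆ Λ`. -/
noncomputable def marg {V : Type*} {Λ' Λ : Finset V} (h : Λ' ⊆ Λ)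
    (μ : Measure (↥Λ → ℝ)) : Measure (↥Λ' → ℝ) :=
  μ.map fun φ x => φ ⟨x.1, h x.2⟩

/-- The normalized product measure `ν^0_{Λ,0,ρ,0}`. -/
noncomputable def prodN {V : Type*} (ρ : Measure ℝ) (Λ : Finset V) :
    Measure (↥Λ → ℝ) :=
  ((Measure.pi fun _ : ↥Λ => ρ) Set.univ)⁻¹ • Measure.pi fun _ : ↥Λ => ρ

/-- The tilted single-site measure `dρ_b(u) = e^(b|u|²) dρ(u)`. -/
noncomputable def rhoMod (ρ : Measure ℝ) (b : ℝ) : Measure ℝ :=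
  ρ.withDensity fun u => ENNReal.ofReal (Real.exp (b * u ^ 2))

/-- Restriction of an infinite-volume configuration to a finite set of vertices. -/
def restrictTo {V : Type*} (Λ : Finset V) (φ : V → ℝ) : ↥Λ → ℝ := fun x => φ x.1

/-- `a`-regularity with respect to the single-site measure `ρa`. -/
def IsRegularWRT {V : Type*} (ρa : Measure ℝ) (ν : Measure (V → ℝ)) : Prop :=
  ∃ B : ℝ, 0 ≤ B ∧ ∀ Λ : Finset V,
    ν.map (restrictTo Λ) ≤ ENNReal.ofReal (Real.exp (B * Λ.card)) • prodN ρa Λ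

/-- `ν` is a Gibbs measure: it satisfies the DLR equations. -/
def IsGibbsMeasure {V : Type*} (J : V → V → ℝ) (β : ℝ) (ρ : Measure ℝ)
    (ν : Measure (V → ℝ)) : Prop :=
  ∀ (Λ : Finset V) (g : (↥Λ → ℝ) → ℝ), Measurable g → (∃ K, ∀ ψ, |g ψ| ≤ K) →
    ∫ φ, g (restrictTo Λ φ) ∂ν = ∫ η, ∫ ψ, g ψ ∂(gibbs J β ρ Λ η) ∂ν

/-- Convergence of the finite-volume measures `ν^ξ_{Λ,β,ρ,J}` to an infinite-volume
measure `ν` as `Λ ↗ V`: along every increasing exhausting sequence of finite sets,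
all finite-dimensional marginals converge weakly. -/
def ConvergesTo {V : Type*} (J : V → V → ℝ) (β : ℝ) (ρ : Measure ℝ) (ξ : V → ℝ)
    (ν : Measure (V → ℝ)) : Prop :=
  ∀ (Λseq : ℕ → Finset V), Monotone Λseq → (∀ x : V, ∃ i, x ∈ Λseq i) →
    ∀ (Λ' : Finset V) (g : (↥Λ' → ℝ) → ℝ), Continuous g → (∃ K, ∀ ψ, |g ψ| ≤ K) →
      Tendsto (fun i => if h : Λ' ⊆ Λseq i then
          ∫ ψ, g ψ ∂(marg h (gibbs J β ρ (Λseq i) ξ)) else 0)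
        atTop (nhds (∫ φ, g (restrictTo Λ' φ) ∂ν))

/-- Stochastic domination. -/
def StochDom {ι : Type*} (μ ν : Measure (ι → ℝ)) : Prop :=
  ∀ g : (ι → ℝ) → ℝ, Measurable g → Monotone g → (∃ K, ∀ φ, |g φ| ≤ K) →
    ∫ φ, g φ ∂μ ≤ ∫ φ, g φ ∂ν

namespace PM

/-- scalar inequality behind the four functions theorem -/
lemma four_scalar {a b c d : ℝ≥0∞} (hac : a ≤ c) (hbc : b ≤ c) (h : a * b ≤ c * d) :
    a + b ≤ c + d := by
  rcases eq_or_ne c ⊤ with rfl | hc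
  · simp
  rcases eq_or_ne d ⊤ with rfl | hd
  · simp
  have ha : a ≠ ⊤ := ne_top_of_le_ne_top hc hac
  have hb : b ≠ ⊤ := ne_top_of_le_ne_top hc hbc
  lift a to NNReal using ha
  lift b to NNReal using hb
  lift c to NNReal using hc
  lift d to NNReal using hd
  norm_cast at *
  have h' : (a:ℝ) * b ≤ c * d := by exact_mod_cast h
  have h1 : (a:ℝ) ≤ c := by exact_mod_cast hac
  have h2 : (b:ℝ) ≤ c := by exact_mod_cast hbc
  have : (a:ℝ) + b ≤ c + d := by
    rcases eq_or_lt_of_le (c.2 : (0:ℝ) ≤ c) with h0 | h0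
    · have : (0:ℝ) ≤ d := d.2
      have h0' : (c:ℝ) = 0 := h0.symm
      linarith
    · have : (c:ℝ) * (a + b) ≤ c * (c + d) := by nlinarith
      exact le_of_mul_le_mul_left this h0
  exact_mod_cast this

lemma four_one (ρ : Measure ℝ) [SFinite ρ] (f1 f2 f3 f4 : ℝ → ℝ≥0∞)
    (m1 : Measurable f1) (m2 : Measurable f2) (m3 : Measurable f3) (m4 : Measurable f4)
    (h : ∀ x y, f1 x * f2 y ≤ f3 (x ⊔ y) * f4 (x ⊓ y)) :
    (∫⁻ x, f1 x ∂ρ) * (∫⁻ x, f2 x ∂ρ) ≤ (∫⁻ x, f3 x ∂ρ) * (∫⁻ x, f4 x ∂ρ) := by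
  have dbl : ∀ (f g : ℝ → ℝ≥0∞), Measurable f → Measurable g →
      2 * ((∫⁻ x, f x ∂ρ) * (∫⁻ x, g x ∂ρ)) =
        ∫⁻ p : ℝ × ℝ, (f p.1 * g p.2 + f p.2 * g p.1) ∂(ρ.prod ρ) := by
    intro f g hf hg
    rw [lintegral_add_left (by fun_prop)]
    have e1 : ∫⁻ p : ℝ × ℝ, f p.1 * g p.2 ∂(ρ.prod ρ) = (∫⁻ x, f x ∂ρ) * (∫⁻ x, g x ∂ρ) :=
      lintegral_prod_mul hf.aemeasurable hg.aemeasurable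
    have e2 : ∫⁻ p : ℝ × ℝ, f p.2 * g p.1 ∂(ρ.prod ρ) = (∫⁻ x, f x ∂ρ) * (∫⁻ x, g x ∂ρ) := by
      simp_rw [mul_comm (f _) (g _)]
      rw [mul_comm (∫⁻ x, f x ∂ρ)]
      exact lintegral_prod_mul hg.aemeasurable hf.aemeasurable
    rw [e1, e2, two_mul]
  have : 2 * ((∫⁻ x, f1 x ∂ρ) * (∫⁻ x, f2 x ∂ρ)) ≤ 2 * ((∫⁻ x, f3 x ∂ρ) * (∫⁻ x, f4 x ∂ρ)) := by
    rw [dbl f1 f2 m1 m2, dbl f3 f4 m3 m4]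
    apply lintegral_mono
    rintro ⟨x, y⟩
    have hprod : (f1 x * f2 y) * (f1 y * f2 x) ≤ (f3 x * f4 x) * (f3 y * f4 y) := by
      have hx := h x x
      have hy := h y y
      simp only [sup_idem, inf_idem] at hx hy
      calc _ = (f1 x * f2 x) * (f1 y * f2 y) := by ring
        _ ≤ _ := mul_le_mul' hx hy
    rcases le_total x y with hxy | hxy
    · have a1 := h x y
      have a2 := h y x
      rw [sup_eq_right.2 hxy, inf_eq_left.2 hxy] at a1
      rw [sup_eq_left.2 hxy, inf_eq_right.2 hxy] at a2
      show f1 x * f2 y + f1 y * f2 x ≤ f3 x * f4 y + f3 y * f4 x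
      rw [add_comm (f3 x * f4 y)]
      exact four_scalar a1 a2 (hprod.trans (le_of_eq (by ring)))
    · have a1 := h x y
      have a2 := h y x
      rw [sup_eq_left.2 hxy, inf_eq_right.2 hxy] at a1
      rw [sup_eq_right.2 hxy, inf_eq_left.2 hxy] at a2
      show f1 x * f2 y + f1 y * f2 x ≤ f3 x * f4 y + f3 y * f4 x
      exact four_scalar a1 a2 (hprod.trans (le_of_eq (by ring)))
  rwa [ENNReal.mul_le_mul_iff_right (by simp) (by simp)] at this

lemma four_fun {V : Type*} (ρ : Measure ℝ) [SigmaFinite ρ] (s : Finset V) :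
    ∀ (f1 f2 f3 f4 : (V → ℝ) → ℝ≥0∞),
    Measurable f1 → Measurable f2 → Measurable f3 → Measurable f4 →
    (∀ x y, f1 x * f2 y ≤ f3 (x ⊔ y) * f4 (x ⊓ y)) → ∀ x y,
    lmarginal (fun _ => ρ) s f1 x * lmarginal (fun _ => ρ) s f2 y ≤
      lmarginal (fun _ => ρ) s f3 (x ⊔ y) * lmarginal (fun _ => ρ) s f4 (x ⊓ y) := by
  induction s using Finset.induction_on with
  | empty => intro f1 f2 f3 f4 _ _ _ _ h x y; simpa using h x y
  | insert i s hi ih =>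
    intro f1 f2 f3 f4 m1 m2 m3 m4 h x y
    rw [lmarginal_insert _ m1 hi, lmarginal_insert _ m2 hi, lmarginal_insert _ m3 hi,
      lmarginal_insert _ m4 hi]
    apply four_one
    · exact (m1.lmarginal _).comp (measurable_update x)
    · exact (m2.lmarginal _).comp (measurable_update y)
    · exact (m3.lmarginal _).comp (measurable_update (x ⊔ y))
    · exact (m4.lmarginal _).comp (measurable_update (x ⊓ y))
    intro a b
    have := ih f1 f2 f3 f4 m1 m2 m3 m4 h (Function.update x i a) (Function.update y i b)
    have e1 : Function.update x i a ⊔ Function.update y i b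
        = Function.update (x ⊔ y) i (a ⊔ b) := by
      funext j; by_cases hj : j = i
      · subst hj; simp
      · simp [Function.update_of_ne hj]
    have e2 : Function.update x i a ⊓ Function.update y i b
        = Function.update (x ⊓ y) i (a ⊓ b) := by
      funext j; by_cases hj : j = i
      · subst hj; simp
      · simp [Function.update_of_ne hj]
    rwa [e1, e2] at this

lemma lmarg_prod {V : Type*} (ρ : Measure ℝ) [SigmaFinite ρ] (F : ℝ → ℝ≥0∞) (hF : Measurable F)
    (s : Finset V) (x : V → ℝ) :
    lmarginal (fun _ => ρ) s (fun φ => ∏ i ∈ s, F (φ i)) x = (∫⁻ u, F u ∂ρ) ^ s.card := by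
  induction s using Finset.induction_on generalizing x with
  | empty => simp
  | insert i s hi ih =>
    rw [lmarginal_insert' _ (by fun_prop) hi]
    have : (fun y : V → ℝ => ∫⁻ u, ∏ j ∈ insert i s, F (Function.update y i u j) ∂ρ)
        = fun y => (∫⁻ u, F u ∂ρ) * ∏ j ∈ s, F (y j) := by
      funext y
      have h2 : ∀ u : ℝ, ∏ j ∈ insert i s, F (Function.update y i u j)
          = F u * ∏ j ∈ s, F (y j) := by
        intro u
        rw [Finset.prod_insert hi, Function.update_self]
        congr 1
        apply Finset.prod_congr rfl
        intro j hj
        have hji : j ≠ i := by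
          rintro rfl
          exact hi hj
        rw [Function.update_of_ne hji]
      simp_rw [h2]
      rw [lintegral_mul_const _ hF]
    rw [this, Finset.card_insert_of_notMem hi, pow_succ']
    rw [← ih x]
    unfold lmarginal
    rw [lintegral_const_mul]
    apply Finset.measurable_prod
    intro j hj
    have : Measurable fun a : s → ℝ => Function.updateFinset x s a j :=
      measurable_pi_iff.1 (measurable_updateFinset (s := s) (x := x)) j
    exact hF.comp this

lemma pi_lint_prod {V : Type*} (ρ : Measure ℝ) [SigmaFinite ρ] (F : ℝ → ℝ≥0∞) (hF : Measurable F)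
    (s : Finset V) :
    ∫⁻ y : s → ℝ, ∏ i : s, F (y i) ∂(Measure.pi fun _ : s => ρ) = (∫⁻ u, F u ∂ρ) ^ s.card := by
  rw [← lmarg_prod ρ F hF s (fun _ => 0)]
  unfold lmarginal
  apply lintegral_congr
  intro y
  show _ = ∏ i ∈ s, F (Function.updateFinset (fun _ => (0:ℝ)) s y i)
  rw [← Finset.prod_coe_sort s]
  apply Finset.prod_congr rfl
  intro i _
  simp [Function.updateFinset]

end PM

namespace PM

/-- Standing hypotheses in abstract form. -/
structure Hyp {V : Type*} (J g : V → V → ℝ) (β M L : ℝ) (ρ : Measure ℝ) (ζ : V → ℝ) : Prop where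
  symm : ∀ x y, J x y = J y x
  nn : ∀ x y, 0 ≤ J x y
  g1 : ∀ x y, 1 ≤ g x y
  sm : ∀ x, Summable fun y => J x y * g x y
  bd : ∀ x, ∑' y, J x y * g x y ≤ M
  Mpos : 0 < M
  Lpos : 0 < L
  zpos : ∀ x, 0 < ζ x
  cmp : ∀ x y, x ≠ y → J x y ≠ 0 → ζ y ≤ L * g x y * ζ x
  sz : Summable fun x => Real.exp (-(2 * ζ x ^ 2))
  bnn : 0 ≤ β
  fin : ρ Set.univ < ⊤
  pos : ρ Set.univ ≠ 0
  mom : ∀ a : ℝ, ∫⁻ u, ENNReal.ofReal (Real.exp (a * u ^ 2)) ∂ρ < ⊤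

/-- exterior field -/
noncomputable def fld {V : Type*} (J : V → V → ℝ) (Λ : Finset V) (ξ : V → ℝ) (x : V) : ℝ :=
  ∑' y : {y : V // y ∉ Λ}, J x y.1 * ξ y.1

/-- weights -/
noncomputable def wt {V : Type*} (J : V → V → ℝ) (β : ℝ) (Λ : Finset V) (φ : V → ℝ) : ℝ≥0∞ :=
  ENNReal.ofReal (Real.exp (hamil J β Λ φ (restrictTo Λ φ)))

/-- partition function -/
noncomputable def Zf {V : Type*} (J : V → V → ℝ) (β : ℝ) (ρ : Measure ℝ) (Λ : Finset V)
    (ξ : V → ℝ) : ℝ≥0∞ :=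
  lmarginal (fun _ => ρ) Λ (wt J β Λ) ξ

/-- the specification on the whole configuration space -/
noncomputable def gam {V : Type*} (J : V → V → ℝ) (β : ℝ) (ρ : Measure ℝ) (Λ : Finset V)
    (ξ : V → ℝ) : Measure (V → ℝ) :=
  (gibbs J β ρ Λ ξ).map (Function.updateFinset ξ Λ)

section
variable {V : Type*} {J g : V → V → ℝ} {β M L : ℝ} {ρ : Measure ℝ} {ζ : V → ℝ}

lemma hamil_fld (Λ : Finset V) (ξ : V → ℝ) (φ : Λ → ℝ) :
    hamil J β Λ ξ φ = β * ((1 / 2) * ∑ x : ↥Λ, ∑ y : ↥Λ,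
      (if x.1 ≠ y.1 then J x.1 y.1 * φ x * φ y else 0)
    + ∑ x : ↥Λ, φ x * fld J Λ ξ x) := rfl

lemma fld_congr (Λ : Finset V) {ξ η : V → ℝ} (h : ∀ y, y ∉ Λ → ξ y = η y) (x : V) :
    fld J Λ ξ x = fld J Λ η x := by
  unfold fld
  congr 1
  funext y
  rw [h y.1 y.2]

lemma restr_update (Λ : Finset V) (ξ : V → ℝ) (y : Λ → ℝ) :
    restrictTo Λ (Function.updateFinset ξ Λ y) = y := by
  funext x
  simp [restrictTo, Function.updateFinset]

lemma fld_update (Λ : Finset V) (ξ : V → ℝ) (y : Λ → ℝ) (x : V) :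
    fld J Λ (Function.updateFinset ξ Λ y) x = fld J Λ ξ x := by
  apply fld_congr
  intro z hz
  simp [Function.updateFinset, hz]

lemma wt_update (Λ : Finset V) (ξ : V → ℝ) (y : Λ → ℝ) :
    wt J β Λ (Function.updateFinset ξ Λ y) = ENNReal.ofReal (Real.exp (hamil J β Λ ξ y)) := by
  unfold wt
  rw [restr_update, hamil_fld, hamil_fld]
  simp_rw [fld_update]

lemma meas_fld [Countable V] (Λ : Finset V) (x : V) : Measurable fun ξ => fld J Λ ξ x := by
  unfold fld
  apply Measurable.tsum
  intro y
  fun_prop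

lemma meas_restrictTo (Λ : Finset V) : Measurable (restrictTo Λ : (V → ℝ) → _) := by
  unfold restrictTo
  fun_prop

lemma meas_wt [Countable V] (Λ : Finset V) : Measurable (wt J β Λ) := by
  unfold wt
  simp_rw [hamil_fld]
  have h1 : ∀ x : Λ, Measurable fun φ : V → ℝ => fld J Λ φ x := fun x => meas_fld Λ x
  apply ENNReal.measurable_ofReal.comp
  apply Real.measurable_exp.comp
  apply Measurable.const_mul
  apply Measurable.add
  · apply Measurable.const_mul
    apply Finset.measurable_sum
    intro x _
    apply Finset.measurable_sum
    intro y _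
    split_ifs
    · unfold restrictTo; fun_prop
    · fun_prop
  · apply Finset.measurable_sum
    intro x _
    apply Measurable.mul _ (h1 x)
    unfold restrictTo; fun_prop

lemma cont_hamil (Λ : Finset V) (ξ : V → ℝ) : Continuous (hamil J β Λ ξ) := by
  unfold hamil
  apply Continuous.mul continuous_const
  apply Continuous.add
  · apply Continuous.mul continuous_const
    apply continuous_finsetSum
    intro x _
    apply continuous_finsetSum
    intro y _
    split_ifs
    · fun_prop
    · fun_prop
  · fun_prop

lemma meas_bw (Λ : Finset V) (ξ : V → ℝ) :
    Measurable fun y => ENNReal.ofReal (Real.exp (hamil J β Λ ξ y)) :=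
  ENNReal.measurable_ofReal.comp (Real.measurable_exp.comp (cont_hamil Λ ξ).measurable)

lemma Zf_eq (Λ : Finset V) (ξ : V → ℝ) :
    Zf J β ρ Λ ξ = ∫⁻ y, ENNReal.ofReal (Real.exp (hamil J β Λ ξ y))
      ∂(Measure.pi fun _ : Λ => ρ) := by
  unfold Zf lmarginal
  simp_rw [wt_update]

lemma gibbs_eq (Λ : Finset V) (ξ : V → ℝ) :
    gibbs J β ρ Λ ξ = (Zf J β ρ Λ ξ)⁻¹ • (Measure.pi fun _ : Λ => ρ).withDensity
      fun y => ENNReal.ofReal (Real.exp (hamil J β Λ ξ y)) := by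
  unfold gibbs
  rw [withDensity_apply _ MeasurableSet.univ, Measure.restrict_univ, Zf_eq]

lemma lint_gibbs (Λ : Finset V) (ξ : V → ℝ) (F : (Λ → ℝ) → ℝ≥0∞) :
    ∫⁻ y, F y ∂(gibbs J β ρ Λ ξ) = (Zf J β ρ Λ ξ)⁻¹ *
      ∫⁻ y, ENNReal.ofReal (Real.exp (hamil J β Λ ξ y)) * F y ∂(Measure.pi fun _ : Λ => ρ) := by
  rw [gibbs_eq, lintegral_smul_measure,
    lintegral_withDensity_eq_lintegral_mul_non_measurable _ (meas_bw Λ ξ)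
      (Eventually.of_forall fun _ => ENNReal.ofReal_lt_top)]
  rfl

lemma lint_gam (Λ : Finset V) (ξ : V → ℝ) {F : (V → ℝ) → ℝ≥0∞} (hF : Measurable F) :
    ∫⁻ φ, F φ ∂(gam J β ρ Λ ξ) = (Zf J β ρ Λ ξ)⁻¹ *
      lmarginal (fun _ => ρ) Λ (fun φ => wt J β Λ φ * F φ) ξ := by
  unfold gam
  rw [lintegral_map hF measurable_updateFinset, lint_gibbs]
  unfold lmarginal
  simp_rw [wt_update]

lemma lint_gam' (Λ : Finset V) (ξ : V → ℝ) {F : (V → ℝ) → ℝ≥0∞} (hF : Measurable F) :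
    ∫⁻ φ, F φ ∂(gam J β ρ Λ ξ) = ∫⁻ y, F (Function.updateFinset ξ Λ y) ∂(gibbs J β ρ Λ ξ) := by
  unfold gam
  rw [lintegral_map hF measurable_updateFinset]

lemma gam_map (Λ : Finset V) (ξ : V → ℝ) :
    (gam J β ρ Λ ξ).map (restrictTo Λ) = gibbs J β ρ Λ ξ := by
  unfold gam
  rw [Measure.map_map (meas_restrictTo Λ) measurable_updateFinset]
  have : restrictTo Λ ∘ Function.updateFinset ξ Λ = id := by
    funext y
    exact restr_update Λ ξ y
  rw [this, Measure.map_id]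

lemma Hyp.sJ (H : Hyp J g β M L ρ ζ) (x : V) : Summable (J x) := by
  refine Summable.of_nonneg_of_le (H.nn x) (fun y => ?_) (H.sm x)
  exact le_mul_of_one_le_right (H.nn x y) (H.g1 x y)

lemma Hyp.bJ (H : Hyp J g β M L ρ ζ) (x : V) : ∑' y, J x y ≤ M := by
  refine le_trans ?_ (H.bd x)
  apply (H.sJ x).tsum_le_tsum _ (H.sm x)
  intro y
  exact le_mul_of_one_le_right (H.nn x y) (H.g1 x y)

lemma Hyp.bJf (H : Hyp J g β M L ρ ζ) (x : V) (s : Finset V) : ∑ y ∈ s, J x y ≤ M :=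
  ((H.sJ x).sum_le_tsum s (fun y _ => H.nn x y)).trans (H.bJ x)

lemma Hyp.bJs (H : Hyp J g β M L ρ ζ) (x : V) (s : Finset V) : ∑ y : s, J x y ≤ M := by
  rw [Finset.sum_coe_sort s (fun y => J x y)]
  exact H.bJf x s

lemma Hyp.isFin (H : Hyp J g β M L ρ ζ) : IsFiniteMeasure ρ := ⟨H.fin⟩

/-- pair interaction bound -/
lemma Hyp.pair (H : Hyp J g β M L ρ ζ) (Λ : Finset V) (φ : Λ → ℝ) :
    |∑ x : ↥Λ, ∑ y : ↥Λ, (if x.1 ≠ y.1 then J x.1 y.1 * φ x * φ y else 0)| ≤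
      M * ∑ x : Λ, φ x ^ 2 := by
  calc |∑ x : ↥Λ, ∑ y : ↥Λ, (if x.1 ≠ y.1 then J x.1 y.1 * φ x * φ y else 0)|
      ≤ ∑ x : ↥Λ, ∑ y : ↥Λ, |(if x.1 ≠ y.1 then J x.1 y.1 * φ x * φ y else 0)| := by
        refine (Finset.abs_sum_le_sum_abs _ _).trans ?_
        apply Finset.sum_le_sum
        intro x _
        exact Finset.abs_sum_le_sum_abs _ _
    _ ≤ ∑ x : ↥Λ, ∑ y : ↥Λ, ((1/2) * (J x.1 y.1 * φ x ^ 2) + (1/2) * (J x.1 y.1 * φ y ^ 2)) := by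
        apply Finset.sum_le_sum
        intro x _
        apply Finset.sum_le_sum
        intro y _
        have hJ := H.nn x.1 y.1
        split_ifs with h
        · rw [abs_le]
          constructor <;> nlinarith [mul_nonneg hJ (sq_nonneg (φ x + φ y)), mul_nonneg hJ (sq_nonneg (φ x - φ y))]
        · simp only [abs_zero]; positivity
    _ = ∑ x : ↥Λ, ∑ y : ↥Λ, J x.1 y.1 * φ x ^ 2 := by
        simp_rw [Finset.sum_add_distrib, ← Finset.mul_sum]
        have : ∑ x : ↥Λ, ∑ y : ↥Λ, J x.1 y.1 * φ y ^ 2 = ∑ x : ↥Λ, ∑ y : ↥Λ, J x.1 y.1 * φ x ^ 2 := by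
          rw [Finset.sum_comm]
          apply Finset.sum_congr rfl; intro x _
          apply Finset.sum_congr rfl; intro y _
          rw [H.symm]
        rw [this]
        ring
    _ ≤ _ := by
        rw [Finset.mul_sum]
        apply Finset.sum_le_sum
        intro x _
        rw [← Finset.sum_mul]
        exact mul_le_mul_of_nonneg_right (H.bJs x Λ) (sq_nonneg _)

lemma Hyp.hamil_le (H : Hyp J g β M L ρ ζ) {δ : ℝ} (hδ : β = 0 ∨ 0 < δ) (hδ0 : 0 ≤ δ) (Λ : Finset V)
    (ξ : V → ℝ) (φ : Λ → ℝ) :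
    hamil J β Λ ξ φ ≤ (β * M / 2 + δ) * ∑ x : Λ, φ x ^ 2
      + β ^ 2 / (4 * δ) * ∑ x : Λ, fld J Λ ξ x ^ 2 := by
  rw [hamil_fld]
  have h1 := (abs_le.1 (H.pair Λ φ)).2
  have h2 : β * ∑ x : ↥Λ, φ x * fld J Λ ξ x ≤ δ * ∑ x : Λ, φ x ^ 2
      + β ^ 2 / (4 * δ) * ∑ x : Λ, fld J Λ ξ x ^ 2 := by
    rw [Finset.mul_sum, Finset.mul_sum, Finset.mul_sum, ← Finset.sum_add_distrib]
    apply Finset.sum_le_sum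
    intro x _
    rcases hδ with rfl | hδ
    · simp; positivity
    · have : δ * φ x ^ 2 + β ^ 2 / (4 * δ) * fld J Λ ξ x ^ 2 - β * (φ x * fld J Λ ξ x)
        = δ * (φ x - β * fld J Λ ξ x / (2 * δ)) ^ 2 := by
        field_simp
        ring
      nlinarith [mul_nonneg hδ0 (sq_nonneg (φ x - β * fld J Λ ξ x / (2 * δ)))]
  have h3 := mul_le_mul_of_nonneg_left h1 H.bnn
  nlinarith

lemma Hyp.hamil_ge (H : Hyp J g β M L ρ ζ) {δ : ℝ} (hδ : β = 0 ∨ 0 < δ) (hδ0 : 0 ≤ δ) (Λ : Finset V)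
    (ξ : V → ℝ) (φ : Λ → ℝ) :
    -((β * M / 2 + δ) * ∑ x : Λ, φ x ^ 2
      + β ^ 2 / (4 * δ) * ∑ x : Λ, fld J Λ ξ x ^ 2) ≤ hamil J β Λ ξ φ := by
  rw [hamil_fld]
  have h1 := (abs_le.1 (H.pair Λ φ)).1
  have h2 : -(δ * ∑ x : Λ, φ x ^ 2
      + β ^ 2 / (4 * δ) * ∑ x : Λ, fld J Λ ξ x ^ 2) ≤ β * ∑ x : ↥Λ, φ x * fld J Λ ξ x := by
    rw [Finset.mul_sum, Finset.mul_sum, Finset.mul_sum, ← Finset.sum_add_distrib,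
      ← Finset.sum_neg_distrib]
    apply Finset.sum_le_sum
    intro x _
    rcases hδ with rfl | hδ
    · simp; positivity
    · have : δ * φ x ^ 2 + β ^ 2 / (4 * δ) * fld J Λ ξ x ^ 2 + β * (φ x * fld J Λ ξ x)
        = δ * (φ x + β * fld J Λ ξ x / (2 * δ)) ^ 2 := by
        field_simp
        ring
      nlinarith [mul_nonneg hδ0 (sq_nonneg (φ x + β * fld J Λ ξ x / (2 * δ)))]
  have h3 := mul_le_mul_of_nonneg_left h1 H.bnn
  nlinarith

end
end PM

namespace PM
section
variable {V : Type*} {J g : V → V → ℝ} {β M L : ℝ} {ρ : Measure ℝ} {ζ : V → ℝ}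

/-- Gaussian-type moment of `ρ` -/
noncomputable def mo (ρ : Measure ℝ) (a : ℝ) : ℝ≥0∞ :=
  ∫⁻ u, ENNReal.ofReal (Real.exp (a * u ^ 2)) ∂ρ

lemma Hyp.mo_ne_top (H : Hyp J g β M L ρ ζ) (a : ℝ) : mo ρ a ≠ ⊤ := (H.mom a).ne

lemma Hyp.mo_ne_zero (H : Hyp J g β M L ρ ζ) (a : ℝ) : mo ρ a ≠ 0 := by
  unfold mo
  rw [Ne, lintegral_eq_zero_iff (by fun_prop)]
  intro h
  apply H.pos
  have : ∀ᵐ u ∂ρ, False := by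
    filter_upwards [h] with u hu
    simp only [Pi.zero_apply, ENNReal.ofReal_eq_zero] at hu
    exact absurd hu (not_le.2 (Real.exp_pos _))
  simpa [ae_iff] using this

lemma exp_sum_sq (Λ : Finset V) (a : ℝ) (y : Λ → ℝ) :
    ENNReal.ofReal (Real.exp (a * ∑ x : Λ, y x ^ 2)) =
      ∏ x : Λ, ENNReal.ofReal (Real.exp (a * y x ^ 2)) := by
  rw [Finset.mul_sum, Real.exp_sum, ENNReal.ofReal_prod_of_nonneg]
  intro i _
  exact (Real.exp_pos _).le

lemma Hyp.pi_mo (H : Hyp J g β M L ρ ζ) (Λ : Finset V) (a : ℝ) :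
    ∫⁻ y : Λ → ℝ, ENNReal.ofReal (Real.exp (a * ∑ x : Λ, y x ^ 2)) ∂(Measure.pi fun _ : Λ => ρ)
      = mo ρ a ^ Λ.card := by
  have := H.isFin
  simp_rw [exp_sum_sq]
  exact pi_lint_prod ρ (fun u => ENNReal.ofReal (Real.exp (a * u ^ 2))) (by fun_prop) Λ

lemma Hyp.Z_ge (H : Hyp J g β M L ρ ζ) {δ : ℝ} (hδ : β = 0 ∨ 0 < δ) (hδ0 : 0 ≤ δ) (Λ : Finset V)
    (ξ : V → ℝ) :
    mo ρ (-(β * M / 2 + δ)) ^ Λ.card *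
      ENNReal.ofReal (Real.exp (-(β ^ 2 / (4 * δ) * ∑ x : Λ, fld J Λ ξ x ^ 2)))
      ≤ Zf J β ρ Λ ξ := by
  rw [Zf_eq, ← H.pi_mo, ← lintegral_mul_const _ (by fun_prop)]
  apply lintegral_mono
  intro y
  dsimp only
  rw [← ENNReal.ofReal_mul (Real.exp_pos _).le, ← Real.exp_add]
  apply ENNReal.ofReal_le_ofReal
  apply Real.exp_le_exp.2
  have := H.hamil_ge hδ hδ0 Λ ξ y
  linarith

lemma Hyp.Z_le (H : Hyp J g β M L ρ ζ) {δ : ℝ} (hδ : β = 0 ∨ 0 < δ) (hδ0 : 0 ≤ δ) (Λ : Finset V)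
    (ξ : V → ℝ) :
    Zf J β ρ Λ ξ ≤ mo ρ (β * M / 2 + δ) ^ Λ.card *
      ENNReal.ofReal (Real.exp (β ^ 2 / (4 * δ) * ∑ x : Λ, fld J Λ ξ x ^ 2)) := by
  rw [Zf_eq, ← H.pi_mo, ← lintegral_mul_const _ (by fun_prop)]
  apply lintegral_mono
  intro y
  dsimp only
  rw [← ENNReal.ofReal_mul (Real.exp_pos _).le, ← Real.exp_add]
  apply ENNReal.ofReal_le_ofReal
  apply Real.exp_le_exp.2
  have := H.hamil_le hδ hδ0 Λ ξ y
  linarith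

lemma Hyp.Z_ne_zero (H : Hyp J g β M L ρ ζ) (Λ : Finset V) (ξ : V → ℝ) : Zf J β ρ Λ ξ ≠ 0 := by
  have := H.Z_ge (Or.inr one_pos) zero_le_one Λ ξ
  refine (lt_of_lt_of_le ?_ this).ne'
  apply ENNReal.mul_pos
  · exact pow_ne_zero _ (H.mo_ne_zero _)
  · simp [Real.exp_pos]

lemma Hyp.Z_ne_top (H : Hyp J g β M L ρ ζ) (Λ : Finset V) (ξ : V → ℝ) : Zf J β ρ Λ ξ ≠ ⊤ := by
  have := H.Z_le (Or.inr one_pos) zero_le_one Λ ξ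
  refine ne_top_of_le_ne_top ?_ this
  apply ENNReal.mul_ne_top
  · exact ENNReal.pow_ne_top (H.mo_ne_top _)
  · simp

lemma Hyp.gibbs_prob (H : Hyp J g β M L ρ ζ) (Λ : Finset V) (ξ : V → ℝ) :
    IsProbabilityMeasure (gibbs J β ρ Λ ξ) := by
  constructor
  rw [← lintegral_one, lint_gibbs]
  simp_rw [mul_one]
  rw [← Zf_eq]
  exact ENNReal.inv_mul_cancel (H.Z_ne_zero Λ ξ) (H.Z_ne_top Λ ξ)

lemma Hyp.gam_prob (H : Hyp J g β M L ρ ζ) (Λ : Finset V) (ξ : V → ℝ) :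
    IsProbabilityMeasure (gam J β ρ Λ ξ) := by
  have := H.gibbs_prob Λ ξ
  exact Measure.isProbabilityMeasure_map measurable_updateFinset.aemeasurable

/-- density bound for finite-volume measures -/
lemma Hyp.dens (H : Hyp J g β M L ρ ζ) {δ : ℝ} (hδ : β = 0 ∨ 0 < δ) (hδ0 : 0 ≤ δ) (Λ : Finset V)
    (ξ : V → ℝ) (F : (Λ → ℝ) → ℝ≥0∞) (hF : Measurable F) :
    ∫⁻ y, F y ∂(gibbs J β ρ Λ ξ) ≤ ((mo ρ (-(β * M / 2 + δ)))⁻¹ ^ Λ.card *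
      ENNReal.ofReal (Real.exp (β ^ 2 / (2 * δ) * ∑ x : Λ, fld J Λ ξ x ^ 2))) *
      ∫⁻ y, ENNReal.ofReal (Real.exp ((β * M / 2 + δ) * ∑ x : Λ, y x ^ 2)) * F y
        ∂(Measure.pi fun _ : Λ => ρ) := by
  set S := ∑ x : Λ, fld J Λ ξ x ^ 2 with hS
  set I := mo ρ (-(β * M / 2 + δ)) with hI
  have hI0 : I ≠ 0 := H.mo_ne_zero _
  have hIt : I ≠ ⊤ := H.mo_ne_top _
  rw [lint_gibbs]
  have hZ : (Zf J β ρ Λ ξ)⁻¹ ≤ I⁻¹ ^ Λ.card * ENNReal.ofReal (Real.exp (β ^ 2 / (4 * δ) * S)) := by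
    have h1 := ENNReal.inv_le_inv.2 (H.Z_ge hδ hδ0 Λ ξ)
    refine h1.trans (le_of_eq ?_)
    rw [ENNReal.mul_inv (Or.inr ENNReal.ofReal_ne_top)
      (Or.inl (ENNReal.pow_ne_top hIt)), ENNReal.inv_pow,
      ← ENNReal.ofReal_inv_of_pos (Real.exp_pos _), ← Real.exp_neg, neg_neg]
  have hInt0 : ∫⁻ y, ENNReal.ofReal (Real.exp (hamil J β Λ ξ y)) * F y ∂(Measure.pi fun _ : Λ => ρ)
      ≤ ENNReal.ofReal (Real.exp (β ^ 2 / (4 * δ) * S)) *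
        ∫⁻ y, ENNReal.ofReal (Real.exp ((β * M / 2 + δ) * ∑ x : Λ, y x ^ 2)) * F y
        ∂(Measure.pi fun _ : Λ => ρ) := by
    rw [← lintegral_const_mul _ (by fun_prop)]
    apply lintegral_mono
    intro y
    dsimp only
    rw [← mul_assoc]
    gcongr
    rw [← ENNReal.ofReal_mul (Real.exp_pos _).le, ← Real.exp_add]
    apply ENNReal.ofReal_le_ofReal
    apply Real.exp_le_exp.2
    have := H.hamil_le hδ hδ0 Λ ξ y
    linarith
  refine (mul_le_mul' hZ hInt0).trans (le_of_eq ?_)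
  have he : ENNReal.ofReal (Real.exp (β ^ 2 / (2 * δ) * S)) =
      ENNReal.ofReal (Real.exp (β ^ 2 / (4 * δ) * S)) *
      ENNReal.ofReal (Real.exp (β ^ 2 / (4 * δ) * S)) := by
    rw [← ENNReal.ofReal_mul (Real.exp_pos _).le, ← Real.exp_add]
    congr 2
    have : β ^ 2 / (2 * δ) = β ^ 2 / (4 * δ) + β ^ 2 / (4 * δ) := by
      rcases eq_or_ne δ 0 with rfl | h
      · simp
      · field_simp; ring
    rw [this]; ring
  rw [he]
  ring

/-- moment bound for finite-volume measures -/
lemma Hyp.moment (H : Hyp J g β M L ρ ζ) (A : ℝ) {ε : ℝ} (hε : 0 < ε) :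
    ∃ C : ℝ, 1 ≤ C ∧ ∀ (Λ : Finset V) (ξ : V → ℝ),
      ∫⁻ y, ENNReal.ofReal (Real.exp (A * ∑ x : Λ, y x ^ 2)) ∂(gibbs J β ρ Λ ξ) ≤
        ENNReal.ofReal (C ^ Λ.card * Real.exp (ε * ∑ x : Λ, fld J Λ ξ x ^ 2)) := by
  obtain ⟨δ, hδ, hδε⟩ : ∃ δ : ℝ, 0 < δ ∧ β ^ 2 / (2 * δ) ≤ ε := by
    refine ⟨(β ^ 2 + 1) / (2 * ε), by positivity, ?_⟩
    have : (0:ℝ) < β ^ 2 + 1 := by positivity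
    rw [show 2 * ((β ^ 2 + 1) / (2 * ε)) = (β ^ 2 + 1) / ε by field_simp]
    rw [div_div_eq_mul_div, div_le_iff₀ this]
    nlinarith [sq_nonneg β]
  set I := (mo ρ (-(β * M / 2 + δ)))⁻¹ * mo ρ (A + (β * M / 2 + δ)) with hI
  have hIt : I ≠ ⊤ := ENNReal.mul_ne_top (ENNReal.inv_ne_top.2 (H.mo_ne_zero _)) (H.mo_ne_top _)
  refine ⟨max 1 I.toReal, le_max_left _ _, fun Λ ξ => ?_⟩
  refine (H.dens (Or.inr hδ) hδ.le Λ ξ _ (by fun_prop)).trans ?_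
  have h1 : ∫⁻ y : Λ → ℝ, ENNReal.ofReal (Real.exp ((β * M / 2 + δ) * ∑ x : Λ, y x ^ 2)) *
      ENNReal.ofReal (Real.exp (A * ∑ x : Λ, y x ^ 2)) ∂(Measure.pi fun _ : Λ => ρ)
      = mo ρ (A + (β * M / 2 + δ)) ^ Λ.card := by
    rw [← H.pi_mo]
    apply lintegral_congr
    intro y
    rw [← ENNReal.ofReal_mul (Real.exp_pos _).le, ← Real.exp_add]
    congr 2; ring
  rw [h1, mul_right_comm, ← mul_pow, ENNReal.ofReal_mul (by positivity)]
  apply mul_le_mul'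
  · rw [ENNReal.ofReal_pow (by positivity)]
    gcongr
    calc I = ENNReal.ofReal I.toReal := (ENNReal.ofReal_toReal hIt).symm
      _ ≤ _ := ENNReal.ofReal_le_ofReal (le_max_right _ _)
  · apply ENNReal.ofReal_le_ofReal
    apply Real.exp_le_exp.2
    apply mul_le_mul_of_nonneg_right hδε
    exact Finset.sum_nonneg fun _ _ => sq_nonneg _

end
end PM

namespace PM
section
variable {V : Type*} {J g : V → V → ℝ} {β M L : ℝ} {ρ : Measure ℝ} {ζ : V → ℝ}

/-- configurations with summable fields -/
def Good (J : V → V → ℝ) (ξ : V → ℝ) : Prop := ∀ x, Summable fun y => J x y * ξ y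

lemma gibbs_congr (Λ : Finset V) {ξ η : V → ℝ} (h : ∀ y, y ∉ Λ → ξ y = η y) :
    gibbs J β ρ Λ ξ = gibbs J β ρ Λ η := by
  have : hamil J β Λ ξ = hamil J β Λ η := by
    funext φ
    rw [hamil_fld, hamil_fld]
    simp_rw [fld_congr Λ h]
  unfold gibbs
  rw [this]

lemma gam_congr (Λ : Finset V) {ξ η : V → ℝ} (h : ∀ y, y ∉ Λ → ξ y = η y) :
    gam J β ρ Λ ξ = gam J β ρ Λ η := by
  unfold gam
  rw [gibbs_congr Λ h]
  congr 1
  funext y z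
  simp only [Function.updateFinset]
  split_ifs with hz
  · rfl
  · exact h z hz

lemma gam_update (Λ : Finset V) (ξ : V → ℝ) (y : Λ → ℝ) :
    gam J β ρ Λ (Function.updateFinset ξ Λ y) = gam J β ρ Λ ξ := by
  apply gam_congr
  intro z hz
  simp [Function.updateFinset, hz]

lemma Good.congr {ξ η : V → ℝ} (hξ : Good J ξ) (Λ : Finset V) (h : ∀ y, y ∉ Λ → ξ y = η y) :
    Good J η := by
  intro x
  refine (summable_congr_cofinite ?_).1 (hξ x)
  have : (Λ : Set V)ᶜ ∈ cofinite := Λ.finite_toSet.compl_mem_cofinite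
  filter_upwards [this] with y hy
  rw [h y (by simpa using hy)]

lemma Good.update {ξ : V → ℝ} (hξ : Good J ξ) (Λ : Finset V) (y : Λ → ℝ) :
    Good J (Function.updateFinset ξ Λ y) := by
  apply hξ.congr Λ
  intro z hz
  simp [Function.updateFinset, hz]

lemma fld_split {φ : V → ℝ} (hφ : Good J φ) {Δ Λ : Finset V} (h : Δ ⊆ Λ) (x : V) :
    fld J Δ φ x = ∑ y ∈ Λ \ Δ, J x y * φ y + fld J Λ φ x := by
  have e : ∀ Λ : Finset V, fld J Λ φ x = ∑' y, J x y * φ y - ∑ y ∈ Λ, J x y * φ y := by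
    intro Λ
    rw [← (hφ x).sum_add_tsum_compl (s := Λ)]
    simp only [add_sub_cancel_left]
    rfl
  rw [e, e, ← Finset.sum_sdiff h]
  ring

lemma hamil_sum (Λ : Finset V) (φ : V → ℝ) :
    hamil J β Λ φ (restrictTo Λ φ) = β * ((1 / 2) * ∑ x ∈ Λ, ∑ y ∈ Λ,
      (if x ≠ y then J x y * φ x * φ y else 0) + ∑ x ∈ Λ, φ x * fld J Λ φ x) := by
  rw [hamil_fld, ← Finset.sum_coe_sort Λ (fun x => φ x * fld J Λ φ x),
    ← Finset.sum_coe_sort Λ (fun x => ∑ y ∈ Λ, (if x ≠ y then J x y * φ x * φ y else 0))]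
  simp_rw [← Finset.sum_coe_sort Λ (fun y => (if _ ≠ y then J _ y * φ _ * φ y else 0))]
  rfl

/-- remainder -/
noncomputable def rem (J : V → V → ℝ) (β : ℝ) (Δ Λ : Finset V) (φ : V → ℝ) : ℝ :=
  β * ((1 / 2) * ∑ x ∈ Λ \ Δ, ∑ y ∈ Λ \ Δ,
      (if x ≠ y then J x y * φ x * φ y else 0) + ∑ x ∈ Λ \ Δ, φ x * fld J Λ φ x)

lemma rem_congr {Δ Λ : Finset V} (hs : Δ ⊆ Λ) {ξ η : V → ℝ} (h : ∀ y, y ∉ Δ → ξ y = η y) :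
    rem J β Δ Λ ξ = rem J β Δ Λ η := by
  unfold rem
  have h1 : ∀ x ∈ Λ \ Δ, ξ x = η x := fun x hx => h x (Finset.mem_sdiff.1 hx).2
  have h2 : ∀ x, fld J Λ ξ x = fld J Λ η x := fld_congr Λ (fun y hy => h y (fun hy' => hy (hs hy')))
  congr 2
  · congr 1
    apply Finset.sum_congr rfl; intro x hx
    apply Finset.sum_congr rfl; intro y hy
    rw [h1 x hx, h1 y hy]
  · apply Finset.sum_congr rfl; intro x hx
    rw [h1 x hx, h2]

lemma Hyp.hamil_split (H : Hyp J g β M L ρ ζ) {φ : V → ℝ} (hφ : Good J φ) {Δ Λ : Finset V} (h : Δ ⊆ Λ) :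
    hamil J β Λ φ (restrictTo Λ φ) = hamil J β Δ φ (restrictTo Δ φ) + rem J β Δ Λ φ := by
  rw [hamil_sum, hamil_sum, rem]
  simp_rw [fld_split hφ h]
  rw [← Finset.sum_sdiff h, ← Finset.sum_sdiff h]
  simp_rw [← Finset.sum_sdiff h (f := fun y => (if _ ≠ y then J _ y * φ _ * φ y else 0))]
  have e1 : ∀ x ∈ Δ, ∑ y ∈ Λ \ Δ, (if x ≠ y then J x y * φ x * φ y else 0)
      = φ x * ∑ y ∈ Λ \ Δ, J x y * φ y := by
    intro x hx
    rw [Finset.mul_sum]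
    apply Finset.sum_congr rfl; intro y hy
    have : x ≠ y := by rintro rfl; exact (Finset.mem_sdiff.1 hy).2 hx
    rw [if_pos this]; ring
  have e2 : ∑ x ∈ Λ \ Δ, ∑ y ∈ Δ, (if x ≠ y then J x y * φ x * φ y else 0)
      = ∑ x ∈ Δ, φ x * ∑ y ∈ Λ \ Δ, J x y * φ y := by
    rw [Finset.sum_comm]
    apply Finset.sum_congr rfl; intro x hx
    rw [← e1 x hx]
    apply Finset.sum_congr rfl; intro y hy
    rw [H.symm y x]
    by_cases hxy : x = y
    · simp [hxy]
    · rw [if_pos hxy, if_pos (Ne.symm hxy)]; ring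
  have e3 := Finset.sum_congr rfl e1
  simp only [Finset.sum_add_distrib, mul_add] at *
  rw [e3, e2]
  ring

lemma wt_split (H : Hyp J g β M L ρ ζ) {φ : V → ℝ} (hφ : Good J φ) {Δ Λ : Finset V} (h : Δ ⊆ Λ) :
    wt J β Λ φ = ENNReal.ofReal (Real.exp (rem J β Δ Λ φ)) * wt J β Δ φ := by
  unfold wt
  rw [H.hamil_split hφ h, Real.exp_add, mul_comm, ENNReal.ofReal_mul (Real.exp_pos _).le, mul_comm,
    mul_comm]

lemma Hyp.lmarg_eq (H : Hyp J g β M L ρ ζ) (Λ : Finset V) (ξ : V → ℝ) {F : (V → ℝ) → ℝ≥0∞} (hF : Measurable F) :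
    lmarginal (fun _ => ρ) Λ (fun φ => wt J β Λ φ * F φ) ξ =
      Zf J β ρ Λ ξ * ∫⁻ φ, F φ ∂(gam J β ρ Λ ξ) := by
  rw [lint_gam Λ ξ hF, ← mul_assoc, ENNReal.mul_inv_cancel (H.Z_ne_zero _ _) (H.Z_ne_top _ _), one_mul]

lemma Hyp.meas_gam [Countable V] (H : Hyp J g β M L ρ ζ) (Λ : Finset V) {F : (V → ℝ) → ℝ≥0∞} (hF : Measurable F) :
    Measurable fun ξ => ∫⁻ φ, F φ ∂(gam J β ρ Λ ξ) := by
  have := H.isFin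
  simp_rw [lint_gam Λ _ hF]
  apply Measurable.mul
  · apply Measurable.inv
    exact (meas_wt Λ).lmarginal _
  · exact ((meas_wt Λ).mul hF).lmarginal _

/-- consistency of the specification -/
lemma Hyp.consistency [Countable V] (H : Hyp J g β M L ρ ζ) {Δ Λ : Finset V} (h : Δ ⊆ Λ) {ξ : V → ℝ}
    (hξ : Good J ξ) {F : (V → ℝ) → ℝ≥0∞} (hF : Measurable F) :
    ∫⁻ φ, F φ ∂(gam J β ρ Λ ξ) =
      ∫⁻ η, (∫⁻ φ, F φ ∂(gam J β ρ Δ η)) ∂(gam J β ρ Λ ξ) := by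
  have := H.isFin
  rw [lint_gam Λ ξ hF, lint_gam Λ ξ (H.meas_gam Δ hF)]
  congr 1
  have key : ∀ K : (V → ℝ) → ℝ≥0∞, Measurable K → ∀ η, Good J η →
      lmarginal (fun _ => ρ) Δ (fun φ => wt J β Λ φ * K φ) η =
      ENNReal.ofReal (Real.exp (rem J β Δ Λ η)) * (Zf J β ρ Δ η * ∫⁻ φ, K φ ∂(gam J β ρ Δ η)) := by
    intro K hK η hη
    rw [← H.lmarg_eq Δ η hK]
    unfold lmarginal
    rw [← lintegral_const_mul' _ _ ENNReal.ofReal_ne_top]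
    apply lintegral_congr
    intro y
    dsimp only
    rw [wt_split H (hη.update Δ y) h, mul_assoc]
    congr 3
    apply rem_congr h
    intro z hz
    simp [Function.updateFinset, hz]
  have hu : Λ = (Λ \ Δ) ∪ Δ := by rw [Finset.sdiff_union_of_subset h]
  have hd : Disjoint (Λ \ Δ) Δ := Finset.sdiff_disjoint
  have split : ∀ K : (V → ℝ) → ℝ≥0∞, Measurable K →
      lmarginal (fun _ => ρ) Λ K ξ = lmarginal (fun _ => ρ) (Λ \ Δ) (lmarginal (fun _ => ρ) Δ K) ξ := by
    intro K hK
    conv_lhs => rw [hu]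
    rw [lmarginal_union _ _ hK hd]
  rw [split (fun φ => wt J β Λ φ * F φ) ((meas_wt Λ).mul hF),
    split (fun φ => wt J β Λ φ * ∫⁻ φ', F φ' ∂(gam J β ρ Δ φ)) ((meas_wt Λ).mul (H.meas_gam Δ hF))]
  conv_lhs => unfold lmarginal
  conv_rhs => unfold lmarginal
  apply lintegral_congr
  intro y
  have hg := hξ.update (Λ \ Δ) y
  have k1 := key F hF _ hg
  have k2 := key _ (H.meas_gam Δ hF) _ hg
  unfold lmarginal at k1 k2
  rw [k1, k2]
  congr 2
  rw [lint_gam' Δ _ (H.meas_gam Δ hF)]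
  simp_rw [gam_update]
  have := H.gibbs_prob Δ (Function.updateFinset ξ (Λ \ Δ) y)
  rw [lintegral_const, measure_univ, mul_one]

lemma Hyp.fld_mono (H : Hyp J g β M L ρ ζ) (Λ : Finset V) {η ξ : V → ℝ} (hη : Good J η) (hξ : Good J ξ)
    (h : ∀ y, y ∉ Λ → η y ≤ ξ y) (x : V) : fld J Λ η x ≤ fld J Λ ξ x := by
  unfold fld
  apply Summable.tsum_le_tsum
  · intro y
    exact mul_le_mul_of_nonneg_left (h y.1 y.2) (H.nn _ _)
  · exact (hη x).subtype _
  · exact (hξ x).subtype _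

lemma Hyp.hamil_super (H : Hyp J g β M L ρ ζ) (Λ : Finset V) {η ξ : V → ℝ}
    (h : ∀ x, fld J Λ η x ≤ fld J Λ ξ x) (φ ψ : Λ → ℝ) :
    hamil J β Λ η φ + hamil J β Λ ξ ψ ≤ hamil J β Λ ξ (φ ⊔ ψ) + hamil J β Λ η (φ ⊓ ψ) := by
  simp only [hamil_fld]
  rw [← mul_add, ← mul_add]
  apply mul_le_mul_of_nonneg_left _ H.bnn
  have h1 : ∑ x : ↥Λ, φ x * fld J Λ η x + ∑ x : ↥Λ, ψ x * fld J Λ ξ x ≤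
      ∑ x : ↥Λ, (φ ⊔ ψ) x * fld J Λ ξ x + ∑ x : ↥Λ, (φ ⊓ ψ) x * fld J Λ η x := by
    rw [← Finset.sum_add_distrib, ← Finset.sum_add_distrib]
    apply Finset.sum_le_sum
    intro x _
    have := h x
    simp only [Pi.sup_apply, Pi.inf_apply]
    rcases le_total (φ x) (ψ x) with hl | hl
    · rw [sup_eq_right.2 hl, inf_eq_left.2 hl]; linarith
    · rw [sup_eq_left.2 hl, inf_eq_right.2 hl]; nlinarith
  have h2 : (∑ x : ↥Λ, ∑ y : ↥Λ, (if x.1 ≠ y.1 then J x.1 y.1 * φ x * φ y else 0)) +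
      ∑ x : ↥Λ, ∑ y : ↥Λ, (if x.1 ≠ y.1 then J x.1 y.1 * ψ x * ψ y else 0) ≤
      (∑ x : ↥Λ, ∑ y : ↥Λ, (if x.1 ≠ y.1 then J x.1 y.1 * (φ ⊔ ψ) x * (φ ⊔ ψ) y else 0)) +
      ∑ x : ↥Λ, ∑ y : ↥Λ, (if x.1 ≠ y.1 then J x.1 y.1 * (φ ⊓ ψ) x * (φ ⊓ ψ) y else 0) := by
    simp_rw [← Finset.sum_add_distrib]
    apply Finset.sum_le_sum
    intro x _
    apply Finset.sum_le_sum
    intro y _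
    have hJ := H.nn x y
    split_ifs
    · simp only [Pi.sup_apply, Pi.inf_apply]
      simp_rw [mul_assoc]
      rw [← mul_add, ← mul_add]
      apply mul_le_mul_of_nonneg_left _ hJ
      rcases le_total (φ x) (ψ x) with hl | hl <;> rcases le_total (φ y) (ψ y) with hl' | hl' <;>
      simp only [sup_eq_right.2 hl, inf_eq_left.2 hl, sup_eq_left.2 hl, inf_eq_right.2 hl,
        sup_eq_right.2 hl', inf_eq_left.2 hl', sup_eq_left.2 hl', inf_eq_right.2 hl'] <;> nlinarith
    · simp
  linarith

/-- monotonicity in the boundary condition -/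
lemma Hyp.gam_mono (H : Hyp J g β M L ρ ζ) (Λ : Finset V) {η ξ : V → ℝ} (hη : Good J η) (hξ : Good J ξ)
    (h : ∀ y, y ∉ Λ → η y ≤ ξ y) {U : Set (V → ℝ)} (hU : IsUpperSet U) (mU : MeasurableSet U) :
    gam J β ρ Λ η U ≤ gam J β ρ Λ ξ U := by
  have := H.isFin
  have hf := H.fld_mono Λ hη hξ h
  have mi : Measurable (U.indicator (fun _ => (1 : ℝ≥0∞))) := measurable_const.indicator mU
  have eZ : ∀ ξ x : V → ℝ, lmarginal (fun _ => ρ) Λ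
      (fun φ => ENNReal.ofReal (Real.exp (hamil J β Λ ξ (restrictTo Λ φ)))) x = Zf J β ρ Λ ξ := by
    intro ξ x
    rw [Zf_eq]
    unfold lmarginal
    simp_rw [restr_update]
  have eU : ∀ ξ x : V → ℝ, lmarginal (fun _ => ρ) Λ
      (fun φ => ENNReal.ofReal (Real.exp (hamil J β Λ ξ (restrictTo Λ φ))) *
        U.indicator (fun _ => 1) (Function.updateFinset ξ Λ (restrictTo Λ φ))) x
        = Zf J β ρ Λ ξ * gam J β ρ Λ ξ U := by
    intro ξ x
    rw [← lintegral_indicator_one mU]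
    have := H.lmarg_eq Λ ξ mi
    rw [Pi.one_def, ← this]
    unfold lmarginal
    simp_rw [restr_update, wt_update]
  have mz : ∀ ξ : V → ℝ, Measurable
      (fun φ : V → ℝ => ENNReal.ofReal (Real.exp (hamil J β Λ ξ (restrictTo Λ φ)))) :=
    fun ξ => (meas_bw Λ ξ).comp (meas_restrictTo Λ)
  have mu : ∀ ξ : V → ℝ, Measurable
      (fun φ : V → ℝ => ENNReal.ofReal (Real.exp (hamil J β Λ ξ (restrictTo Λ φ))) *
        U.indicator (fun _ => 1) (Function.updateFinset ξ Λ (restrictTo Λ φ))) :=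
    fun ξ => (mz ξ).mul (mi.comp (measurable_updateFinset.comp (meas_restrictTo Λ)))
  have key := four_fun ρ Λ _ _ _ _ (mu η) (mz ξ) (mu ξ) (mz η) (by
    intro φ ψ
    by_cases hm : Function.updateFinset η Λ (restrictTo Λ φ) ∈ U
    · have hm' : Function.updateFinset ξ Λ (restrictTo Λ (φ ⊔ ψ)) ∈ U := by
        refine hU ?_ hm
        intro z
        simp only [Function.updateFinset]
        split_ifs with hz
        · simp [restrictTo]
        · exact h z hz
      rw [Set.indicator_of_mem hm, Set.indicator_of_mem hm', mul_one, mul_one,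
        ← ENNReal.ofReal_mul (Real.exp_pos _).le, ← ENNReal.ofReal_mul (Real.exp_pos _).le,
        ← Real.exp_add, ← Real.exp_add]
      apply ENNReal.ofReal_le_ofReal
      apply Real.exp_le_exp.2
      exact H.hamil_super Λ hf (restrictTo Λ φ) (restrictTo Λ ψ)
    · rw [Set.indicator_of_notMem hm]; simp) η η
  rw [eZ, eZ, eU, eU] at key
  have hz := H.Z_ne_zero Λ η
  have hz' := H.Z_ne_zero Λ ξ
  have ht := H.Z_ne_top Λ η
  have ht' := H.Z_ne_top Λ ξ
  have key2 : (Zf J β ρ Λ η * Zf J β ρ Λ ξ) * gam J β ρ Λ η U ≤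
      (Zf J β ρ Λ η * Zf J β ρ Λ ξ) * gam J β ρ Λ ξ U := by
    calc _ = Zf J β ρ Λ η * gam J β ρ Λ η U * Zf J β ρ Λ ξ := by ring
      _ ≤ _ := key
      _ = _ := by ring
  exact (ENNReal.mul_le_mul_iff_right (mul_ne_zero hz hz') (ENNReal.mul_ne_top ht ht')).1 key2

end
end PM

namespace PM
section
variable {V : Type*} {J g : V → V → ℝ} {β M L : ℝ} {ρ : Measure ℝ} {ζ : V → ℝ}

/-- finite approximations to the field -/
noncomputable def sfl (J : V → V → ℝ) (Δ : Finset V) (η : V → ℝ) (F : Finset V) (x : V) : ℝ :=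
  if Summable (fun y : {y : V // y ∉ Δ} => J x y.1 * η y.1) then ∑ y ∈ F \ Δ, J x y * η y else 0

lemma sfl_tendsto (Δ : Finset V) (η : V → ℝ) (x : V) :
    Tendsto (fun F => sfl J Δ η F x) atTop (nhds (fld J Δ η x)) := by
  unfold sfl
  split_ifs with h
  · unfold fld
    have h1 : HasSum (Set.indicator {y | y ∉ Δ} fun y => J x y * η y)
        (∑' y : {y : V // y ∉ Δ}, J x y.1 * η y.1) :=
      (hasSum_subtype_iff_indicator (s := {y | y ∉ Δ})).1 h.hasSum
    refine Tendsto.congr ?_ h1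
    intro F
    rw [Finset.sum_indicator_eq_sum_filter]
    apply Finset.sum_congr _ (fun _ _ => rfl)
    ext y; simp
  · unfold fld
    rw [tsum_eq_zero_of_not_summable h]
    exact tendsto_const_nhds

lemma Hyp.sfl_sq (H : Hyp J g β M L ρ ζ) (Δ : Finset V) (η : V → ℝ) (F : Finset V) (x : V) :
    sfl J Δ η F x ^ 2 ≤ M * ∑ y ∈ F, J x y * η y ^ 2 := by
  have h0 : 0 ≤ ∑ y ∈ F, J x y * η y ^ 2 :=
    Finset.sum_nonneg fun y _ => mul_nonneg (H.nn x y) (sq_nonneg _)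
  have hM := H.Mpos
  unfold sfl
  split_ifs with h
  · have h1 : (∑ y ∈ F \ Δ, J x y * η y) ^ 2 ≤
        (∑ y ∈ F \ Δ, J x y) * ∑ y ∈ F \ Δ, J x y * η y ^ 2 := by
      apply Finset.sum_sq_le_sum_mul_sum_of_sq_le_mul
      · intro i _; exact H.nn x i
      · intro i _; exact mul_nonneg (H.nn x i) (sq_nonneg _)
      · intro i _; exact le_of_eq (by ring)
    refine h1.trans ?_
    apply mul_le_mul (H.bJf x _)
    · apply Finset.sum_le_sum_of_subset_of_nonneg Finset.sdiff_subset
      intro y _ _; exact mul_nonneg (H.nn x y) (sq_nonneg _)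
    · exact Finset.sum_nonneg fun y _ => mul_nonneg (H.nn x y) (sq_nonneg _)
    · exact hM.le
  · have := mul_nonneg hM.le h0
    simpa using this

/-- pointwise bound for the exponential of squared fields -/
lemma Hyp.exp_fld_sup (H : Hyp J g β M L ρ ζ) (Δ : Finset V) (η : V → ℝ) {ε : ℝ} (hε : 0 ≤ ε) :
    ENNReal.ofReal (Real.exp (ε * ∑ x : Δ, fld J Δ η x ^ 2)) ≤
      ⨆ F : Finset V, ENNReal.ofReal (Real.exp (∑ y ∈ F, (ε * M * ∑ x ∈ Δ, J x y) * η y ^ 2)) := by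
  have ht : Tendsto (fun F => ENNReal.ofReal (Real.exp (ε * ∑ x : Δ, sfl J Δ η F x ^ 2))) atTop
      (nhds (ENNReal.ofReal (Real.exp (ε * ∑ x : Δ, fld J Δ η x ^ 2)))) := by
    apply ENNReal.tendsto_ofReal
    apply (Real.continuous_exp.tendsto _).comp
    apply Tendsto.const_mul
    apply tendsto_finsetSum
    intro x _
    exact (sfl_tendsto Δ η x).pow 2
  apply le_of_tendsto' ht
  intro F
  refine le_trans ?_ (le_iSup _ F)
  apply ENNReal.ofReal_le_ofReal
  apply Real.exp_le_exp.2
  calc ε * ∑ x : Δ, sfl J Δ η F x ^ 2 ≤ ε * ∑ x : Δ, M * ∑ y ∈ F, J x y * η y ^ 2 := by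
        apply mul_le_mul_of_nonneg_left _ hε
        exact Finset.sum_le_sum fun x _ => H.sfl_sq Δ η F x
    _ = _ := by
        rw [Finset.sum_coe_sort Δ (fun x => M * ∑ y ∈ F, J x y * η y ^ 2), ← Finset.mul_sum,
          Finset.sum_comm, ← mul_assoc, Finset.mul_sum]
        apply Finset.sum_congr rfl
        intro y _
        rw [← Finset.sum_mul]; ring

lemma convex_expsq {K : ℝ} (hK : 0 ≤ K) : ConvexOn ℝ Set.univ fun u : ℝ => Real.exp (K * u ^ 2) := by
  have h1 : ConvexOn ℝ Set.univ fun u : ℝ => K * u ^ 2 := by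
    have := (even_two.convexOn_pow (𝕜 := ℝ)).smul hK
    simpa using this
  have := ConvexOn.comp (g := Real.exp) (f := fun u : ℝ => K * u ^ 2) (s := Set.univ) (𝕜 := ℝ)
    (convexOn_exp.subset (Set.subset_univ _) ?_) h1 (Real.exp_monotone.monotoneOn _)
  · exact this
  · have := isPreconnected_univ.image _ (Continuous.continuousOn (by fun_prop : Continuous fun u : ℝ => K * u ^ 2))
    exact this.ordConnected.convex

/-- one-site Jensen bound -/
lemma Hyp.exp_fld_one (H : Hyp J g β M L ρ ζ) (x : V) (η : V → ℝ) {ε : ℝ} (hε : 0 ≤ ε) :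
    ENNReal.ofReal (Real.exp (ε * fld J {x} η x ^ 2)) ≤
      1 + ∑' y, ENNReal.ofReal (if y = x then 0 else J x y * g x y / M) *
        ENNReal.ofReal (Real.exp (ε * M ^ 2 * (η y / g x y) ^ 2)) := by
  have hM := H.Mpos
  have ht : Tendsto (fun F => ENNReal.ofReal (Real.exp (ε * sfl J {x} η F x ^ 2))) atTop
      (nhds (ENNReal.ofReal (Real.exp (ε * fld J {x} η x ^ 2)))) := by
    apply ENNReal.tendsto_ofReal
    apply (Real.continuous_exp.tendsto _).comp
    apply Tendsto.const_mul
    exact (sfl_tendsto {x} η x).pow 2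
  apply le_of_tendsto' ht
  intro F
  unfold sfl
  split_ifs with hs
  swap
  · simp
  set q : V → ℝ := fun y => J x y * g x y / M with hq
  have hg : ∀ y, 0 < g x y := fun y => lt_of_lt_of_le one_pos (H.g1 x y)
  have hq0 : ∀ y, 0 ≤ q y := fun y => div_nonneg (mul_nonneg (H.nn x y) (hg y).le) hM.le
  have hq1 : ∑ y ∈ F \ {x}, q y ≤ 1 := by
    rw [hq, ← Finset.sum_div, div_le_one hM]
    exact ((H.sm x).sum_le_tsum _ (fun y _ => mul_nonneg (H.nn x y) (hg y).le)).trans (H.bd x)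
  have hc := (convex_expsq (K := ε * M ^ 2) (by positivity)).map_add_sum_le
    (t := F \ {x}) (w := q) (p := fun y => η y / g x y) (v := 1 - ∑ y ∈ F \ {x}, q y) (q := 0)
    (fun y _ => hq0 y) (by ring) (fun _ _ => Set.mem_univ _) (by linarith) (Set.mem_univ _)
  have e : ε * (∑ y ∈ F \ {x}, J x y * η y) ^ 2 =
      ε * M ^ 2 * ((1 - ∑ y ∈ F \ {x}, q y) • (0 : ℝ) + ∑ i ∈ F \ {x}, q i • (η i / g x i)) ^ 2 := by
    have : ∑ i ∈ F \ {x}, q i • (η i / g x i) = (∑ y ∈ F \ {x}, J x y * η y) / M := by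
      rw [Finset.sum_div]
      apply Finset.sum_congr rfl
      intro y _
      have := (hg y).ne'
      simp only [hq, smul_eq_mul]
      field_simp
    rw [this]
    simp only [smul_eq_mul, mul_zero, zero_add]
    field_simp
  rw [e]
  have hle : (1 - ∑ y ∈ F \ {x}, q y) • Real.exp (ε * M ^ 2 * 0 ^ 2) +
      ∑ i ∈ F \ {x}, q i • Real.exp (ε * M ^ 2 * (η i / g x i) ^ 2) ≤
      1 + ∑ i ∈ F \ {x}, q i * Real.exp (ε * M ^ 2 * (η i / g x i) ^ 2) := by
    have : 0 ≤ ∑ y ∈ F \ {x}, q y := Finset.sum_nonneg fun y _ => hq0 y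
    simp only [smul_eq_mul]
    simp
    linarith
  refine (ENNReal.ofReal_le_ofReal (hc.trans hle)).trans ?_
  have hnn : ∀ i, 0 ≤ q i * Real.exp (ε * M ^ 2 * (η i / g x i) ^ 2) :=
    fun i => mul_nonneg (hq0 i) (Real.exp_pos _).le
  rw [ENNReal.ofReal_add zero_le_one (Finset.sum_nonneg fun i _ => hnn i), ENNReal.ofReal_one,
    ENNReal.ofReal_sum_of_nonneg fun i _ => hnn i]
  gcongr
  refine le_trans ?_ (ENNReal.sum_le_tsum (F \ {x}))
  apply Finset.sum_le_sum
  intro y hy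
  have : y ≠ x := by
    have := (Finset.mem_sdiff.1 hy).2
    simpa using this
  rw [if_neg this, ENNReal.ofReal_mul (hq0 y)]

end
end PM

namespace PM
section
variable {V : Type*} {J g : V → V → ℝ} {β M L : ℝ} {ρ : Measure ℝ} {ζ : V → ℝ}

/-- full DLR equation on `Δ` -/
def DLR (J : V → V → ℝ) (β : ℝ) (ρ : Measure ℝ) (Δ : Finset V) (μ : Measure (V → ℝ)) : Prop :=
  ∀ F : (V → ℝ) → ℝ≥0∞, Measurable F → ∫⁻ φ, F φ ∂μ = ∫⁻ η, (∫⁻ φ, F φ ∂(gam J β ρ Δ η)) ∂μ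

/-- exponential moment at a site -/
noncomputable def em (μ : Measure (V → ℝ)) (A : ℝ) (y : V) : ℝ≥0∞ :=
  ∫⁻ φ, ENNReal.ofReal (Real.exp (A * φ y ^ 2)) ∂μ

lemma Hyp.good_le (H : Hyp J g β M L ρ ζ) {t : ℝ} {ξ : V → ℝ} (h : ∀ x, |ξ x| ≤ t * ζ x) : Good J ξ := by
  intro x
  have h1 : Summable fun y => |t| * (L * ζ x) * (J x y * g x y) := (H.sm x).mul_left _
  refine (summable_congr_cofinite (f := fun y => if y = x then 0 else J x y * ξ y) ?_).1 ?_
  · have : ({x} : Set V)ᶜ ∈ cofinite := (Set.finite_singleton x).compl_mem_cofinite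
    filter_upwards [this] with y hy
    rw [if_neg (by simpa using hy)]
  · apply Summable.of_norm_bounded h1
    intro y
    have hg : 0 < g x y := lt_of_lt_of_le one_pos (H.g1 x y)
    have hnn := H.nn x y
    have hz := H.zpos x
    have hL := H.Lpos
    split_ifs with hy
    · simp only [norm_zero]; positivity
    · rw [Real.norm_eq_abs, abs_mul, abs_of_nonneg hnn]
      rcases eq_or_ne (J x y) 0 with h0 | h0
      · rw [h0]; simp
      · have h2 := H.cmp x y (Ne.symm hy) h0
        calc J x y * |ξ y| ≤ J x y * (|t| * ζ y) := by
              gcongr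
              exact (h y).trans (mul_le_mul_of_nonneg_right (le_abs_self t) (H.zpos y).le)
          _ ≤ J x y * (|t| * (L * g x y * ζ x)) := by gcongr
          _ = _ := by ring

lemma Hyp.step [Countable V] (H : Hyp J g β M L ρ ζ) {A κ : ℝ} (hA : 0 < A) (hκ : 0 < κ) :
    ∃ C : ℝ, 1 ≤ C ∧ ∀ μ : Measure (V → ℝ), IsProbabilityMeasure μ → ∀ x, DLR J β ρ {x} μ →
      ∀ s τ : ℝ, 0 ≤ s → 0 ≤ τ → (∀ y, em μ A y ≤ ENNReal.ofReal (Real.exp (s + τ * ζ y ^ 2))) →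
      em μ A x ≤ ENNReal.ofReal (C * Real.exp (s / 2 + κ * τ * ζ x ^ 2)) := by
  have hM := H.Mpos
  have hL := H.Lpos
  obtain ⟨θ, hθ, hθ2, hθκ⟩ : ∃ θ : ℝ, 0 < θ ∧ θ ≤ 1 / 2 ∧ θ * L ^ 2 ≤ κ := by
    refine ⟨min (1/2) (κ / L ^ 2), by positivity, min_le_left _ _, ?_⟩
    rw [← le_div_iff₀ (by positivity)]
    exact min_le_right _ _
  obtain ⟨C, hC1, hC⟩ := H.moment A (ε := θ * A / M ^ 2) (by positivity)
  refine ⟨3 * C, by linarith, fun μ hμ x hx s τ hs hτ hm => ?_⟩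
  set q : V → ℝ := fun y => if y = x then 0 else J x y * g x y / M with hq
  have hg : ∀ y, 0 < g x y := fun y => lt_of_lt_of_le one_pos (H.g1 x y)
  have hq0 : ∀ y, 0 ≤ q y := by
    intro y
    simp only [hq]
    split_ifs
    · exact le_rfl
    · exact div_nonneg (mul_nonneg (H.nn x y) (hg y).le) hM.le
  have hq1 : ∑' y, ENNReal.ofReal (q y) ≤ 1 := by
    have hs1 : Summable fun y => J x y * g x y / M := (H.sm x).div_const M
    have hle : ∀ y, q y ≤ J x y * g x y / M := by
      intro y
      simp only [hq]
      split_ifs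
      · exact div_nonneg (mul_nonneg (H.nn x y) (hg y).le) hM.le
      · exact le_rfl
    have hs2 : Summable q := Summable.of_nonneg_of_le hq0 hle hs1
    rw [← ENNReal.ofReal_tsum_of_nonneg hq0 hs2, ENNReal.ofReal_le_one]
    refine (hs2.tsum_le_tsum hle hs1).trans ?_
    rw [tsum_div_const, div_le_one hM]
    exact H.bd x
  have meas : ∀ (a : ℝ) (y : V), Measurable fun φ : V → ℝ => ENNReal.ofReal (Real.exp (a * φ y ^ 2)) := by
    intro a y; fun_prop
  set E := Real.exp (s / 2 + κ * τ * ζ x ^ 2) with hE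
  have hE1 : 1 ≤ E := Real.one_le_exp (by positivity)
  -- one-site bound
  have h1 : ∀ η, ∫⁻ φ, ENNReal.ofReal (Real.exp (A * φ x ^ 2)) ∂(gam J β ρ {x} η) ≤
      ENNReal.ofReal C * (1 + ∑' y, ENNReal.ofReal (q y) *
        ENNReal.ofReal (Real.exp (θ * A * (η y / g x y) ^ 2))) := by
    intro η
    rw [lint_gam' _ _ (meas A x)]
    have h2 := hC {x} η
    have e1 : ∀ y : ({x} : Finset V) → ℝ, Function.updateFinset η {x} y x = y ⟨x, by simp⟩ := by
      intro y; simp [Function.updateFinset]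
    have e2 : ∀ f : ({x} : Finset V) → ℝ, ∑ z : ({x} : Finset V), f z = f ⟨x, by simp⟩ := by
      intro f
      rw [Fintype.sum_eq_single ⟨x, by simp⟩]
      intro z hz
      exact absurd (Subtype.ext (Finset.mem_singleton.1 z.2)) hz
    simp_rw [e1]
    simp_rw [e2] at h2
    refine h2.trans ?_
    rw [Finset.card_singleton, pow_one, ENNReal.ofReal_mul (by linarith)]
    gcongr
    have h3 := H.exp_fld_one x η (ε := θ * A / M ^ 2) (by positivity)
    rw [show θ * A / M ^ 2 * M ^ 2 = θ * A by field_simp] at h3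
    exact h3
  have h4 : ∀ y, ENNReal.ofReal (q y) * ∫⁻ η, ENNReal.ofReal (Real.exp (θ * A * (η y / g x y) ^ 2)) ∂μ ≤
      ENNReal.ofReal (q y) * ENNReal.ofReal (2 * E) := by
    intro y
    rcases eq_or_ne (q y) 0 with h0 | h0
    · simp [h0]
    gcongr
    have hyx : y ≠ x := by rintro rfl; simp [hq] at h0
    have hJ : J x y ≠ 0 := by
      intro h; simp [hq, h] at h0
    have hcmp := H.cmp x y hyx.symm hJ
    set p := θ / g x y ^ 2 with hp
    have hp0 : 0 < p := by have := hg y; positivity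
    have hp2 : p ≤ 1 / 2 := by
      refine le_trans ?_ hθ2
      apply div_le_self hθ.le
      have := H.g1 x y
      nlinarith
    set n := s + τ * ζ y ^ 2 with hn
    have hpn : p * n ≤ s / 2 + κ * τ * ζ x ^ 2 := by
      have h5 : ζ y ^ 2 ≤ L ^ 2 * g x y ^ 2 * ζ x ^ 2 := by
        calc ζ y ^ 2 ≤ (L * g x y * ζ x) ^ 2 := pow_le_pow_left₀ (H.zpos y).le hcmp 2
          _ = _ := by ring
      have h6 : p * ζ y ^ 2 ≤ κ * ζ x ^ 2 := by
        calc p * ζ y ^ 2 ≤ p * (L ^ 2 * g x y ^ 2 * ζ x ^ 2) := by gcongr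
          _ = θ * L ^ 2 * ζ x ^ 2 := by
            have := (hg y).ne'
            rw [hp]; field_simp
          _ ≤ _ := by gcongr
      have h7 := mul_le_mul_of_nonneg_left h6 hτ
      have h8 := mul_le_mul_of_nonneg_right hp2 hs
      rw [hn]; nlinarith
    calc ∫⁻ η, ENNReal.ofReal (Real.exp (θ * A * (η y / g x y) ^ 2)) ∂μ
        ≤ ∫⁻ η, ENNReal.ofReal E * (1 + ENNReal.ofReal (Real.exp (-n)) * ENNReal.ofReal (Real.exp (A * η y ^ 2))) ∂μ := by
          apply lintegral_mono
          intro η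
          dsimp only
          rw [← ENNReal.ofReal_mul (Real.exp_pos _).le, ← ENNReal.ofReal_one,
            ← ENNReal.ofReal_add zero_le_one (by positivity), ← ENNReal.ofReal_mul (by positivity), ← Real.exp_add]
          apply ENNReal.ofReal_le_ofReal
          have e : θ * A * (η y / g x y) ^ 2 = p * n + p * (-n + A * η y ^ 2) := by
            have := (hg y).ne'
            rw [hp]; field_simp; ring
          rw [e, Real.exp_add]
          apply mul_le_mul (Real.exp_le_exp.2 hpn) _ (Real.exp_pos _).le (by positivity)
          set t := -n + A * η y ^ 2
          rcases le_total t 0 with ht | ht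
          · have : Real.exp (p * t) ≤ 1 := Real.exp_le_one_iff.2 (mul_nonpos_of_nonneg_of_nonpos hp0.le ht)
            linarith [Real.exp_pos t]
          · have : Real.exp (p * t) ≤ Real.exp t := Real.exp_le_exp.2 (by nlinarith)
            linarith
      _ = ENNReal.ofReal E * (1 + ENNReal.ofReal (Real.exp (-n)) * em μ A y) := by
          rw [lintegral_const_mul _ (by fun_prop), lintegral_add_left measurable_const,
            lintegral_const_mul _ (by fun_prop), lintegral_const, measure_univ, mul_one]
          rfl
      _ ≤ ENNReal.ofReal E * (1 + ENNReal.ofReal (Real.exp (-n)) * ENNReal.ofReal (Real.exp n)) := by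
          gcongr
          exact hm y
      _ = ENNReal.ofReal (2 * E) := by
          rw [← ENNReal.ofReal_mul (Real.exp_pos _).le, ← Real.exp_add, neg_add_cancel, Real.exp_zero,
            ENNReal.ofReal_one, mul_comm 2 E, ENNReal.ofReal_mul (by positivity)]
          norm_num
  calc em μ A x = ∫⁻ η, (∫⁻ φ, ENNReal.ofReal (Real.exp (A * φ x ^ 2)) ∂(gam J β ρ {x} η)) ∂μ := hx _ (meas A x)
    _ ≤ ∫⁻ η, ENNReal.ofReal C * (1 + ∑' y, ENNReal.ofReal (q y) *
        ENNReal.ofReal (Real.exp (θ * A * (η y / g x y) ^ 2))) ∂μ := lintegral_mono h1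
    _ = ENNReal.ofReal C * (1 + ∑' y, ENNReal.ofReal (q y) *
        ∫⁻ η, ENNReal.ofReal (Real.exp (θ * A * (η y / g x y) ^ 2)) ∂μ) := by
        have hmm : ∀ y, Measurable fun η : V → ℝ => ENNReal.ofReal (q y) *
            ENNReal.ofReal (Real.exp (θ * A * (η y / g x y) ^ 2)) := by
          intro y; fun_prop
        have hmt : Measurable fun η : V → ℝ => ∑' y, ENNReal.ofReal (q y) *
            ENNReal.ofReal (Real.exp (θ * A * (η y / g x y) ^ 2)) := Measurable.tsum hmm
        rw [lintegral_const_mul _ (by fun_prop),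
          lintegral_add_left measurable_const,
          lintegral_const, measure_univ, mul_one, lintegral_tsum (fun y => (hmm y).aemeasurable)]
        congr 3
        funext y
        rw [lintegral_const_mul _ (by fun_prop)]
    _ ≤ ENNReal.ofReal C * (1 + ∑' y, ENNReal.ofReal (q y) * ENNReal.ofReal (2 * E)) := by
        exact mul_le_mul_right (add_le_add_right (ENNReal.tsum_le_tsum h4) _) _
    _ ≤ ENNReal.ofReal C * (1 + ENNReal.ofReal (2 * E)) := by
        rw [ENNReal.tsum_mul_right]
        gcongr
        exact mul_le_of_le_one_left zero_le hq1
    _ ≤ _ := by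
        rw [← ENNReal.ofReal_one, ← ENNReal.ofReal_add zero_le_one (by positivity),
          ← ENNReal.ofReal_mul (by linarith)]
        apply ENNReal.ofReal_le_ofReal
        nlinarith

lemma le_exp_of_iter {m : ℝ≥0∞} {a b : ℝ}
    (h : ∀ n : ℕ, m ≤ ENNReal.ofReal (Real.exp (a + b / 2 ^ n))) : m ≤ ENNReal.ofReal (Real.exp a) := by
  have ht : Tendsto (fun n : ℕ => ENNReal.ofReal (Real.exp (a + b / 2 ^ n))) atTop
      (nhds (ENNReal.ofReal (Real.exp (a + 0)))) := by
    apply ENNReal.tendsto_ofReal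
    apply (Real.continuous_exp.tendsto _).comp
    apply tendsto_const_nhds.add
    have h2 := (tendsto_pow_atTop_nhds_zero_of_lt_one (r := (1/2 : ℝ)) (by norm_num) (by norm_num)).const_mul b
    rw [mul_zero] at h2
    refine h2.congr fun n => ?_
    rw [one_div, inv_pow]; rfl
  rw [add_zero] at ht
  exact ge_of_tendsto' ht h

/-- the uniform moment bounds -/
lemma Hyp.bounds [Countable V] (H : Hyp J g β M L ρ ζ) {A : ℝ} (hA : 1 ≤ A) :
    ∃ D : ℝ, 0 ≤ D ∧
      (∀ (Λ : Finset V) (ξ : V → ℝ), (∀ x, |ξ x| ≤ ζ x) → ∀ x ∈ Λ,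
        em (gam J β ρ Λ ξ) A x ≤ ENNReal.ofReal (Real.exp (D + ζ x ^ 2))) ∧
      (∀ μ : Measure (V → ℝ), IsProbabilityMeasure μ → (∀ x, DLR J β ρ {x} μ) →
        ∀ s : ℝ, 0 ≤ s → (∀ y, em μ A y ≤ ENNReal.ofReal (Real.exp (s + ζ y ^ 2))) →
        ∀ y, em μ A y ≤ ENNReal.ofReal (Real.exp D)) := by
  have hA0 : 0 < A := by linarith
  set κ : ℝ := min (1 / 2) (1 / A) with hκ
  have hκ0 : 0 < κ := by positivity
  have hκ2 : κ ≤ 1 / 2 := min_le_left _ _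
  have hκA : κ * A ≤ 1 := by
    rw [← le_div_iff₀ hA0]; exact min_le_right _ _
  obtain ⟨C, hC1, hC⟩ := H.step hA0 hκ0
  set c := Real.log C with hc
  have hc0 : 0 ≤ c := Real.log_nonneg hC1
  have hCe : ∀ u, C * Real.exp u = Real.exp (c + u) := by
    intro u; rw [Real.exp_add, hc, Real.exp_log (by linarith)]
  simp_rw [hCe] at hC
  refine ⟨2 * c, by positivity, ?_, ?_⟩
  · intro Λ ξ hξ
    have hgood : Good J ξ := H.good_le (t := 1) (by simpa using hξ)
    have hprob := H.gam_prob Λ ξ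
    have hdlr : ∀ x ∈ Λ, DLR J β ρ {x} (gam J β ρ Λ ξ) := by
      intro x hx F hF
      exact H.consistency (Finset.singleton_subset_iff.2 hx) hgood hF
    have hout : ∀ y, y ∉ Λ → em (gam J β ρ Λ ξ) A y ≤ ENNReal.ofReal (Real.exp (A * ζ y ^ 2)) := by
      intro y hy
      unfold em
      rw [lint_gam' _ _ (by fun_prop)]
      have hgp := H.gibbs_prob Λ ξ
      simp only [Function.updateFinset, hy, dite_false, lintegral_const, measure_univ, mul_one]
      apply ENNReal.ofReal_le_ofReal
      apply Real.exp_le_exp.2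
      have := sq_le_sq' (by linarith [neg_abs_le (ξ y), hξ y]) ((le_abs_self _).trans (hξ y))
      gcongr
    have hfin : ∀ y ∈ Λ, em (gam J β ρ Λ ξ) A y ≠ ⊤ := by
      intro y hy
      obtain ⟨C', -, hC'⟩ := H.moment A (ε := 1) one_pos
      refine ne_top_of_le_ne_top (ENNReal.ofReal_ne_top) (le_trans ?_ (hC' Λ ξ))
      unfold em
      rw [lint_gam' _ _ (by fun_prop)]
      apply lintegral_mono
      intro z
      apply ENNReal.ofReal_le_ofReal
      apply Real.exp_le_exp.2
      simp only [Function.updateFinset, hy, dite_true]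
      gcongr
      exact Finset.single_le_sum (f := fun i : Λ => z i ^ 2) (fun i _ => sq_nonneg _) (Finset.mem_univ _)
    obtain ⟨s0, hs0, hs0'⟩ : ∃ s0 : ℝ, 0 ≤ s0 ∧ ∀ y ∈ Λ, em (gam J β ρ Λ ξ) A y ≤ ENNReal.ofReal (Real.exp s0) := by
      refine ⟨∑ y ∈ Λ, (em (gam J β ρ Λ ξ) A y).toReal, Finset.sum_nonneg fun _ _ => ENNReal.toReal_nonneg, ?_⟩
      intro y hy
      rw [ENNReal.le_ofReal_iff_toReal_le (hfin y hy) (Real.exp_pos _).le]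
      refine le_trans ?_ ((le_add_of_nonneg_right zero_le_one).trans (Real.add_one_le_exp _))
      exact Finset.single_le_sum (f := fun y => (em (gam J β ρ Λ ξ) A y).toReal)
        (fun i _ => ENNReal.toReal_nonneg) hy
    have hiter : ∀ n : ℕ, ∀ y, em (gam J β ρ Λ ξ) A y ≤
        ENNReal.ofReal (Real.exp ((2 * c + s0 / 2 ^ n) + A * ζ y ^ 2)) := by
      intro n
      induction n with
      | zero =>
        intro y
        by_cases hy : y ∈ Λ
        · refine (hs0' y hy).trans (ENNReal.ofReal_le_ofReal (Real.exp_le_exp.2 ?_))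
          have : 0 ≤ A * ζ y ^ 2 := by positivity
          simp; linarith
        · refine (hout y hy).trans (ENNReal.ofReal_le_ofReal (Real.exp_le_exp.2 ?_))
          simp; linarith
      | succ n ih =>
        intro y
        by_cases hy : y ∈ Λ
        · have := hC _ hprob y (hdlr y hy) _ A (by positivity) hA0.le ih
          refine this.trans (ENNReal.ofReal_le_ofReal (Real.exp_le_exp.2 ?_))
          have h1 : κ * A * ζ y ^ 2 ≤ A * ζ y ^ 2 := by
            apply mul_le_mul_of_nonneg_right _ (sq_nonneg _); linarith
          have h2 : s0 / 2 ^ (n + 1) = s0 / 2 ^ n / 2 := by rw [pow_succ]; field_simp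
          rw [h2]; linarith
        · refine (hout y hy).trans (ENNReal.ofReal_le_ofReal (Real.exp_le_exp.2 ?_))
          have : 0 ≤ s0 / 2 ^ (n + 1) := by positivity
          linarith
    have hlim : ∀ y, em (gam J β ρ Λ ξ) A y ≤ ENNReal.ofReal (Real.exp (2 * c + A * ζ y ^ 2)) := by
      intro y
      apply le_exp_of_iter (b := s0)
      intro n
      refine (hiter n y).trans (le_of_eq ?_)
      congr 2; ring
    intro x hx
    have := hC _ hprob x (hdlr x hx) _ A (by positivity) hA0.le hlim
    refine this.trans (ENNReal.ofReal_le_ofReal (Real.exp_le_exp.2 ?_))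
    have h1 : κ * A * ζ x ^ 2 ≤ 1 * ζ x ^ 2 := mul_le_mul_of_nonneg_right hκA (sq_nonneg _)
    linarith
  · intro μ hμ hdlr s hs hm
    have hiter : ∀ n : ℕ, ∀ y, em μ A y ≤
        ENNReal.ofReal (Real.exp ((2 * c + s / 2 ^ n) + (1 / 2 ^ n) * ζ y ^ 2)) := by
      intro n
      induction n with
      | zero =>
        intro y
        refine (hm y).trans (ENNReal.ofReal_le_ofReal (Real.exp_le_exp.2 ?_))
        simp; linarith
      | succ n ih =>
        intro y
        have := hC _ hμ y (hdlr y) _ (1 / 2 ^ n) (by positivity) (by positivity) ih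
        refine this.trans (ENNReal.ofReal_le_ofReal (Real.exp_le_exp.2 ?_))
        have h1 : κ * (1 / 2 ^ n) * ζ y ^ 2 ≤ (1 / 2) * (1 / 2 ^ n) * ζ y ^ 2 := by gcongr
        have h2 : s / 2 ^ (n + 1) = s / 2 ^ n / 2 := by rw [pow_succ]; field_simp
        have h3 : (1 : ℝ) / 2 ^ (n + 1) = (1 / 2) * (1 / 2 ^ n) := by rw [pow_succ]; field_simp
        rw [h2, h3]; linarith
    intro y
    apply le_exp_of_iter (b := s + ζ y ^ 2)
    intro n
    refine (hiter n y).trans (le_of_eq ?_)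
    congr 2; ring

end
end PM

namespace PM
section
variable {V : Type*} {J g : V → V → ℝ} {β M L : ℝ} {ρ : Measure ℝ} {ζ : V → ℝ}

/-- transfer weight from `j` to `i` -/
noncomputable def mv (u : V → ℝ) (i j : V) (s : ℝ) (y : V) : ℝ :=
  u y + s * (if y = i then 1 else 0) - s * (if y = j then 1 else 0)

lemma mv_sum (u : V → ℝ) {i j : V} (s : ℝ) (F : Finset V) (hi : i ∈ F) (hj : j ∈ F) (w : V → ℝ) :
    ∑ y ∈ F, mv u i j s y * w y = ∑ y ∈ F, u y * w y + s * (w i - w j) := by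
  unfold mv
  simp only [add_mul, sub_mul, Finset.sum_add_distrib, Finset.sum_sub_distrib]
  simp [hi, hj]
  ring

lemma mv_exists (u : V → ℝ) {W : ℝ} {i j : V} (hij : i ≠ j) (hu0 : ∀ y, 0 ≤ u y) (huW : ∀ y, u y ≤ W)
    (hi : 0 < u i ∧ u i < W) (hj : 0 < u j ∧ u j < W) :
    ∃ s : ℝ, 0 < s ∧ (∀ y, 0 ≤ mv u i j s y) ∧ (∀ y, mv u i j s y ≤ W) ∧
      (∀ y, 0 < mv u i j s y ∧ mv u i j s y < W → 0 < u y ∧ u y < W) ∧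
      (¬ (0 < mv u i j s i ∧ mv u i j s i < W) ∨ ¬ (0 < mv u i j s j ∧ mv u i j s j < W)) := by
  refine ⟨min (W - u i) (u j), lt_min (by linarith) hj.1, ?_, ?_, ?_, ?_⟩
  all_goals
    set s := min (W - u i) (u j) with hs
    have s1 : s ≤ W - u i := min_le_left _ _
    have s2 : s ≤ u j := min_le_right _ _
    have s0 : 0 < s := lt_min (by linarith) hj.1
  · intro y
    unfold mv
    have := hu0 y
    split_ifs with h1 h2 h2
    · linarith
    · linarith
    · subst h2; linarith
    · linarith
  · intro y
    unfold mv
    have := huW y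
    split_ifs with h1 h2 h2
    · linarith
    · subst h1; linarith
    · linarith
    · linarith
  · intro y
    by_cases h1 : y = i
    · subst h1; intro _; exact hi
    · by_cases h2 : y = j
      · subst h2; intro _; exact hj
      · simp [mv, h1, h2]
  · rcases le_total (W - u i) (u j) with h | h
    · left
      rw [min_eq_left h] at hs
      simp [mv, hij]
      intro _; linarith
    · right
      rw [min_eq_right h] at hs
      simp [mv, hij.symm]
      intro h'; linarith

lemma round_base (ν : Measure (V → ℝ)) {W : ℝ} (hW : 0 < W) (m : ℕ) (B : ℝ≥0∞)
    (hB : ∀ Δ : Finset V, Δ.card ≤ m → ∫⁻ φ, ENNReal.ofReal (Real.exp (W * ∑ y ∈ Δ, φ y ^ 2)) ∂ν ≤ B)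
    (F : Finset V) (u : V → ℝ) (hf : ∀ i ∈ F, ∀ j ∈ F, (0 < u i ∧ u i < W) → (0 < u j ∧ u j < W) → i = j)
    (h0 : ∀ y, 0 ≤ u y) (hWu : ∀ y, u y ≤ W) (hsum : ∑ y ∈ F, u y ≤ W * m) :
    ∫⁻ φ, ENNReal.ofReal (Real.exp (∑ y ∈ F, u y * φ y ^ 2)) ∂ν ≤ B := by
  refine le_trans ?_ (hB (F.filter fun y => 0 < u y) ?_)
  · apply lintegral_mono
    intro φ
    apply ENNReal.ofReal_le_ofReal
    apply Real.exp_le_exp.2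
    rw [Finset.mul_sum, Finset.sum_filter]
    apply Finset.sum_le_sum
    intro y _
    split_ifs with h
    · exact mul_le_mul_of_nonneg_right (hWu y) (sq_nonneg _)
    · rw [le_antisymm (not_lt.1 h) (h0 y)]; simp
  · rcases (F.filter fun y => 0 < u y).eq_empty_or_nonempty with he | hne
    · rw [he]; simp
    obtain ⟨z, hz, hz'⟩ : ∃ z ∈ F.filter (fun y => 0 < u y), ∀ y ∈ F.filter (fun y => 0 < u y), y ≠ z → u y = W := by
      by_cases hex : ∃ z ∈ F, 0 < u z ∧ u z < W
      · obtain ⟨z, hz, hz1⟩ := hex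
        refine ⟨z, by simp [hz, hz1.1], fun y hy hyz => ?_⟩
        rw [Finset.mem_filter] at hy
        by_contra hne
        exact hyz (hf y hy.1 z hz ⟨hy.2, lt_of_le_of_ne (hWu y) hne⟩ hz1)
      · push Not at hex
        obtain ⟨z, hz⟩ := hne
        refine ⟨z, hz, fun y hy _ => ?_⟩
        rw [Finset.mem_filter] at hy
        exact le_antisymm (hWu y) (hex y hy.1 hy.2)
    have h1 : ∑ y ∈ F.filter (fun y => 0 < u y), u y ≤ ∑ y ∈ F, u y :=
      Finset.sum_le_sum_of_subset_of_nonneg (Finset.filter_subset _ _) (fun y _ _ => h0 y)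
    rw [← Finset.add_sum_erase _ _ hz, Finset.sum_congr rfl
      (fun y hy => hz' y (Finset.mem_of_mem_erase hy) (Finset.ne_of_mem_erase hy)),
      Finset.sum_const, nsmul_eq_mul] at h1
    have hzu : 0 < u z := (Finset.mem_filter.1 hz).2
    have h2 : (((F.filter fun y => 0 < u y).erase z).card : ℝ) < m := by
      by_contra hcon
      push Not at hcon
      nlinarith
    have h3 : ((F.filter fun y => 0 < u y).erase z).card < m := by exact_mod_cast h2
    have := Finset.card_erase_add_one hz
    omega

/-- rounding lemma -/
lemma rounding (ν : Measure (V → ℝ)) {W : ℝ} (hW : 0 < W) (m : ℕ) (B : ℝ≥0∞)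
    (hB : ∀ Δ : Finset V, Δ.card ≤ m → ∫⁻ φ, ENNReal.ofReal (Real.exp (W * ∑ y ∈ Δ, φ y ^ 2)) ∂ν ≤ B)
    (F : Finset V) : ∀ (n : ℕ) (u : V → ℝ), (F.filter fun y => 0 < u y ∧ u y < W).card ≤ n →
      (∀ y, 0 ≤ u y) → (∀ y, u y ≤ W) → ∑ y ∈ F, u y ≤ W * m →
      ∫⁻ φ, ENNReal.ofReal (Real.exp (∑ y ∈ F, u y * φ y ^ 2)) ∂ν ≤ B := by
  intro n
  induction n with
  | zero =>
    intro u hn h0 hWu hsum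
    refine round_base ν hW m B hB F u ?_ h0 hWu hsum
    intro i hi j hj hi1 _
    have he := Finset.card_eq_zero.1 (Nat.le_zero.1 hn)
    have : i ∈ F.filter fun y => 0 < u y ∧ u y < W := Finset.mem_filter.2 ⟨hi, hi1⟩
    rw [he] at this
    simp at this
  | succ n ih =>
    intro u hn h0 hWu hsum
    by_cases h2 : ∃ i ∈ F.filter (fun y => 0 < u y ∧ u y < W), ∃ j ∈ F.filter (fun y => 0 < u y ∧ u y < W), i ≠ j
    · obtain ⟨i, hi, j, hj, hij⟩ := h2
      rw [Finset.mem_filter] at hi hj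
      have key : ∀ i j, i ∈ F → j ∈ F → i ≠ j → (0 < u i ∧ u i < W) → (0 < u j ∧ u j < W) →
          ∃ s : ℝ, 0 < s ∧ ∫⁻ φ, ENNReal.ofReal (Real.exp (∑ y ∈ F, mv u i j s y * φ y ^ 2)) ∂ν ≤ B := by
        intro i j hiF hjF hij hi hj
        obtain ⟨s, hs, a1, a2, a3, a4⟩ := mv_exists u hij h0 hWu hi hj
        refine ⟨s, hs, ih _ ?_ a1 a2 ?_⟩
        · rw [← Nat.lt_succ_iff]
          refine lt_of_lt_of_le ?_ hn
          apply Finset.card_lt_card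
          rw [Finset.ssubset_iff_of_subset]
          · rcases a4 with a4 | a4
            · exact ⟨i, by simp [hiF, hi], by simp only [Finset.mem_filter, not_and]; intro _; simpa using a4⟩
            · exact ⟨j, by simp [hjF, hj], by simp only [Finset.mem_filter, not_and]; intro _; simpa using a4⟩
          · intro y hy
            rw [Finset.mem_filter] at hy ⊢
            exact ⟨hy.1, a3 y hy.2⟩
        · have := mv_sum u s F hiF hjF (fun _ => 1)
          simp only [mul_one, sub_self, mul_zero, add_zero] at this
          rw [this]; exact hsum
      obtain ⟨s, hs, b1⟩ := key i j hi.1 hj.1 hij hi.2 hj.2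
      obtain ⟨t, ht, b2⟩ := key j i hj.1 hi.1 hij.symm hj.2 hi.2
      have hst : 0 < s + t := by linarith
      calc ∫⁻ φ, ENNReal.ofReal (Real.exp (∑ y ∈ F, u y * φ y ^ 2)) ∂ν
          ≤ ∫⁻ φ, (ENNReal.ofReal (t / (s + t)) * ENNReal.ofReal (Real.exp (∑ y ∈ F, mv u i j s y * φ y ^ 2))
            + ENNReal.ofReal (s / (s + t)) * ENNReal.ofReal (Real.exp (∑ y ∈ F, mv u j i t y * φ y ^ 2))) ∂ν := by
            apply lintegral_mono
            intro φ
            dsimp only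
            rw [← ENNReal.ofReal_mul (by positivity), ← ENNReal.ofReal_mul (by positivity),
              ← ENNReal.ofReal_add (by positivity) (by positivity)]
            apply ENNReal.ofReal_le_ofReal
            have hc := convexOn_exp.2 (Set.mem_univ (∑ y ∈ F, mv u i j s y * φ y ^ 2))
              (Set.mem_univ (∑ y ∈ F, mv u j i t y * φ y ^ 2))
              (show (0:ℝ) ≤ t / (s + t) by positivity) (show (0:ℝ) ≤ s / (s + t) by positivity)
              (by field_simp; ring)
            simp only [smul_eq_mul] at hc
            refine le_trans (le_of_eq ?_) hc
            congr 1
            rw [mv_sum u s F hi.1 hj.1 (fun y => φ y ^ 2), mv_sum u t F hj.1 hi.1 (fun y => φ y ^ 2)]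
            field_simp
            ring
        _ ≤ ENNReal.ofReal (t / (s + t)) * B + ENNReal.ofReal (s / (s + t)) * B := by
            rw [lintegral_add_left (by fun_prop), lintegral_const_mul _ (by fun_prop),
              lintegral_const_mul _ (by fun_prop)]
            gcongr
        _ = B := by
            rw [← add_mul, ← ENNReal.ofReal_add (by positivity) (by positivity)]
            rw [show t / (s + t) + s / (s + t) = 1 by field_simp; ring]
            simp
    · push Not at h2
      refine round_base ν hW m B hB F u ?_ h0 hWu hsum
      intro i hi j hj hi1 hj1
      exact h2 i (Finset.mem_filter.2 ⟨hi, hi1⟩) j (Finset.mem_filter.2 ⟨hj, hj1⟩)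

/-- block bound -/
lemma Hyp.block [Countable V] (H : Hyp J g β M L ρ ζ) (ν : Measure (V → ℝ)) {W ε : ℝ} (hW : 0 < W) (hε : 0 ≤ ε)
    (m : ℕ) (B : ℝ≥0∞)
    (hB : ∀ Δ : Finset V, Δ.card ≤ m → ∫⁻ φ, ENNReal.ofReal (Real.exp (W * ∑ y ∈ Δ, φ y ^ 2)) ∂ν ≤ B)
    (Δ : Finset V) (h1 : ε * M ^ 2 ≤ W) (h2 : ε * M ^ 2 * Δ.card ≤ W * m) :
    ∫⁻ η, ENNReal.ofReal (Real.exp (ε * ∑ x : Δ, fld J Δ η x ^ 2)) ∂ν ≤ B := by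
  have hM := H.Mpos
  have hu0 : ∀ y, 0 ≤ ε * M * ∑ x ∈ Δ, J x y := by
    intro y
    have : 0 ≤ ∑ x ∈ Δ, J x y := Finset.sum_nonneg fun x _ => H.nn x y
    positivity
  refine (lintegral_mono fun η => H.exp_fld_sup Δ η hε).trans ?_
  rw [lintegral_iSup_directed]
  · apply iSup_le
    intro F
    apply rounding ν hW m B hB F _ _ le_rfl hu0
    · intro y
      refine le_trans ?_ h1
      have : ∑ x ∈ Δ, J x y ≤ M := by
        simp_rw [H.symm _ y]; exact H.bJf y Δ
      calc ε * M * ∑ x ∈ Δ, J x y ≤ ε * M * M := by gcongr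
        _ = _ := by ring
    · refine le_trans ?_ h2
      rw [← Finset.mul_sum, Finset.sum_comm]
      calc ε * M * ∑ x ∈ Δ, ∑ y ∈ F, J x y ≤ ε * M * ∑ x ∈ Δ, M := by
            gcongr with x _
            exact H.bJf x F
        _ = _ := by rw [Finset.sum_const, nsmul_eq_mul]; ring
  · intro F
    apply Measurable.aemeasurable
    fun_prop
  · apply Monotone.directed_le
    intro F F' hF η
    apply ENNReal.ofReal_le_ofReal
    apply Real.exp_le_exp.2
    apply Finset.sum_le_sum_of_subset_of_nonneg hF
    intro y _ _
    exact mul_nonneg (hu0 y) (sq_nonneg _)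

lemma sum_upd (Δ : Finset V) (η : V → ℝ) (y : Δ → ℝ) (h : ℝ → ℝ) :
    ∑ z ∈ Δ, h (Function.updateFinset η Δ y z) = ∑ z : Δ, h (y z) := by
  rw [← Finset.sum_coe_sort]
  apply Finset.sum_congr rfl
  intro z _
  simp [Function.updateFinset]

/-- super-stability moment estimate -/
lemma Hyp.supermoment [Countable V] (H : Hyp J g β M L ρ ζ) {W D : ℝ} (hW : 0 < W) (hD : 0 ≤ D) :
    ∃ K : ℝ, 1 ≤ K ∧ ∀ ν : Measure (V → ℝ), IsProbabilityMeasure ν → (∀ Δ, DLR J β ρ Δ ν) →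
      (∀ y, em ν W y ≤ ENNReal.ofReal (Real.exp D)) → ∀ (n : ℕ) (Δ : Finset V), Δ.card ≤ n →
      ∫⁻ φ, ENNReal.ofReal (Real.exp (W * ∑ y ∈ Δ, φ y ^ 2)) ∂ν ≤ ENNReal.ofReal (Real.exp D * K ^ n) := by
  have hM := H.Mpos
  obtain ⟨C, hC1, hC⟩ := H.moment W (ε := W / (2 * M ^ 2)) (by positivity)
  have hK : 1 ≤ C ^ 4 := one_le_pow₀ hC1
  have hD1 : 1 ≤ Real.exp D := Real.one_le_exp hD
  refine ⟨C ^ 4, hK, fun ν hν hdlr hm n => ?_⟩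
  induction n using Nat.strong_induction_on with
  | _ n ih =>
  intro Δ hΔ
  rcases lt_or_eq_of_le hΔ with hlt | heq
  · refine (ih _ hlt Δ le_rfl).trans (ENNReal.ofReal_le_ofReal ?_)
    gcongr
  rcases Nat.lt_or_ge n 2 with hn | hn
  · interval_cases n
    · rw [Finset.card_eq_zero] at heq
      subst heq
      simp
      exact hD
    · obtain ⟨x, rfl⟩ := Finset.card_eq_one.1 heq
      simp only [Finset.sum_singleton]
      refine (hm x).trans (ENNReal.ofReal_le_ofReal ?_)
      rw [pow_one]
      exact le_mul_of_one_le_right (Real.exp_pos _).le hK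
  set m := (n + 1) / 2 with hmdef
  have hmn : m < n := by omega
  calc ∫⁻ φ, ENNReal.ofReal (Real.exp (W * ∑ y ∈ Δ, φ y ^ 2)) ∂ν
      = ∫⁻ η, (∫⁻ φ, ENNReal.ofReal (Real.exp (W * ∑ y ∈ Δ, φ y ^ 2)) ∂(gam J β ρ Δ η)) ∂ν :=
        hdlr Δ _ (by fun_prop)
    _ ≤ ∫⁻ η, ENNReal.ofReal (C ^ n) *
        ENNReal.ofReal (Real.exp (W / (2 * M ^ 2) * ∑ x : Δ, fld J Δ η x ^ 2)) ∂ν := by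
        apply lintegral_mono
        intro η
        dsimp only
        rw [lint_gam' _ _ (by fun_prop), ← ENNReal.ofReal_mul (by positivity), ← heq]
        refine le_trans (le_of_eq ?_) (hC Δ η)
        apply lintegral_congr
        intro y
        rw [sum_upd Δ η y (fun t => t ^ 2)]
    _ = ENNReal.ofReal (C ^ n) *
        ∫⁻ η, ENNReal.ofReal (Real.exp (W / (2 * M ^ 2) * ∑ x : Δ, fld J Δ η x ^ 2)) ∂ν :=
        lintegral_const_mul' _ _ ENNReal.ofReal_ne_top
    _ ≤ ENNReal.ofReal (C ^ n) * ENNReal.ofReal (Real.exp D * (C ^ 4) ^ m) := by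
        gcongr
        apply H.block ν hW (by positivity) m _ (ih m hmn) Δ
        · rw [show W / (2 * M ^ 2) * M ^ 2 = W / 2 by field_simp]; linarith
        · rw [show W / (2 * M ^ 2) * M ^ 2 = W / 2 by field_simp, heq]
          have : (n : ℝ) ≤ 2 * m := by
            have : n ≤ 2 * m := by omega
            exact_mod_cast this
          nlinarith
    _ ≤ _ := by
        rw [← ENNReal.ofReal_mul (by positivity)]
        apply ENNReal.ofReal_le_ofReal
        rw [← pow_mul, ← pow_mul, mul_left_comm, ← pow_add]
        gcongr
        omega

end
end PM

namespace PM
section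
variable {V : Type*} {J g : V → V → ℝ} {β M L : ℝ} {ρ : Measure ℝ} {ζ : V → ℝ}

lemma lmarg_prodF (ρ : Measure ℝ) [SigmaFinite ρ] (F : V → ℝ → ℝ≥0∞) (hF : ∀ i, Measurable (F i))
    (s : Finset V) (x : V → ℝ) :
    lmarginal (fun _ => ρ) s (fun φ => ∏ i ∈ s, F i (φ i)) x = ∏ i ∈ s, (∫⁻ u, F i u ∂ρ) := by
  induction s using Finset.induction_on generalizing x with
  | empty => simp
  | insert i s hi ih =>
    rw [lmarginal_insert' _ (by
      apply Finset.measurable_prod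
      intro j _
      exact (hF j).comp (measurable_pi_apply j)) hi]
    have : (fun y : V → ℝ => ∫⁻ u, ∏ j ∈ insert i s, F j (Function.update y i u j) ∂ρ)
        = fun y => (∫⁻ u, F i u ∂ρ) * ∏ j ∈ s, F j (y j) := by
      funext y
      have h2 : ∀ u : ℝ, ∏ j ∈ insert i s, F j (Function.update y i u j)
          = F i u * ∏ j ∈ s, F j (y j) := by
        intro u
        rw [Finset.prod_insert hi, Function.update_self]
        congr 1
        apply Finset.prod_congr rfl
        intro j hj
        have hji : j ≠ i := by
          rintro rfl
          exact hi hj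
        rw [Function.update_of_ne hji]
      simp_rw [h2]
      rw [lintegral_mul_const _ (hF i)]
    rw [this, Finset.prod_insert hi]
    rw [← ih x]
    unfold lmarginal
    rw [lintegral_const_mul]
    apply Finset.measurable_prod
    intro j hj
    have : Measurable fun a : s → ℝ => Function.updateFinset x s a j :=
      measurable_pi_iff.1 (measurable_updateFinset (s := s) (x := x)) j
    exact (hF j).comp this

lemma pi_lint_prodF (ρ : Measure ℝ) [SigmaFinite ρ] (s : Finset V) (F : s → ℝ → ℝ≥0∞)
    (hF : ∀ i, Measurable (F i)) :
    ∫⁻ y : s → ℝ, ∏ i : s, F i (y i) ∂(Measure.pi fun _ : s => ρ) = ∏ i : s, (∫⁻ u, F i u ∂ρ) := by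
  set G : V → ℝ → ℝ≥0∞ := fun i => if h : i ∈ s then F ⟨i, h⟩ else 1 with hG
  have hGm : ∀ i, Measurable (G i) := by
    intro i
    simp only [hG]
    split_ifs
    · exact hF _
    · exact measurable_const
  have hGi : ∀ i : s, G i = F i := by
    intro i; simp [hG]
  have e : ∏ i : s, (∫⁻ u, F i u ∂ρ) = ∏ i ∈ s, (∫⁻ u, G i u ∂ρ) := by
    rw [← Finset.prod_coe_sort s]
    apply Finset.prod_congr rfl
    intro i _
    rw [hGi]
  rw [e, ← lmarg_prodF ρ G hGm s (fun _ => 0)]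
  unfold lmarginal
  apply lintegral_congr
  intro y
  show _ = ∏ i ∈ s, G i (Function.updateFinset (fun _ => (0:ℝ)) s y i)
  rw [← Finset.prod_coe_sort s]
  apply Finset.prod_congr rfl
  intro i _
  rw [hGi]
  simp [Function.updateFinset]

lemma Hyp.fin_rhoMod (H : Hyp J g β M L ρ ζ) (a : ℝ) : IsFiniteMeasure (rhoMod ρ a) := by
  constructor
  unfold rhoMod
  rw [withDensity_apply _ MeasurableSet.univ, Measure.restrict_univ]
  exact H.mom a

lemma Hyp.pi_rhoMod (H : Hyp J g β M L ρ ζ) (a : ℝ) (Λ : Finset V) :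
    Measure.pi (fun _ : Λ => rhoMod ρ a) = (Measure.pi fun _ : Λ => ρ).withDensity
      (fun y => ENNReal.ofReal (Real.exp (a * ∑ x : Λ, y x ^ 2))) := by
  have := H.isFin
  have := H.fin_rhoMod a
  apply Measure.pi_eq
  intro s hs
  rw [withDensity_apply _ (MeasurableSet.univ_pi hs), ← lintegral_indicator (MeasurableSet.univ_pi hs)]
  have e : ∀ i, rhoMod ρ a (s i) =
      ∫⁻ u, (s i).indicator (fun u => ENNReal.ofReal (Real.exp (a * u ^ 2))) u ∂ρ := by
    intro i
    unfold rhoMod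
    rw [withDensity_apply _ (hs i), lintegral_indicator (hs i)]
  simp_rw [e]
  rw [← pi_lint_prodF ρ Λ _ (fun i => Measurable.indicator (by fun_prop) (hs i))]
  apply lintegral_congr
  intro y
  by_cases hy : y ∈ Set.univ.pi s
  · rw [Set.indicator_of_mem hy, exp_sum_sq]
    apply Finset.prod_congr rfl
    intro i _
    rw [Set.indicator_of_mem (hy i (Set.mem_univ i))]
  · rw [Set.indicator_of_notMem hy]
    simp only [Set.mem_univ_pi, not_forall] at hy
    obtain ⟨i, hi⟩ := hy
    symm
    apply Finset.prod_eq_zero (Finset.mem_univ i)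
    rw [Set.indicator_of_notMem hi]

lemma Hyp.prodN_apply (H : Hyp J g β M L ρ ζ) (a : ℝ) (Λ : Finset V) {s : Set (Λ → ℝ)} (hs : MeasurableSet s) :
    mo ρ a ^ Λ.card * prodN (rhoMod ρ a) Λ s =
      ∫⁻ y, ENNReal.ofReal (Real.exp (a * ∑ x : Λ, y x ^ 2)) * s.indicator 1 y
        ∂(Measure.pi fun _ : Λ => ρ) := by
  unfold prodN
  rw [H.pi_rhoMod, Measure.smul_apply, smul_eq_mul]
  rw [withDensity_apply _ MeasurableSet.univ, Measure.restrict_univ, H.pi_mo, ← mul_assoc,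
    ENNReal.mul_inv_cancel (pow_ne_zero _ (H.mo_ne_zero a)) (ENNReal.pow_ne_top (H.mo_ne_top a)), one_mul,
    withDensity_apply _ hs, ← lintegral_indicator hs]
  apply lintegral_congr
  intro y
  by_cases hy : y ∈ s <;> simp [hy]

/-- regularity of DLR measures with uniform moments -/
lemma Hyp.regular [Countable V] (H : Hyp J g β M L ρ ζ) {ν : Measure (V → ℝ)} (hν : IsProbabilityMeasure ν)
    (hdlr : ∀ Δ, DLR J β ρ Δ ν) {D : ℝ} (hD : 0 ≤ D)
    (hm : ∀ y, em ν (β * M / 2 + 1) y ≤ ENNReal.ofReal (Real.exp D)) {a : ℝ} (ha : 3 * (β * M) / 2 ≤ a) :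
    IsRegularWRT (rhoMod ρ a) ν := by
  have hM := H.Mpos
  have hb := H.bnn
  have hbM : 0 ≤ β * M := by positivity
  obtain ⟨K, hK1, hK⟩ := H.supermoment (W := β * M / 2 + 1) (D := D) (by positivity) hD
  have hK := hK ν hν hdlr hm
  set δ := β * M with hδ
  have hδ' : β = 0 ∨ 0 < δ := by
    rcases eq_or_lt_of_le hb with h | h
    · left; exact h.symm
    · right; positivity
  set R : ℝ := ((mo ρ (-(β * M / 2 + δ)))⁻¹ * mo ρ a).toReal with hR
  have hRt : (mo ρ (-(β * M / 2 + δ)))⁻¹ * mo ρ a ≠ ⊤ :=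
    ENNReal.mul_ne_top (ENNReal.inv_ne_top.2 (H.mo_ne_zero _)) (H.mo_ne_top _)
  refine ⟨R + D + K, by positivity, fun Λ => ?_⟩
  rcases Λ.eq_empty_or_nonempty with rfl | hne
  · apply Measure.le_iff.2
    intro s hs
    have h1 := H.prodN_apply a (∅ : Finset V) hs
    simp only [Finset.card_empty, pow_zero, one_mul] at h1
    rw [Measure.smul_apply, h1]
    simp only [Finset.card_empty, Nat.cast_zero, mul_zero, Real.exp_zero, ENNReal.ofReal_one, smul_eq_mul,
      one_mul]
    rw [Measure.pi_of_empty, lintegral_dirac]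
    rcases Set.eq_empty_or_nonempty s with rfl | ⟨y, hy⟩
    · simp
    · have : s = Set.univ := by
        ext z; simp [Subsingleton.elim z y, hy]
      rw [this]
      have := Measure.isProbabilityMeasure_map (μ := ν) (meas_restrictTo (∅ : Finset V)).aemeasurable
      rw [measure_univ]
      simp
  have hn : 1 ≤ Λ.card := Finset.card_pos.2 hne
  apply Measure.le_iff.2
  intro s hs
  have hsm : Measurable (s.indicator (1 : (Λ → ℝ) → ℝ≥0∞)) := measurable_one.indicator hs
  rw [← lintegral_indicator_one hs, lintegral_map hsm (meas_restrictTo Λ),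
    hdlr Λ (fun φ => s.indicator 1 (restrictTo Λ φ)) (hsm.comp (meas_restrictTo Λ))]
  have step : ∀ η, ∫⁻ φ, s.indicator 1 (restrictTo Λ φ) ∂(gam J β ρ Λ η) ≤
      ((mo ρ (-(β * M / 2 + δ)))⁻¹ * mo ρ a) ^ Λ.card * prodN (rhoMod ρ a) Λ s *
      ENNReal.ofReal (Real.exp (β ^ 2 / (2 * δ) * ∑ x : Λ, fld J Λ η x ^ 2)) := by
    intro η
    rw [lint_gam' (F := fun φ => s.indicator 1 (restrictTo Λ φ)) _ _ (hsm.comp (meas_restrictTo Λ))]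
    simp_rw [restr_update]
    refine (H.dens hδ' hbM Λ η _ hsm).trans ?_
    rw [mul_pow, mul_assoc ((mo ρ (-(β * M / 2 + δ)))⁻¹ ^ Λ.card) (mo ρ a ^ Λ.card), H.prodN_apply a Λ hs,
      mul_right_comm]
    gcongr with y
    · linarith
  refine (lintegral_mono step).trans ?_
  rw [lintegral_const_mul' _ _ (by
    apply ENNReal.mul_ne_top (ENNReal.pow_ne_top hRt)
    have h1 := H.prodN_apply a Λ hs
    intro h
    rw [h, ENNReal.mul_top (pow_ne_zero _ (H.mo_ne_zero a))] at h1
    have h2 : ∫⁻ y, ENNReal.ofReal (Real.exp (a * ∑ x : Λ, y x ^ 2)) * s.indicator 1 y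
        ∂(Measure.pi fun _ : Λ => ρ) ≤ mo ρ a ^ Λ.card := by
      rw [← H.pi_mo]
      apply lintegral_mono
      intro y
      by_cases hy : y ∈ s <;> simp [hy]
    rw [← h1, top_le_iff] at h2
    exact ENNReal.pow_ne_top (H.mo_ne_top a) h2)]
  have hblock : ∫⁻ η, ENNReal.ofReal (Real.exp (β ^ 2 / (2 * δ) * ∑ x : Λ, fld J Λ η x ^ 2)) ∂ν ≤
      ENNReal.ofReal (Real.exp D * K ^ Λ.card) := by
    have he : β ^ 2 / (2 * δ) * M ^ 2 ≤ β * M / 2 + 1 := by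
      rcases hδ' with h | h
      · rw [h]; simp
      · have : β ≠ 0 := by rintro rfl; simp [hδ] at h
        rw [hδ]
        have : β ^ 2 / (2 * (β * M)) * M ^ 2 = β * M / 2 := by field_simp
        rw [this]; linarith
    apply H.block ν (W := β * M / 2 + 1) (by positivity) (by positivity) Λ.card _ (hK Λ.card) Λ he
    gcongr
  refine (mul_le_mul_right hblock _).trans ?_
  rw [Measure.smul_apply, smul_eq_mul, mul_right_comm]
  gcongr
  rw [← ENNReal.ofReal_toReal hRt, ← hR, ← ENNReal.ofReal_pow (by positivity), ← ENNReal.ofReal_mul (by positivity)]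
  apply ENNReal.ofReal_le_ofReal
  have ex : ∀ u : ℝ, u ≤ Real.exp u := fun u => (by linarith [Real.add_one_le_exp u])
  have hn' : (1 : ℝ) ≤ Λ.card := by exact_mod_cast hn
  calc R ^ Λ.card * (Real.exp D * K ^ Λ.card) ≤ Real.exp R ^ Λ.card * (Real.exp D ^ Λ.card * Real.exp K ^ Λ.card) := by
        gcongr
        · exact ex R
        · exact le_self_pow₀ (Real.one_le_exp hD) (by omega)
        · exact ex K
    _ = _ := by
        rw [← Real.exp_nat_mul, ← Real.exp_nat_mul, ← Real.exp_nat_mul, ← Real.exp_add, ← Real.exp_add]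
        congr 1; ring

end
end PM

namespace PM
section
variable {V : Type*} {J g : V → V → ℝ} {β M L : ℝ} {ρ : Measure ℝ} {ζ : V → ℝ}

/-- the compact boxes -/
def box (ζ : V → ℝ) (t : ℝ) : Set (V → ℝ) := {φ | ∀ y, |φ y| ≤ t * ζ y}

lemma box_compact (ζ : V → ℝ) (t : ℝ) : IsCompact (box ζ t) := by
  have : box ζ t = Set.univ.pi fun y => Set.Icc (-(t * ζ y)) (t * ζ y) := by
    ext φ
    simp only [box, abs_le, Set.mem_pi, Set.mem_univ, forall_true_left, Set.mem_Icc, Set.mem_ofPred_eq]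
  rw [this]
  exact isCompact_univ_pi fun y => isCompact_Icc

lemma box_meas [Countable V] (ζ : V → ℝ) (t : ℝ) : MeasurableSet (box ζ t) :=
  (box_compact ζ t).isClosed.measurableSet

/-- tail function -/
noncomputable def tl (ζ : V → ℝ) (D t : ℝ) : ℝ := ∑' y, Real.exp (D - 2 * t ^ 2 * ζ y ^ 2)

lemma Hyp.tl_summable (H : Hyp J g β M L ρ ζ) (D : ℝ) {t : ℝ} (ht : 1 ≤ t) :
    Summable fun y => Real.exp (D - 2 * t ^ 2 * ζ y ^ 2) := by
  refine Summable.of_nonneg_of_le (fun y => (Real.exp_pos _).le) (fun y => ?_) (H.sz.mul_left (Real.exp D))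
  rw [← Real.exp_add]
  apply Real.exp_le_exp.2
  have : 1 ≤ t ^ 2 := one_le_pow₀ ht
  nlinarith [sq_nonneg (ζ y)]

lemma Hyp.tl_tendsto (H : Hyp J g β M L ρ ζ) (D : ℝ) : Tendsto (tl ζ D) atTop (nhds 0) := by
  have : (0 : ℝ) = ∑' _ : V, (0 : ℝ) := by simp
  rw [this]
  refine tendsto_tsum_of_dominated_convergence (H.sz.mul_left (Real.exp D)) ?_ ?_
  · intro y
    apply Real.tendsto_exp_atBot.comp
    have h1 : Tendsto (fun t : ℝ => (2 * ζ y ^ 2) * t ^ 2) atTop atTop := by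
      apply Tendsto.const_mul_atTop
      · have := H.zpos y; positivity
      · exact tendsto_pow_atTop (by norm_num)
    have := tendsto_atBot_add_const_left atTop D (tendsto_neg_atTop_atBot.comp h1)
    refine this.congr fun t => ?_
    simp only [Function.comp]
    ring
  · filter_upwards [eventually_ge_atTop 1] with t ht y
    rw [Real.norm_of_nonneg (Real.exp_pos _).le, ← Real.exp_add]
    apply Real.exp_le_exp.2
    have : 1 ≤ t ^ 2 := one_le_pow₀ ht
    nlinarith [sq_nonneg (ζ y)]

/-- tail property -/
def Tail (ζ : V → ℝ) (D : ℝ) (μ : Measure (V → ℝ)) : Prop :=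
  ∀ t : ℝ, 1 ≤ t → ∀ y, μ {φ | t * ζ y < |φ y|} ≤ ENNReal.ofReal (Real.exp (D - 2 * t ^ 2 * ζ y ^ 2))

lemma Hyp.box_tail [Countable V] (H : Hyp J g β M L ρ ζ) {D : ℝ} {μ : Measure (V → ℝ)} (h : Tail ζ D μ) {t : ℝ}
    (ht : 1 ≤ t) : μ (box ζ t)ᶜ ≤ ENNReal.ofReal (tl ζ D t) := by
  have : (box ζ t)ᶜ = ⋃ y, {φ | t * ζ y < |φ y|} := by
    ext φ; simp [box]
  rw [this]
  refine (measure_iUnion_le _).trans ?_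
  unfold tl
  rw [ENNReal.ofReal_tsum_of_nonneg (fun y => (Real.exp_pos _).le) (H.tl_summable D ht)]
  exact ENNReal.tsum_le_tsum fun y => h t ht y

lemma em_tail {μ : Measure (V → ℝ)} {A D z t : ℝ} {y : V} (hA : 3 ≤ A) (hz : 0 < z) (ht : 1 ≤ t)
    (h : em μ A y ≤ ENNReal.ofReal (Real.exp (D + z ^ 2))) :
    μ {φ | t * z < |φ y|} ≤ ENNReal.ofReal (Real.exp (D - 2 * t ^ 2 * z ^ 2)) := by
  have h1 := mul_meas_ge_le_lintegral₀ (μ := μ)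
    (f := fun φ : V → ℝ => ENNReal.ofReal (Real.exp (A * φ y ^ 2))) (by
      apply Measurable.aemeasurable; fun_prop)
    (ENNReal.ofReal (Real.exp (A * (t * z) ^ 2)))
  have h2 : μ {φ | t * z < |φ y|} ≤ μ {φ | ENNReal.ofReal (Real.exp (A * (t * z) ^ 2)) ≤
      ENNReal.ofReal (Real.exp (A * φ y ^ 2))} := by
    apply measure_mono
    intro φ hφ
    simp only [Set.mem_ofPred_eq] at hφ ⊢
    apply ENNReal.ofReal_le_ofReal
    apply Real.exp_le_exp.2
    have : (t * z) ^ 2 ≤ φ y ^ 2 := by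
      rw [← sq_abs (φ y)]
      exact pow_le_pow_left₀ (by positivity) hφ.le 2
    nlinarith
  refine h2.trans ?_
  have h3 := h1.trans h
  rw [mul_comm, ← ENNReal.le_div_iff_mul_le (by left; simp [Real.exp_pos]) (by left; simp), ← ENNReal.ofReal_div_of_pos (Real.exp_pos _),
    ← Real.exp_sub] at h3
  refine h3.trans ?_
  apply ENNReal.ofReal_le_ofReal
  apply Real.exp_le_exp.2
  have : 1 ≤ t ^ 2 := one_le_pow₀ ht
  have : 0 ≤ (A - 3) * (t ^ 2 * z ^ 2) := by
    apply mul_nonneg (by linarith); positivity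
  nlinarith [sq_nonneg z]

lemma Hyp.gam_tail [Countable V] (H : Hyp J g β M L ρ ζ) {A D : ℝ} (hA : 3 ≤ A) {Λ : Finset V} {ξ : V → ℝ}
    (hξ : ∀ x, |ξ x| ≤ ζ x)
    (h : ∀ x ∈ Λ, em (gam J β ρ Λ ξ) A x ≤ ENNReal.ofReal (Real.exp (D + ζ x ^ 2))) :
    Tail ζ D (gam J β ρ Λ ξ) := by
  intro t ht y
  by_cases hy : y ∈ Λ
  · exact em_tail hA (H.zpos y) ht (h y hy)
  · have : gam J β ρ Λ ξ {φ | t * ζ y < |φ y|} = 0 := by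
      have hms : MeasurableSet {φ : V → ℝ | t * ζ y < |φ y|} :=
        measurableSet_lt (by fun_prop) (by fun_prop)
      unfold gam
      rw [Measure.map_apply measurable_updateFinset hms]
      convert measure_empty (μ := gibbs J β ρ Λ ξ)
      ext z
      have h2 := H.zpos y
      have h3 : ζ y ≤ t * ζ y := le_mul_of_one_le_left h2.le ht
      simpa [Function.updateFinset, hy] using (hξ y).trans h3
    rw [this]; exact zero_le

/-- finite-volume probability measures -/
noncomputable def Hyp.P (H : Hyp J g β M L ρ ζ) (ξ : V → ℝ) (Λ : Finset V) : ProbabilityMeasure (V → ℝ) :=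
  ⟨gam J β ρ Λ ξ, H.gam_prob Λ ξ⟩

/-- existence of limits along ultrafilters -/
lemma Hyp.exists_lim [Countable V] (H : Hyp J g β M L ρ ζ) {D : ℝ} {ξ : V → ℝ}
    (h : ∀ Λ, Tail ζ D (gam J β ρ Λ ξ)) (U : Ultrafilter (Finset V)) :
    ∃ ν : ProbabilityMeasure (V → ℝ), Tendsto (H.P ξ) U (nhds ν) := by
  have hc : IsCompact {μ : ProbabilityMeasure (V → ℝ) | ∀ n : ℕ, μ (box ζ (n + 1))ᶜ ≤ Real.toNNReal (tl ζ D (n + 1))} := by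
    apply isCompact_setOfPred_probabilityMeasure_mass_eq_compl_isCompact_le (K := fun n : ℕ => box ζ (n + 1))
      (u := fun n : ℕ => Real.toNNReal (tl ζ D (n + 1)))
    · rw [← Real.toNNReal_zero]
      apply (continuous_real_toNNReal.tendsto 0).comp
      apply (H.tl_tendsto D).comp
      exact tendsto_atTop_add_const_right _ _ tendsto_natCast_atTop_atTop
    · exact fun n => box_compact ζ _
    · right
      intro m n hmn φ hφ y
      refine (hφ y).trans ?_
      have := (H.zpos y).le
      have : (m : ℝ) ≤ n := by exact_mod_cast hmn
      gcongr
  have hm : ∀ Λ, H.P ξ Λ ∈ {μ : ProbabilityMeasure (V → ℝ) | ∀ n : ℕ, μ (box ζ (n + 1))ᶜ ≤ Real.toNNReal (tl ζ D (n + 1))} := by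
    intro Λ n
    have := H.box_tail (h Λ) (t := n + 1) (by simp)
    rw [← ENNReal.coe_le_coe, ProbabilityMeasure.ennreal_coeFn_eq_coeFn_toMeasure]
    exact this
  obtain ⟨ν, -, hν⟩ := hc.ultrafilter_le_nhds (U.map (H.P ξ)) (by
    rw [le_principal_iff]
    exact Filter.mem_map.2 (Filter.univ_mem' hm))
  exact ⟨ν, hν⟩

end
end PM

open scoped ENNReal NNReal Classical BoundedContinuousFunction

namespace PM
section
variable {V : Type*} {J g : V → V → ℝ} {β M L : ℝ} {ρ : Measure ℝ} {ζ : V → ℝ}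

/-- clamping -/
noncomputable def clamp (ζ : V → ℝ) (t : ℝ) (η : V → ℝ) : V → ℝ :=
  fun y => max (-(t * ζ y)) (min (t * ζ y) (η y))

lemma clamp_cont (ζ : V → ℝ) (t : ℝ) : Continuous (clamp ζ t) := by
  unfold clamp
  fun_prop

lemma clamp_le (ζ : V → ℝ) {t : ℝ} (h : ∀ y, 0 ≤ t * ζ y) (η : V → ℝ) (y : V) : |clamp ζ t η y| ≤ t * ζ y := by
  unfold clamp
  rw [abs_le]
  refine ⟨le_max_left _ _, max_le (by linarith [h y]) (min_le_left _ _)⟩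

lemma clamp_box (ζ : V → ℝ) {t : ℝ} {η : V → ℝ} (h : η ∈ box ζ t) : clamp ζ t η = η := by
  funext y
  have := abs_le.1 (h y)
  unfold clamp
  rw [min_eq_right this.2, max_eq_right this.1]

lemma Hyp.sJz (H : Hyp J g β M L ρ ζ) (x : V) : Summable fun y => J x y * ζ y := by
  apply H.good_le (t := 1)
  intro y
  rw [abs_of_pos (H.zpos y), one_mul]

lemma Hyp.fld_clamp_le (H : Hyp J g β M L ρ ζ) {t : ℝ} (ht : 0 ≤ t) (Λ : Finset V) (x : V) (η : V → ℝ) :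
    |fld J Λ (clamp ζ t η) x| ≤ t * ∑' y, J x y * ζ y := by
  have hs := (H.sJz x).mul_left t
  have hc : ∀ y, |J x y * clamp ζ t η y| ≤ t * (J x y * ζ y) := by
    intro y
    rw [abs_mul, abs_of_nonneg (H.nn x y)]
    have := clamp_le ζ (fun y => mul_nonneg ht (H.zpos y).le) η y
    nlinarith [H.nn x y]
  have hn : ∀ y, 0 ≤ t * (J x y * ζ y) := fun y => mul_nonneg ht (mul_nonneg (H.nn x y) (H.zpos y).le)
  unfold fld
  rw [← Real.norm_eq_abs]
  refine (tsum_of_norm_bounded (hs.subtype {y | y ∉ Λ}).hasSum (fun y => hc y.1)).trans ?_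
  rw [← tsum_mul_left]
  exact hs.tsum_subtype_le _ {y | y ∉ Λ} hn

lemma Hyp.fld_clamp_cont (H : Hyp J g β M L ρ ζ) {t : ℝ} (ht : 0 ≤ t) (Λ : Finset V) (x : V) :
    Continuous fun η => fld J Λ (clamp ζ t η) x := by
  have hs := (H.sJz x).mul_left t
  unfold fld
  refine continuous_tsum (u := fun y : {y // y ∉ Λ} => t * (J x y * ζ y)) ?_ (hs.subtype {y | y ∉ Λ}) ?_
  · intro y
    have : Continuous fun η => clamp ζ t η y := (continuous_apply y.1).comp (clamp_cont ζ t)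
    fun_prop
  · intro y η
    rw [Real.norm_eq_abs, abs_mul, abs_of_nonneg (H.nn x y)]
    have := clamp_le ζ (fun y => mul_nonneg ht (H.zpos y).le) η y
    nlinarith [H.nn x y]

lemma Hyp.num_cont [Countable V] (H : Hyp J g β M L ρ ζ) {t : ℝ} (ht : 0 ≤ t) (Λ : Finset V)
    (F : (V → ℝ) →ᵇ ℝ≥0) :
    Continuous fun η => ∫⁻ y, ENNReal.ofReal (Real.exp (hamil J β Λ (clamp ζ t η) y)) *
      (F (Function.updateFinset (clamp ζ t η) Λ y) : ℝ≥0∞) ∂(Measure.pi fun _ : Λ => ρ) := by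
  rw [continuous_iff_continuousAt]
  intro η₀
  set S : ℝ := β ^ 2 / (4 * 1) * ∑ x : Λ, (t * ∑' y, J x y * ζ y) ^ 2
  set C : ℝ≥0∞ := edist 0 F
  have hC : C ≠ ⊤ := edist_ne_top _ _
  refine tendsto_lintegral_filter_of_dominated_convergence (fun y => ENNReal.ofReal (Real.exp S) * C *
      ENNReal.ofReal (Real.exp ((β * M / 2 + 1) * ∑ x : Λ, y x ^ 2))) ?_ ?_ ?_ ?_
  · refine Eventually.of_forall fun η => ?_
    apply (meas_bw Λ _).mul
    have : Continuous fun y => F (Function.updateFinset (clamp ζ t η) Λ y) := by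
      apply F.continuous.comp
      apply continuous_pi
      intro z
      unfold Function.updateFinset
      split_ifs <;> fun_prop
    exact this.measurable.coe_nnreal_ennreal
  · refine Eventually.of_forall fun η => ?_
    refine Eventually.of_forall fun y => ?_
    have h1 := H.hamil_le (Or.inr one_pos) zero_le_one Λ (clamp ζ t η) y
    have h2 : β ^ 2 / (4 * 1) * ∑ x : Λ, fld J Λ (clamp ζ t η) x ^ 2 ≤ S := by
      apply mul_le_mul_of_nonneg_left _ (by positivity)
      apply Finset.sum_le_sum
      intro x _
      rw [← sq_abs (fld J Λ (clamp ζ t η) x)]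
      exact pow_le_pow_left₀ (abs_nonneg _) (H.fld_clamp_le ht Λ x η) 2
    rw [mul_right_comm, ← ENNReal.ofReal_mul (Real.exp_pos _).le, ← Real.exp_add]
    gcongr
    · linarith
    · exact F.apply_le_edist_zero _
  · rw [lintegral_const_mul' _ _ (ENNReal.mul_ne_top (by simp) hC), H.pi_mo]
    exact ENNReal.mul_ne_top (ENNReal.mul_ne_top (by simp) hC) (ENNReal.pow_ne_top (H.mo_ne_top _))
  · refine Eventually.of_forall fun y => ?_
    have c1 : Continuous fun η => hamil J β Λ (clamp ζ t η) y := by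
      simp_rw [hamil_fld]
      have := fun x => H.fld_clamp_cont ht Λ x
      fun_prop
    have c2 : Continuous fun η => F (Function.updateFinset (clamp ζ t η) Λ y) := by
      apply F.continuous.comp
      apply continuous_pi
      intro z
      unfold Function.updateFinset
      split_ifs
      · exact continuous_const
      · exact (continuous_apply z).comp (clamp_cont ζ t)
    have c3 : Continuous fun η => Real.toNNReal (Real.exp (hamil J β Λ (clamp ζ t η) y)) *
        F (Function.updateFinset (clamp ζ t η) Λ y) :=
      (continuous_real_toNNReal.comp (Real.continuous_exp.comp c1)).mul c2
    have := (ENNReal.continuous_coe.comp c3).tendsto η₀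
    refine Tendsto.congr (fun η => ?_) (this.trans (le_of_eq ?_))
    · simp [ENNReal.ofReal]
    · simp [ENNReal.ofReal]

lemma Hyp.gam_cont [Countable V] (H : Hyp J g β M L ρ ζ) {t : ℝ} (ht : 0 ≤ t) (Λ : Finset V)
    (F : (V → ℝ) →ᵇ ℝ≥0) :
    Continuous fun η => ∫⁻ φ, F φ ∂(gam J β ρ Λ (clamp ζ t η)) := by
  have h1 := H.num_cont ht Λ F
  have h2 := H.num_cont ht Λ 1
  have hF : Measurable fun φ => (F φ : ℝ≥0∞) := F.continuous.measurable.coe_nnreal_ennreal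
  simp only [BoundedContinuousFunction.coe_one, Pi.one_apply, ENNReal.coe_one, mul_one, ← Zf_eq] at h2
  have : (fun η => ∫⁻ φ, F φ ∂(gam J β ρ Λ (clamp ζ t η))) = fun η => (Zf J β ρ Λ (clamp ζ t η))⁻¹ *
      ∫⁻ y, ENNReal.ofReal (Real.exp (hamil J β Λ (clamp ζ t η) y)) *
      (F (Function.updateFinset (clamp ζ t η) Λ y) : ℝ≥0∞) ∂(Measure.pi fun _ : Λ => ρ) := by
    funext η
    rw [lint_gam' Λ _ hF, lint_gibbs]
  rw [this]
  have hf : ∀ η, ∫⁻ y, ENNReal.ofReal (Real.exp (hamil J β Λ (clamp ζ t η) y)) *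
      (F (Function.updateFinset (clamp ζ t η) Λ y) : ℝ≥0∞) ∂(Measure.pi fun _ : Λ => ρ) ≠ ⊤ := by
    intro η
    refine ne_top_of_le_ne_top (b := (∫⁻ y, ENNReal.ofReal (Real.exp (hamil J β Λ (clamp ζ t η) y)) ∂(Measure.pi fun _ : Λ => ρ)) * edist 0 F) ?_ ?_
    · rw [← Zf_eq]
      exact ENNReal.mul_ne_top (H.Z_ne_top _ _) (edist_ne_top _ _)
    · rw [← lintegral_mul_const' _ _ (edist_ne_top _ _)]
      apply lintegral_mono
      intro y
      dsimp only
      gcongr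
      exact F.apply_le_edist_zero _
  rw [continuous_iff_continuousAt]
  intro η
  apply ENNReal.Tendsto.mul
  · exact (continuous_inv.comp h2).tendsto η
  · right; exact hf η
  · exact h1.tendsto η
  · right; exact ENNReal.inv_ne_top.2 (H.Z_ne_zero _ _)

lemma Hyp.gam_kernel_meas [Countable V] (H : Hyp J g β M L ρ ζ) (Λ : Finset V) :
    Measurable fun η => gam J β ρ Λ η := by
  apply Measure.measurable_of_measurable_coe
  intro s hs
  have := H.meas_gam Λ (F := s.indicator 1) (measurable_one.indicator hs)
  simpa only [lintegral_indicator_one hs] using this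

lemma Hyp.dlr_of_cont [Countable V] (H : Hyp J g β M L ρ ζ) (Λ : Finset V) {ν : Measure (V → ℝ)}
    (hν : IsProbabilityMeasure ν)
    (h : ∀ F : (V → ℝ) →ᵇ ℝ≥0, ∫⁻ φ, F φ ∂ν = ∫⁻ η, (∫⁻ φ, F φ ∂(gam J β ρ Λ η)) ∂ν) : DLR J β ρ Λ ν := by
  have hm := H.gam_kernel_meas Λ
  have e : ν = ν.bind (fun η => gam J β ρ Λ η) := by
    apply ext_of_forall_lintegral_eq_of_IsFiniteMeasure
    intro F
    have hF : Measurable fun φ => (F φ : ℝ≥0∞) := F.continuous.measurable.coe_nnreal_ennreal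
    rw [h F, Measure.lintegral_bind hm.aemeasurable hF.aemeasurable]
  intro F hF
  conv_lhs => rw [e]
  rw [Measure.lintegral_bind hm.aemeasurable hF.aemeasurable]

lemma Hyp.lim_em [Countable V] (H : Hyp J g β M L ρ ζ) {ξ : V → ℝ} {A : ℝ} {y : V} {B : ℝ≥0∞}
    {U : Ultrafilter (Finset V)} (hU : (U : Filter (Finset V)) ≤ atTop)
    {ν : ProbabilityMeasure (V → ℝ)} (hν : Tendsto (H.P ξ) U (nhds ν))
    (h : ∀ Λ, y ∈ Λ → em (gam J β ρ Λ ξ) A y ≤ B) : em (ν : Measure (V → ℝ)) A y ≤ B := by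
  rw [ProbabilityMeasure.tendsto_iff_forall_lintegral_tendsto] at hν
  have key : ∀ n : ℕ, ∫⁻ φ, min (ENNReal.ofReal (Real.exp (A * φ y ^ 2))) n ∂(ν : Measure (V → ℝ)) ≤ B := by
    intro n
    let F : (V → ℝ) →ᵇ ℝ≥0 := BoundedContinuousFunction.mkOfBound
      ⟨fun φ => min (Real.toNNReal (Real.exp (A * φ y ^ 2))) n, by fun_prop⟩ n (by
        intro a b
        rw [NNReal.dist_eq, abs_le]
        have h1 : (0:ℝ) ≤ (min (Real.toNNReal (Real.exp (A * a y ^ 2))) (n : ℝ≥0) : ℝ≥0) := NNReal.coe_nonneg _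
        have h2 : (0:ℝ) ≤ (min (Real.toNNReal (Real.exp (A * b y ^ 2))) (n : ℝ≥0) : ℝ≥0) := NNReal.coe_nonneg _
        have h3 : ((min (Real.toNNReal (Real.exp (A * a y ^ 2))) (n : ℝ≥0) : ℝ≥0) : ℝ) ≤ n := by
          exact_mod_cast min_le_right _ _
        have h4 : ((min (Real.toNNReal (Real.exp (A * b y ^ 2))) (n : ℝ≥0) : ℝ≥0) : ℝ) ≤ n := by
          exact_mod_cast min_le_right _ _
        constructor
        · dsimp only [ContinuousMap.coe_mk]; linarith
        · dsimp only [ContinuousMap.coe_mk]; linarith)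
    have hF : ∀ φ, (F φ : ℝ≥0∞) = min (ENNReal.ofReal (Real.exp (A * φ y ^ 2))) n := by
      intro φ
      simp [F, ENNReal.ofReal]
    have := hν F
    simp_rw [hF] at this
    refine le_of_tendsto this ?_
    have : ∀ᶠ Λ in (U : Filter (Finset V)), y ∈ Λ := by
      apply hU
      filter_upwards [eventually_ge_atTop {y}] with Λ hΛ
      exact hΛ (Finset.mem_singleton_self y)
    filter_upwards [this] with Λ hΛ
    refine le_trans ?_ (h Λ hΛ)
    exact lintegral_mono fun φ => min_le_left _ _
  unfold em
  have hsup : ∀ φ : V → ℝ, ENNReal.ofReal (Real.exp (A * φ y ^ 2)) =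
      ⨆ n : ℕ, min (ENNReal.ofReal (Real.exp (A * φ y ^ 2))) n := by
    intro φ
    apply le_antisymm
    · obtain ⟨n, hn⟩ := exists_nat_ge (Real.exp (A * φ y ^ 2))
      refine le_trans ?_ (le_iSup _ n)
      apply le_min le_rfl
      rw [← ENNReal.ofReal_natCast]
      exact ENNReal.ofReal_le_ofReal hn
    · exact iSup_le fun n => min_le_left _ _
  rw [lintegral_congr hsup]
  rw [lintegral_iSup]
  · exact iSup_le key
  · intro n; fun_prop
  · intro m n hmn φ
    dsimp only
    gcongr

lemma Hyp.lim_dlr [Countable V] (H : Hyp J g β M L ρ ζ) {ξ : V → ℝ} (hξ : ∀ x, |ξ x| ≤ ζ x) {D : ℝ}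
    (hT : ∀ Λ, Tail ζ D (gam J β ρ Λ ξ))
    {U : Ultrafilter (Finset V)} (hU : (U : Filter (Finset V)) ≤ atTop)
    {ν : ProbabilityMeasure (V → ℝ)} (hν : Tendsto (H.P ξ) U (nhds ν)) (hTν : Tail ζ D (ν : Measure (V → ℝ)))
    (Δ : Finset V) : DLR J β ρ Δ (ν : Measure (V → ℝ)) := by
  have hg : Good J ξ := H.good_le (t := 1) (by simpa using hξ)
  rw [ProbabilityMeasure.tendsto_iff_forall_lintegral_tendsto] at hν
  apply H.dlr_of_cont Δ inferInstance
  intro F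
  have hF : Measurable fun φ => (F φ : ℝ≥0∞) := F.continuous.measurable.coe_nnreal_ennreal
  set C : ℝ≥0∞ := edist 0 F
  have hC : C ≠ ⊤ := edist_ne_top _ _
  set h : (V → ℝ) → ℝ≥0∞ := fun η => ∫⁻ φ, F φ ∂(gam J β ρ Δ η) with hh
  have hhC : ∀ η, h η ≤ C := by
    intro η
    have := H.gam_prob Δ η
    calc h η ≤ ∫⁻ _, C ∂(gam J β ρ Δ η) := lintegral_mono fun φ => F.apply_le_edist_zero φ
      _ = C := by simp
  have hm : Measurable h := H.meas_gam Δ hF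
  have hmt : ∀ t, Measurable fun η => h (clamp ζ t η) := fun t => hm.comp (clamp_cont ζ t).measurable
  have cmp1 : ∀ (μ : Measure (V → ℝ)) (t : ℝ), ∫⁻ η, h η ∂μ ≤ ∫⁻ η, h (clamp ζ t η) ∂μ + C * μ (box ζ t)ᶜ := by
    intro μ t
    rw [← lintegral_indicator_const (box_meas ζ t).compl, ← lintegral_add_left (hmt t)]
    apply lintegral_mono
    intro η
    by_cases hη : η ∈ box ζ t
    · simp [hη, clamp_box ζ hη]
    · simp only [Set.mem_compl_iff, hη, not_false_eq_true, Set.indicator_of_mem]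
      exact (hhC η).trans le_add_self
  have cmp2 : ∀ (μ : Measure (V → ℝ)) (t : ℝ), ∫⁻ η, h (clamp ζ t η) ∂μ ≤ ∫⁻ η, h η ∂μ + C * μ (box ζ t)ᶜ := by
    intro μ t
    rw [← lintegral_indicator_const (box_meas ζ t).compl, ← lintegral_add_left hm]
    apply lintegral_mono
    intro η
    by_cases hη : η ∈ box ζ t
    · simp [hη, clamp_box ζ hη]
    · simp only [Set.mem_compl_iff, hη, not_false_eq_true, Set.indicator_of_mem]
      exact (hhC _).trans le_add_self
  have lim : ∀ t : ℝ, 1 ≤ t → Tendsto (fun Λ => ∫⁻ η, h (clamp ζ t η) ∂(gam J β ρ Λ ξ)) U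
      (nhds (∫⁻ η, h (clamp ζ t η) ∂(ν : Measure (V → ℝ)))) := by
    intro t ht
    have hc : Continuous fun η => h (clamp ζ t η) := H.gam_cont (by linarith) Δ F
    have hne : ∀ η, h (clamp ζ t η) ≠ ⊤ := fun η => ne_top_of_le_ne_top hC (hhC _)
    let F' : (V → ℝ) →ᵇ ℝ≥0 := BoundedContinuousFunction.mkOfBound
      ⟨fun η => (h (clamp ζ t η)).toNNReal, by
        exact ENNReal.continuousOn_toNNReal.comp_continuous hc hne⟩ C.toReal (by
        intro a b
        have h0 : ∀ a, ((h (clamp ζ t a)).toNNReal : ℝ) ≤ C.toReal := by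
          intro a
          exact ENNReal.toReal_mono hC (hhC _)
        have h1 := h0 a
        have h2 := h0 b
        have h3 := NNReal.coe_nonneg (h (clamp ζ t a)).toNNReal
        have h4 := NNReal.coe_nonneg (h (clamp ζ t b)).toNNReal
        rw [NNReal.dist_eq, abs_le]
        dsimp only [ContinuousMap.coe_mk]
        constructor <;> linarith)
    have hF' : ∀ η, (F' η : ℝ≥0∞) = h (clamp ζ t η) := by
      intro η
      exact ENNReal.coe_toNNReal (hne η)
    have := hν F'
    simp_rw [hF'] at this
    exact this
  have hcons : ∀ᶠ Λ in (U : Filter (Finset V)), ∫⁻ φ, F φ ∂(gam J β ρ Λ ξ) = ∫⁻ η, h η ∂(gam J β ρ Λ ξ) := by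
    apply hU
    filter_upwards [eventually_ge_atTop Δ] with Λ hΛ
    exact H.consistency hΛ hg hF
  have lF : Tendsto (fun Λ => ∫⁻ η, h η ∂(gam J β ρ Λ ξ)) U (nhds (∫⁻ φ, F φ ∂(ν : Measure (V → ℝ)))) :=
    Tendsto.congr' hcons (hν F)
  have err : Tendsto (fun t => C * ENNReal.ofReal (tl ζ D t) + C * ENNReal.ofReal (tl ζ D t)) atTop (nhds 0) := by
    have h1 : Tendsto (fun t => ENNReal.ofReal (tl ζ D t)) atTop (nhds 0) := by
      simpa using ENNReal.tendsto_ofReal (H.tl_tendsto D)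
    have h2 := ENNReal.Tendsto.const_mul h1 (Or.inr hC)
    simpa using h2.add h2
  apply le_antisymm
  · have : Tendsto (fun t => ∫⁻ η, h η ∂(ν : Measure (V → ℝ)) + (C * ENNReal.ofReal (tl ζ D t) + C * ENNReal.ofReal (tl ζ D t)))
        atTop (nhds (∫⁻ η, h η ∂(ν : Measure (V → ℝ)))) := by
      simpa using err.const_add (∫⁻ η, h η ∂(ν : Measure (V → ℝ)))
    refine ge_of_tendsto this ?_
    filter_upwards [eventually_ge_atTop 1] with t ht
    have l2 := (lim t ht).add_const (C * ENNReal.ofReal (tl ζ D t))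
    refine (le_of_tendsto_of_tendsto' lF l2 ?_).trans ?_
    · intro Λ
      refine (cmp1 _ t).trans ?_
      gcongr
      exact H.box_tail (hT Λ) ht
    · rw [← add_assoc]
      gcongr
      refine (cmp2 _ t).trans ?_
      gcongr
      exact H.box_tail hTν ht
  · have : Tendsto (fun t => ∫⁻ φ, F φ ∂(ν : Measure (V → ℝ)) + (C * ENNReal.ofReal (tl ζ D t) + C * ENNReal.ofReal (tl ζ D t)))
        atTop (nhds (∫⁻ φ, F φ ∂(ν : Measure (V → ℝ)))) := by
      simpa using err.const_add (∫⁻ φ, F φ ∂(ν : Measure (V → ℝ)))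
    refine ge_of_tendsto this ?_
    filter_upwards [eventually_ge_atTop 1] with t ht
    have l2 := lF.add_const (C * ENNReal.ofReal (tl ζ D t))
    rw [← add_assoc]
    refine (cmp1 _ t).trans ?_
    gcongr
    · refine le_of_tendsto_of_tendsto' (lim t ht) l2 ?_
      intro Λ
      refine (cmp2 _ t).trans ?_
      gcongr
      exact H.box_tail (hT Λ) ht
    · exact H.box_tail hTν ht

end
end PM

open scoped ENNReal NNReal Classical BoundedContinuousFunction

namespace PM
section
variable {V : Type*} {J g : V → V → ℝ} {β M L : ℝ} {ρ : Measure ℝ} {ζ : V → ℝ}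

lemma cont_restrictTo (Λ : Finset V) : Continuous (restrictTo Λ : (V → ℝ) → _) := by
  unfold restrictTo
  fun_prop

/-- domination on closed local upper sets -/
def CDom (μ ν : Measure (V → ℝ)) : Prop :=
  ∀ (Δ : Finset V) (S : Set (Δ → ℝ)), IsClosed S → IsUpperSet S →
    μ (restrictTo Δ ⁻¹' S) ≤ ν (restrictTo Δ ⁻¹' S)

/-- domination (reversed) on closed local lower sets -/
def CDomL (μ ν : Measure (V → ℝ)) : Prop :=
  ∀ (Δ : Finset V) (S : Set (Δ → ℝ)), IsClosed S → IsLowerSet S →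
    ν (restrictTo Δ ⁻¹' S) ≤ μ (restrictTo Δ ⁻¹' S)

lemma CDom.upper [Countable V] {μ ν : Measure (V → ℝ)} [IsProbabilityMeasure μ] [IsProbabilityMeasure ν]
    (h : CDom μ ν) {U : Set (V → ℝ)} (hU : IsUpperSet U) (mU : MeasurableSet U) : μ U ≤ ν U := by
  have : μ.InnerRegular := inferInstance
  rw [mU.measure_eq_iSup_isCompact μ]
  refine iSup_le fun K => iSup_le fun hKU => iSup_le fun hK => ?_
  let S : ∀ Δ : Finset V, Set (Δ → ℝ) := fun Δ => {s | ∃ k ∈ K, ∀ x : Δ, k x ≤ s x}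
  have hS : ∀ Δ, IsClosed (S Δ) := by
    intro Δ
    have : CompactSpace K := isCompact_iff_compactSpace.1 hK
    have h1 : IsClosed {p : K × (Δ → ℝ) | ∀ x : Δ, p.1.1 x ≤ p.2 x} := by
      rw [Set.ofPred_forall]
      apply isClosed_iInter
      intro x
      apply isClosed_le
      · exact (continuous_apply x.1).comp (continuous_subtype_val.comp continuous_fst)
      · exact (continuous_apply x).comp continuous_snd
    have h2 := isClosedMap_snd_of_compactSpace (X := K) (Y := Δ → ℝ) _ h1
    convert h2
    ext s
    simp [S]
  have hSu : ∀ Δ, IsUpperSet (S Δ) := by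
    rintro Δ s t hst ⟨k, hk, hks⟩
    exact ⟨k, hk, fun x => (hks x).trans (hst x)⟩
  have hsub : (⋂ Δ, restrictTo Δ ⁻¹' (S Δ)) ⊆ U := by
    intro φ hφ
    simp only [Set.mem_iInter, Set.mem_preimage] at hφ
    have hne : (⋂ Δ : Finset V, K ∩ {k : V → ℝ | ∀ x ∈ Δ, k x ≤ φ x}).Nonempty := by
      apply IsCompact.nonempty_iInter_of_directed_nonempty_isCompact_isClosed
      · intro A B
        refine ⟨A ∪ B, ?_, ?_⟩
        · intro k hk; exact ⟨hk.1, fun x hx => hk.2 x (Finset.mem_union_left _ hx)⟩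
        · intro k hk; exact ⟨hk.1, fun x hx => hk.2 x (Finset.mem_union_right _ hx)⟩
      · intro Δ
        obtain ⟨k, hk, h2⟩ := hφ Δ
        exact ⟨k, hk, fun x hx => h2 ⟨x, hx⟩⟩
      all_goals
        intro Δ
        have hcl : IsClosed {k : V → ℝ | ∀ x ∈ Δ, k x ≤ φ x} := by
          simp only [Set.ofPred_forall]
          apply isClosed_iInter
          intro x
          apply isClosed_iInter
          intro _
          exact isClosed_le (continuous_apply x) continuous_const
      · exact hK.inter_right hcl
      · exact hK.isClosed.inter hcl
    obtain ⟨k, hk⟩ := hne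
    simp only [Set.mem_iInter] at hk
    refine hU ?_ (hKU (hk ∅).1)
    intro x
    exact (hk {x}).2 x (Finset.mem_singleton_self x)
  have e : ν (⋂ Δ, restrictTo Δ ⁻¹' (S Δ)) = ⨅ Δ, ν (restrictTo Δ ⁻¹' (S Δ)) := by
    apply Directed.measure_iInter
    · intro Δ
      exact ((hS Δ).measurableSet.preimage (meas_restrictTo Δ)).nullMeasurableSet
    · intro A B
      refine ⟨A ∪ B, ?_, ?_⟩
      · rintro φ ⟨k, hk, h2⟩
        exact ⟨k, hk, fun x => h2 ⟨x.1, Finset.mem_union_left _ x.2⟩⟩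
      · rintro φ ⟨k, hk, h2⟩
        exact ⟨k, hk, fun x => h2 ⟨x.1, Finset.mem_union_right _ x.2⟩⟩
    · exact ⟨∅, measure_ne_top _ _⟩
  refine le_trans ?_ (measure_mono hsub)
  rw [e]
  refine le_iInf fun Δ => ?_
  refine le_trans (measure_mono ?_) (h Δ (S Δ) (hS Δ) (hSu Δ))
  intro k hk
  exact ⟨k, hk, fun x => le_rfl⟩

lemma CDom.stoch [Countable V] {μ ν : Measure (V → ℝ)} [IsProbabilityMeasure μ] [IsProbabilityMeasure ν]
    (h : CDom μ ν) : StochDom μ ν := by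
  rintro f hf hmono ⟨K, hK⟩
  have hi : ∀ (κ : Measure (V → ℝ)) [IsProbabilityMeasure κ], Integrable f κ := by
    intro κ _
    exact Integrable.of_bound hf.aestronglyMeasurable K (Eventually.of_forall hK)
  have h0 : ∀ φ, 0 ≤ f φ + K := fun φ => by linarith [(abs_le.1 (hK φ)).1]
  have e : ∀ (κ : Measure (V → ℝ)) [IsProbabilityMeasure κ], ENNReal.ofReal (∫ φ, f φ ∂κ + K) =
      ∫⁻ t in Set.Ioi (0:ℝ), κ {φ | t ≤ f φ + K} := by
    intro κ _
    have : ∫ φ, f φ ∂κ + K = ∫ φ, (f φ + K) ∂κ := by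
      rw [integral_add (hi κ) (integrable_const _)]; simp
    have hik : Integrable (fun φ => f φ + K) κ := (hi κ).add (integrable_const _)
    rw [this, ofReal_integral_eq_lintegral_ofReal hik (Eventually.of_forall h0),
      lintegral_eq_lintegral_meas_le _ (Eventually.of_forall h0) (by fun_prop)]
  have h1 : ENNReal.ofReal (∫ φ, f φ ∂μ + K) ≤ ENNReal.ofReal (∫ φ, f φ ∂ν + K) := by
    rw [e μ, e ν]
    apply lintegral_mono
    intro t
    apply h.upper
    · intro a b hab ha
      have := hmono hab
      simp only [Set.mem_ofPred_eq] at ha ⊢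
      linarith
    · exact measurableSet_le measurable_const (by fun_prop)
  have h2 : 0 ≤ ∫ φ, f φ ∂ν + K := by
    have : ∫ φ, f φ ∂ν + K = ∫ φ, (f φ + K) ∂ν := by
      rw [integral_add (hi ν) (integrable_const _)]; simp
    rw [this]
    exact integral_nonneg h0
  have := (ENNReal.ofReal_le_ofReal_iff h2).1 h1
  linarith

lemma CDomL.stoch [Countable V] {μ ν : Measure (V → ℝ)} [IsProbabilityMeasure μ] [IsProbabilityMeasure ν]
    (h : CDomL μ ν) : StochDom μ ν := by
  have mn : Measurable (fun φ : V → ℝ => -φ) := measurable_neg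
  have p1 := Measure.isProbabilityMeasure_map (μ := μ) mn.aemeasurable
  have p2 := Measure.isProbabilityMeasure_map (μ := ν) mn.aemeasurable
  have hd : CDom (ν.map fun φ => -φ) (μ.map fun φ => -φ) := by
    intro Δ S hS hu
    rw [Measure.map_apply mn (hS.measurableSet.preimage (meas_restrictTo Δ)),
      Measure.map_apply mn (hS.measurableSet.preimage (meas_restrictTo Δ))]
    have := h Δ ((fun s => -s) ⁻¹' S) (hS.preimage continuous_neg) (by
      intro a b hab ha
      exact hu (neg_le_neg hab) ha)
    exact this
  rintro f hf hmono ⟨K, hK⟩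
  have := hd.stoch (fun φ => -f (-φ)) (by fun_prop) (by
    intro a b hab
    exact neg_le_neg (hmono (neg_le_neg hab))) ⟨K, fun φ => by rw [abs_neg]; exact hK _⟩
  rw [integral_map mn.aemeasurable (Measurable.aestronglyMeasurable (by fun_prop)),
    integral_map mn.aemeasurable (Measurable.aestronglyMeasurable (by fun_prop))] at this
  simp only [neg_neg, integral_neg] at this
  linarith

/-- antisymmetry -/
lemma stoch_antisymm [Countable V] {μ ν : Measure (V → ℝ)} [IsProbabilityMeasure μ] [IsProbabilityMeasure ν]
    (h1 : StochDom μ ν) (h2 : StochDom ν μ) : μ = ν := by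
  have hle : ∀ (μ ν : Measure (V → ℝ)) [IsProbabilityMeasure μ] [IsProbabilityMeasure ν], StochDom μ ν →
      ∀ U : Set (V → ℝ), IsUpperSet U → MeasurableSet U → μ U ≤ ν U := by
    intro μ ν _ _ h U hU mU
    have := h (U.indicator 1) (measurable_one.indicator mU) (by
      intro a b hab
      by_cases ha : a ∈ U
      · simp [ha, hU hab ha]
      · simp only [ha, not_false_eq_true, Set.indicator_of_notMem]
        exact Set.indicator_nonneg (fun _ _ => by simp) _) ⟨1, fun φ => by
          by_cases hφ : φ ∈ U <;> simp [hφ]⟩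
    rw [integral_indicator_one mU, integral_indicator_one mU] at this
    exact (ENNReal.toReal_le_toReal (measure_ne_top _ _) (measure_ne_top _ _)).1 this
  let C : Set (Set (V → ℝ)) := {s | ∃ (Δ : Finset V) (a : V → ℝ), s = {φ | ∀ x ∈ Δ, a x ≤ φ x}}
  have hup : ∀ s ∈ C, IsUpperSet s ∧ MeasurableSet s := by
    rintro s ⟨Δ, a, rfl⟩
    constructor
    · intro φ ψ h hφ x hx
      exact (hφ x hx).trans (h x)
    · simp only [Set.ofPred_forall]
      refine MeasurableSet.iInter fun x => MeasurableSet.iInter fun _ => ?_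
      exact measurableSet_le measurable_const (by fun_prop)
  refine ext_of_generate_finite C ?_ ?_ ?_ ?_
  · apply le_antisymm
    · rw [MeasurableSpace.pi]
      apply iSup_le
      intro x
      rw [(by infer_instance : BorelSpace ℝ).measurable_eq, borel_eq_generateFrom_Ici, MeasurableSpace.comap_generateFrom]
      apply MeasurableSpace.generateFrom_mono
      rintro s ⟨_, ⟨a, rfl⟩, rfl⟩
      refine ⟨{x}, fun _ => a, ?_⟩
      ext φ; simp
    · apply MeasurableSpace.generateFrom_le
      intro s hs
      exact (hup s hs).2
  · rintro s ⟨A, a, rfl⟩ t ⟨B, b, rfl⟩ -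
    refine ⟨A ∪ B, fun x => if x ∈ A then (if x ∈ B then max (a x) (b x) else a x) else b x, ?_⟩
    ext φ
    simp only [Set.mem_inter_iff, Set.mem_ofPred_eq, Finset.mem_union]
    constructor
    · rintro ⟨h1, h2⟩ x hx
      split_ifs with hA hB
      · exact max_le (h1 x hA) (h2 x hB)
      · exact h1 x hA
      · exact h2 x (hx.resolve_left hA)
    · intro h
      constructor
      · intro x hx
        have := h x (Or.inl hx)
        rw [if_pos hx] at this
        split_ifs at this
        · exact (le_max_left _ _).trans this
        · exact this
      · intro x hx
        have := h x (Or.inr hx)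
        rw [if_pos hx] at this
        split_ifs at this
        · exact (le_max_right _ _).trans this
        · exact this
  · intro s hs
    exact le_antisymm (hle μ ν h1 s (hup s hs).1 (hup s hs).2) (hle ν μ h2 s (hup s hs).1 (hup s hs).2)
  · simp

end
end PM

open scoped ENNReal NNReal Classical BoundedContinuousFunction

namespace PM
section
variable {V : Type*} {J g : V → V → ℝ} {β M L : ℝ} {ρ : Measure ℝ} {ζ : V → ℝ}

/-- marginal DLR equations -/
def MD (J : V → V → ℝ) (β : ℝ) (ρ : Measure ℝ) (ν : Measure (V → ℝ)) : Prop :=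
  ∀ (Λ : Finset V) (s : Set (Λ → ℝ)), MeasurableSet s →
    ν (restrictTo Λ ⁻¹' s) = ∫⁻ η, gam J β ρ Λ η (restrictTo Λ ⁻¹' s) ∂ν

lemma gibbs_apply (Λ : Finset V) (η : V → ℝ) {s : Set (Λ → ℝ)} (hs : MeasurableSet s) :
    gibbs J β ρ Λ η s = gam J β ρ Λ η (restrictTo Λ ⁻¹' s) := by
  rw [← gam_map, Measure.map_apply (meas_restrictTo Λ) hs]

lemma MD_of_dlr {ν : Measure (V → ℝ)} (h : ∀ Δ, DLR J β ρ Δ ν) : MD J β ρ ν := by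
  intro Λ s hs
  have hm : MeasurableSet (restrictTo Λ ⁻¹' s) := hs.preimage (meas_restrictTo Λ)
  have := h Λ ((restrictTo Λ ⁻¹' s).indicator 1) (measurable_one.indicator hm)
  simpa only [lintegral_indicator_one hm] using this

lemma Hyp.MD_of_gibbs [Countable V] (H : Hyp J g β M L ρ ζ) {ν : Measure (V → ℝ)} [IsProbabilityMeasure ν]
    (h : IsGibbsMeasure J β ρ ν) : MD J β ρ ν := by
  intro Λ s hs
  have hm : MeasurableSet (restrictTo Λ ⁻¹' s) := hs.preimage (meas_restrictTo Λ)
  have hp := H.gam_prob Λ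
  have h1 := h Λ (s.indicator 1) (measurable_one.indicator hs) ⟨1, fun φ => by
          by_cases hφ : φ ∈ s <;> simp [hφ]⟩
  have h2 : ∫ φ, s.indicator 1 (restrictTo Λ φ) ∂ν = ν.real (restrictTo Λ ⁻¹' s) := by
    rw [← integral_indicator_one hm]; rfl
  rw [h2] at h1
  simp_rw [integral_indicator_one hs, Measure.real, gibbs_apply Λ _ hs] at h1
  have hme : Measurable fun η => gam J β ρ Λ η (restrictTo Λ ⁻¹' s) := by
    have := H.meas_gam Λ (F := (restrictTo Λ ⁻¹' s).indicator 1) (measurable_one.indicator hm)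
    simpa only [lintegral_indicator_one hm] using this
  rw [integral_toReal hme.aemeasurable (Eventually.of_forall fun η => measure_lt_top _ _)] at h1
  refine (ENNReal.toReal_eq_toReal_iff' (measure_ne_top _ _) ?_).1 h1
  refine ne_top_of_le_ne_top (b := 1) (by simp) ?_
  calc _ ≤ ∫⁻ _, 1 ∂ν := lintegral_mono fun η => prob_le_one
    _ = 1 := by simp

lemma Hyp.gibbs_of_MD [Countable V] (H : Hyp J g β M L ρ ζ) {ν : Measure (V → ℝ)} [IsProbabilityMeasure ν]
    (h : MD J β ρ ν) : IsGibbsMeasure J β ρ ν := by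
  rintro Λ f hf ⟨K, hK⟩
  have hmk : Measurable fun η => gibbs J β ρ Λ η := by
    simp_rw [← gam_map Λ]
    exact (Measure.measurable_map _ (meas_restrictTo Λ)).comp (H.gam_kernel_meas Λ)
  let κ : ProbabilityTheory.Kernel (V → ℝ) (Λ → ℝ) := ⟨fun η => gibbs J β ρ Λ η, hmk⟩
  have hκ : ProbabilityTheory.IsMarkovKernel κ := ⟨fun η => H.gibbs_prob Λ η⟩
  have e : ν.map (restrictTo Λ) = (κ.comp (ProbabilityTheory.Kernel.const Unit ν)) () := by
    ext s hs
    rw [Measure.map_apply (meas_restrictTo Λ) hs, h Λ s hs, ProbabilityTheory.Kernel.comp_apply' _ _ _ hs]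
    simp only [ProbabilityTheory.Kernel.const_apply]
    apply lintegral_congr
    intro η
    exact (gibbs_apply Λ η hs).symm
  have e1 : ∫ φ, f (restrictTo Λ φ) ∂ν = ∫ s, f s ∂(ν.map (restrictTo Λ)) := by
    rw [integral_map (meas_restrictTo Λ).aemeasurable hf.aestronglyMeasurable]
  rw [e1, e, ProbabilityTheory.Kernel.integral_comp]
  · rfl
  · exact Integrable.of_bound hf.aestronglyMeasurable K (Eventually.of_forall hK)

lemma MD.core [Countable V] {ν : Measure (V → ℝ)} [IsProbabilityMeasure ν] (H : Hyp J g β M L ρ ζ)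
    (h : MD J β ρ ν) {Δ Λ : Finset V} (hΔ : Δ ⊆ Λ) {S : Set (Δ → ℝ)} (hS : MeasurableSet S) (b : ℝ≥0∞)
    (hb : ∀ η : V → ℝ, (∀ x, |η x| ≤ ζ x) → gam J β ρ Λ η (restrictTo Δ ⁻¹' S) ≤ b) :
    ν (restrictTo Δ ⁻¹' S) ≤ b + ∑' y : {y // y ∉ Λ}, ν {φ | ζ y < |φ y|} := by
  let q : (Λ → ℝ) → (Δ → ℝ) := fun s x => s ⟨x.1, hΔ x.2⟩
  have hq : Measurable q := by fun_prop
  have e : (restrictTo Δ ⁻¹' S : Set (V → ℝ)) = restrictTo Λ ⁻¹' (q ⁻¹' S) := rfl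
  have hp := H.gam_prob Λ
  set E : Set (V → ℝ) := ⋃ y : {y // y ∉ Λ}, {φ | ζ y < |φ y|} with hE
  have mE : MeasurableSet E := by
    refine MeasurableSet.iUnion fun y => ?_
    exact measurableSet_lt measurable_const (by fun_prop)
  calc ν (restrictTo Δ ⁻¹' S) = ∫⁻ η, gam J β ρ Λ η (restrictTo Δ ⁻¹' S) ∂ν := by
        rw [e]; exact h Λ _ (hS.preimage hq)
    _ ≤ ∫⁻ η, b + E.indicator 1 η ∂ν := by
        apply lintegral_mono
        intro η
        by_cases hη : η ∈ E
        · simp only [hη, Set.indicator_of_mem, Pi.one_apply]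
          exact prob_le_one.trans le_add_self
        · simp only [hη, not_false_eq_true, Set.indicator_of_notMem, add_zero]
          have h1 : ∀ y, y ∉ Λ → |η y| ≤ ζ y := by
            intro y hy
            by_contra hc
            apply hη
            rw [hE, Set.mem_iUnion]
            exact ⟨⟨y, hy⟩, not_le.1 hc⟩
          have h2 : gam J β ρ Λ η = gam J β ρ Λ (clamp ζ 1 η) := by
            apply gam_congr
            intro y hy
            have := abs_le.1 (h1 y hy)
            unfold clamp
            rw [one_mul, min_eq_right this.2, max_eq_right this.1]
          rw [h2]
          apply hb
          intro x
          simpa using clamp_le ζ (t := 1) (fun y => by simpa using (H.zpos y).le) η x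
    _ = b + ν E := by
        rw [lintegral_add_left measurable_const, lintegral_indicator_one mE]; simp
    _ ≤ _ := by
        gcongr
        exact measure_iUnion_le _

lemma ultra_limit {ι : Type*} (U : Ultrafilter ι) {u e : ι → ℝ≥0∞} {a b : ℝ≥0∞} (h1 : limsup u U ≤ b)
    (he : Tendsto e U (nhds 0)) (h : ∀ᶠ i in (U : Filter ι), a ≤ u i + e i) : a ≤ b := by
  obtain ⟨l, -, hl⟩ := isCompact_univ.ultrafilter_le_nhds (U.map u) (by simp)
  have hl' : Tendsto u U (nhds l) := hl
  rw [hl'.limsup_eq] at h1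
  have h2 := hl'.add he
  rw [add_zero] at h2
  exact (ge_of_tendsto h2 h).trans h1

lemma Hyp.good_one (H : Hyp J g β M L ρ ζ) {ξ : V → ℝ} (h : ∀ x, |ξ x| ≤ ζ x) : Good J ξ :=
  H.good_le (t := 1) (by simpa using h)

lemma Hyp.dom [Countable V] (H : Hyp J g β M L ρ ζ) {ν : Measure (V → ℝ)} [IsProbabilityMeasure ν]
    (h : MD J β ρ ν) (hs : ∑' x, ν {φ | ζ x < |φ x|} ≠ ⊤)
    {U : Ultrafilter (Finset V)} (hU : (U : Filter (Finset V)) ≤ atTop)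
    {νp : ProbabilityMeasure (V → ℝ)} (hν : Tendsto (H.P ζ) U (nhds νp)) : CDom ν (νp : Measure (V → ℝ)) := by
  intro Δ S hS hu
  have hl := ProbabilityMeasure.limsup_measure_closed_le_of_tendsto hν (hS.preimage (cont_restrictTo Δ))
  refine ultra_limit U hl ((ENNReal.tendsto_tsum_compl_atTop_zero hs).mono_left hU) ?_
  apply hU
  filter_upwards [eventually_ge_atTop Δ] with Λ hΛ
  refine h.core H hΛ hS.measurableSet _ ?_
  intro η hη
  refine H.gam_mono Λ (H.good_one hη) (H.good_one fun x => (abs_of_pos (H.zpos x)).le)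
    (fun y _ => (abs_le.1 (hη y)).2) ?_ (hS.measurableSet.preimage (meas_restrictTo Δ))
  intro a b hab ha
  exact hu (fun x => hab x.1) ha

lemma Hyp.domL [Countable V] (H : Hyp J g β M L ρ ζ) {ν : Measure (V → ℝ)} [IsProbabilityMeasure ν]
    (h : MD J β ρ ν) (hs : ∑' x, ν {φ | ζ x < |φ x|} ≠ ⊤)
    {U : Ultrafilter (Finset V)} (hU : (U : Filter (Finset V)) ≤ atTop)
    {νp : ProbabilityMeasure (V → ℝ)} (hν : Tendsto (H.P (-ζ)) U (nhds νp)) : CDomL (νp : Measure (V → ℝ)) ν := by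
  intro Δ S hS hu
  have hl := ProbabilityMeasure.limsup_measure_closed_le_of_tendsto hν (hS.preimage (cont_restrictTo Δ))
  refine ultra_limit U hl ((ENNReal.tendsto_tsum_compl_atTop_zero hs).mono_left hU) ?_
  apply hU
  filter_upwards [eventually_ge_atTop Δ] with Λ hΛ
  refine h.core H hΛ hS.measurableSet _ ?_
  intro η hη
  have mS : MeasurableSet (restrictTo Δ ⁻¹' S : Set (V → ℝ)) := hS.measurableSet.preimage (meas_restrictTo Δ)
  have h1 := H.gam_mono Λ (η := -ζ) (ξ := η) (H.good_one fun x => by simp [abs_of_pos (H.zpos x)]) (H.good_one hη)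
    (fun y _ => (abs_le.1 (hη y)).1) (U := (restrictTo Δ ⁻¹' S)ᶜ) (by
      intro a b hab ha hb
      exact ha (hu (fun x => hab x.1) hb)) mS.compl
  have := H.gam_prob Λ η
  have := H.gam_prob Λ (-ζ)
  rw [← compl_compl (restrictTo Δ ⁻¹' S), prob_compl_eq_one_sub mS.compl]
  change _ ≤ gam J β ρ Λ (-ζ) _
  rw [prob_compl_eq_one_sub mS.compl]
  exact tsub_le_tsub_left h1 1

end
end PM

namespace PM
section
open scoped NNReal BoundedContinuousFunction
variable {V : Type*} {J g : V → V → ℝ} {β M L : ℝ} {ρ : Measure ℝ} {ζ : V → ℝ}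

lemma em_mono {μ : Measure (V → ℝ)} {A B : ℝ} (h : A ≤ B) (y : V) : em μ A y ≤ em μ B y := by
  refine lintegral_mono fun φ => ENNReal.ofReal_le_ofReal (Real.exp_le_exp.2 ?_)
  nlinarith [sq_nonneg (φ y)]

lemma Hyp.sum_tail (H : Hyp J g β M L ρ ζ) {D : ℝ} {μ : Measure (V → ℝ)}
    (h : ∀ y, em μ 3 y ≤ ENNReal.ofReal (Real.exp (D + ζ y ^ 2))) :
    ∑' x, μ {φ | ζ x < |φ x|} ≠ ⊤ := by
  have h1 : ∀ x, μ {φ | ζ x < |φ x|} ≤ ENNReal.ofReal (Real.exp (D - 2 * 1 ^ 2 * ζ x ^ 2)) := by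
    intro x
    have := em_tail (le_refl 3) (H.zpos x) (le_refl 1) (h x)
    simpa only [one_mul] using this
  refine ne_top_of_le_ne_top ?_ (ENNReal.tsum_le_tsum h1)
  rw [← ENNReal.ofReal_tsum_of_nonneg (fun _ => (Real.exp_pos _).le) (H.tl_summable D le_rfl)]
  exact ENNReal.ofReal_ne_top

lemma Hyp.ultra [Countable V] (H : Hyp J g β M L ρ ζ) {a : ℝ} (ha : 3 * (β * M) / 2 ≤ a) {ξ : V → ℝ}
    (hξ : ∀ x, |ξ x| ≤ ζ x) (U : Ultrafilter (Finset V)) (hU : (U : Filter (Finset V)) ≤ atTop) :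
    ∃ ν : ProbabilityMeasure (V → ℝ), Tendsto (H.P ξ) U (nhds ν) ∧ MD J β ρ (ν : Measure (V → ℝ)) ∧
      IsRegularWRT (rhoMod ρ a) (ν : Measure (V → ℝ)) ∧
      ∑' x, (ν : Measure (V → ℝ)) {φ | ζ x < |φ x|} ≠ ⊤ := by
  have hbM : 0 ≤ β * M := mul_nonneg H.bnn H.Mpos.le
  obtain ⟨D, hD, hb1, hb2⟩ := H.bounds (A := β * M / 2 + 3) (by linarith)
  have hT : ∀ Λ, Tail ζ D (gam J β ρ Λ ξ) := fun Λ =>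
    H.gam_tail (A := β * M / 2 + 3) (by linarith) hξ (hb1 Λ ξ hξ)
  obtain ⟨ν, hν⟩ := H.exists_lim hT U
  have he : ∀ y, em (ν : Measure (V → ℝ)) (β * M / 2 + 3) y ≤ ENNReal.ofReal (Real.exp (D + ζ y ^ 2)) := fun y =>
    H.lim_em hU hν fun Λ hy => hb1 Λ ξ hξ y hy
  have hTν : Tail ζ D (ν : Measure (V → ℝ)) := fun t ht y => em_tail (by linarith) (H.zpos y) ht (he y)
  have hd := H.lim_dlr hξ hT hU hν hTν
  have he2 := hb2 ν inferInstance (fun x => hd {x}) D hD he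
  refine ⟨ν, hν, MD_of_dlr hd, H.regular inferInstance hd hD (fun y => (em_mono (by linarith) y).trans (he2 y)) ha, ?_⟩
  exact H.sum_tail (D := D) fun y => (em_mono (by linarith) y).trans (he y)

lemma Hyp.plus [Countable V] (H : Hyp J g β M L ρ ζ) {a : ℝ} (ha : 3 * (β * M) / 2 ≤ a) :
    ∃ ν : ProbabilityMeasure (V → ℝ), Tendsto (H.P ζ) atTop (nhds ν) ∧
      IsGibbsMeasure J β ρ (ν : Measure (V → ℝ)) ∧
      IsRegularWRT (rhoMod ρ a) (ν : Measure (V → ℝ)) ∧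
      ∀ μ : Measure (V → ℝ), IsProbabilityMeasure μ → MD J β ρ μ → ∑' x, μ {φ | ζ x < |φ x|} ≠ ⊤ → 
        StochDom μ ν := by
  have hz : ∀ x, |ζ x| ≤ ζ x := fun x => (abs_of_pos (H.zpos x)).le
  have hU := Ultrafilter.of_le (atTop : Filter (Finset V))
  obtain ⟨ν, h1, h2, h3, h4⟩ := H.ultra ha hz _ hU
  refine ⟨ν, ?_, H.gibbs_of_MD h2, h3, fun μ _ hm hs => (H.dom hm hs hU h1).stoch⟩
  rw [tendsto_iff_ultrafilter]
  intro U' hU'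
  obtain ⟨ν', h1', h2', h3', h4'⟩ := H.ultra ha hz U' hU'
  have : (ν : Measure (V → ℝ)) = ν' :=
    stoch_antisymm (H.dom h2 h4 hU' h1').stoch (H.dom h2' h4' hU h1).stoch
  rw [show ν = ν' from Subtype.ext this]
  exact h1'

lemma Hyp.minus [Countable V] (H : Hyp J g β M L ρ ζ) {a : ℝ} (ha : 3 * (β * M) / 2 ≤ a) :
    ∃ ν : ProbabilityMeasure (V → ℝ), Tendsto (H.P (-ζ)) atTop (nhds ν) ∧
      IsGibbsMeasure J β ρ (ν : Measure (V → ℝ)) ∧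
      IsRegularWRT (rhoMod ρ a) (ν : Measure (V → ℝ)) ∧
      ∀ μ : Measure (V → ℝ), IsProbabilityMeasure μ → MD J β ρ μ → ∑' x, μ {φ | ζ x < |φ x|} ≠ ⊤ → 
        StochDom ν μ := by
  have hz : ∀ x, |(-ζ) x| ≤ ζ x := fun x => by simp [abs_of_pos (H.zpos x)]
  have hU := Ultrafilter.of_le (atTop : Filter (Finset V))
  obtain ⟨ν, h1, h2, h3, h4⟩ := H.ultra ha hz _ hU
  refine ⟨ν, ?_, H.gibbs_of_MD h2, h3, fun μ _ hm hs => (H.domL hm hs hU h1).stoch⟩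
  rw [tendsto_iff_ultrafilter]
  intro U' hU'
  obtain ⟨ν', h1', h2', h3', h4'⟩ := H.ultra ha hz U' hU'
  have : (ν : Measure (V → ℝ)) = ν' :=
    stoch_antisymm (H.domL h2' h4' hU h1).stoch (H.domL h2 h4 hU' h1').stoch
  rw [show ν = ν' from Subtype.ext this]
  exact h1'

lemma Hyp.reg_sum [Countable V] (H : Hyp J g β M L ρ ζ) {a : ℝ} {μ : Measure (V → ℝ)}
    (h : IsRegularWRT (rhoMod ρ a) μ) : ∑' x, μ {φ | ζ x < |φ x|} ≠ ⊤ := by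
  obtain ⟨B, hB, h⟩ := h
  have hf := H.fin_rhoMod a
  set K : ℝ≥0∞ := ENNReal.ofReal (Real.exp B) * (((rhoMod ρ a) Set.univ)⁻¹ * mo ρ (a + 3)) with hK
  have hu : (rhoMod ρ a) Set.univ = mo ρ a := by
    rw [rhoMod, withDensity_apply _ MeasurableSet.univ, Measure.restrict_univ]; rfl
  have hKt : K ≠ ⊤ := by
    refine ENNReal.mul_ne_top ENNReal.ofReal_ne_top (ENNReal.mul_ne_top ?_ (H.mo_ne_top _))
    rw [hu]
    exact ENNReal.inv_ne_top.2 (H.mo_ne_zero _)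
  have hKe : ∀ y, em μ 3 y ≤ K := by
    intro y
    have hm : Measurable fun u : ℝ => ENNReal.ofReal (Real.exp (3 * u ^ 2)) := by fun_prop
    have e1 : em μ 3 y = ∫⁻ ψ, ENNReal.ofReal (Real.exp (3 * ψ ⟨y, Finset.mem_singleton_self y⟩ ^ 2))
        ∂(μ.map (restrictTo {y})) := by
      rw [lintegral_map (by fun_prop) (meas_restrictTo _)]; rfl
    rw [e1]
    refine (lintegral_mono' (h {y}) le_rfl).trans ?_
    rw [lintegral_smul_measure, prodN, lintegral_smul_measure]
    simp only [smul_eq_mul, Finset.card_singleton, Nat.cast_one, mul_one, hK]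
    gcongr
    · rw [Measure.pi_univ]; simp
    · have := pi_lint_prodF (rhoMod ρ a) {y} (fun _ u => ENNReal.ofReal (Real.exp (3 * u ^ 2))) (fun _ => hm)
      have e2 : ∀ ψ : ({y} : Finset V) → ℝ, ∏ x, ENNReal.ofReal (Real.exp (3 * ψ x ^ 2)) =
        ENNReal.ofReal (Real.exp (3 * ψ ⟨y, Finset.mem_singleton_self y⟩ ^ 2)) := by
        intro ψ
        rw [Fintype.prod_eq_single ⟨y, Finset.mem_singleton_self y⟩]
        rintro ⟨x, hx⟩ hne
        exact absurd (Subtype.ext (Finset.mem_singleton.1 hx)) hne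
      simp only [e2] at this
      rw [this]
      simp only [Finset.prod_const, Finset.card_univ, Fintype.card_coe, Finset.card_singleton, pow_one]
      rw [rhoMod, lintegral_withDensity_eq_lintegral_mul _ (by fun_prop) hm]
      refine lintegral_mono fun u => ?_
      simp only [Pi.mul_apply]
      rw [← ENNReal.ofReal_mul (Real.exp_pos _).le, ← Real.exp_add, add_mul]
  refine H.sum_tail (D := K.toReal) fun y => (hKe y).trans ?_
  rw [← ENNReal.ofReal_toReal hKt]
  apply ENNReal.ofReal_le_ofReal
  rw [ENNReal.toReal_ofReal ENNReal.toReal_nonneg]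
  have h1 := Real.add_one_le_exp (K.toReal + ζ y ^ 2)
  nlinarith [sq_nonneg (ζ y)]

lemma Hyp.converges [Countable V] (H : Hyp J g β M L ρ ζ) {ξ η : V → ℝ} (o : V)
    (he : ∀ x, x ≠ o → ξ x = η x)
    {ν : ProbabilityMeasure (V → ℝ)} (hν : Tendsto (H.P ξ) atTop (nhds ν)) :
    ConvergesTo J β ρ η (ν : Measure (V → ℝ)) := by
  intro Λs hmono hex Λ' F hF hK
  obtain ⟨K, hK⟩ := hK
  have ht : Tendsto Λs atTop atTop := tendsto_atTop_finset_of_monotone hmono hex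
  have h1 := (ProbabilityMeasure.tendsto_iff_forall_integral_tendsto.1 (hν.comp ht))
    (BoundedContinuousFunction.ofNormedAddCommGroup (fun φ => F (restrictTo Λ' φ))
      (hF.comp (cont_restrictTo Λ')) K (fun φ => hK _))
  refine Tendsto.congr' ?_ h1
  filter_upwards [ht.eventually (eventually_ge_atTop Λ'), ht.eventually (eventually_ge_atTop {o})] with i hi ho
  have hi' : Λ' ⊆ Λs i := hi
  rw [dif_pos hi', marg]
  have hm : Measurable (fun (φ : Λs i → ℝ) (x : Λ') => φ ⟨x.1, hi' x.2⟩) := by fun_prop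
  have hoo : o ∈ Λs i := ho (Finset.mem_singleton_self o)
  rw [integral_map hm.aemeasurable hF.aestronglyMeasurable,
    ← gibbs_congr (J := J) (β := β) (ρ := ρ) (Λ := Λs i) (ξ := ξ) (η := η) (fun y hy => he y (fun h => hy (h ▸ hoo))),
    ← gam_map]
  have hFm : Measurable fun φ : Λs i → ℝ => F (fun x => φ ⟨x.1, hi' x.2⟩) := hF.measurable.comp hm
  rw [integral_map (meas_restrictTo _).aemeasurable hFm.aestronglyMeasurable]
  rfl
end
end PM

namespace PM
section
variable {V : Type*} (G : SimpleGraph V) (o : V)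

/-- ball size -/
noncomputable def bs (n : ℕ) : ℕ := ({y : V | G.dist o y ≤ n}).ncard

variable {G}

lemma ball_finite (hconn : G.Connected) [∀ x : V, Fintype (G.neighborSet x)] (n : ℕ) :
    ({y : V | G.dist o y ≤ n}).Finite := by
  induction n with
  | zero =>
    refine (Set.finite_singleton o).subset fun y hy => ?_
    have : G.dist o y = 0 := Nat.le_zero.1 hy
    exact ((hconn.dist_eq_zero_iff).1 this).symm
  | succ n ih =>
    refine (ih.union (ih.biUnion fun x _ => (G.neighborSet x).toFinite)).subset fun y hy => ?_
    rcases Nat.lt_or_ge n (G.dist o y) with h | h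
    · right
      have hd : G.dist o y = n + 1 := le_antisymm hy h
      obtain ⟨p, hp⟩ := hconn.exists_walk_length_eq_dist o y
      have hnn : ¬ p.Nil := by
        intro hnil
        have := SimpleGraph.Walk.length_eq_zero_iff.2 hnil
        omega
      have hadj := p.adj_penultimate hnn
      have hle : G.dist o p.penultimate ≤ n := by
        have := SimpleGraph.dist_le p.dropLast
        have h2 := p.length_dropLast_add_one hnn
        omega
      exact Set.mem_biUnion hle hadj
    · left; exact h

lemma bs_mono (hconn : G.Connected) [∀ x : V, Fintype (G.neighborSet x)] : Monotone (bs G o) := by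
  intro m n h
  exact Set.ncard_le_ncard (fun y (hy : _ ≤ _) => (hy.trans h : _ ≤ _)) (ball_finite o hconn n)

lemma bs_one [Infinite V] (hconn : G.Connected) [∀ x : V, Fintype (G.neighborSet x)] : 2 ≤ bs G o 1 := by
  obtain ⟨x, hx⟩ := exists_ne o
  obtain ⟨p, hp⟩ := hconn.exists_walk_length_eq_dist o x
  have hnn : ¬ p.Nil := fun h => hx h.eq.symm
  have hadj := p.adj_snd hnn
  have : ({o, p.snd} : Set V) ⊆ {y | G.dist o y ≤ 1} := by
    rintro y (rfl | rfl)
    · simp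
    · exact (SimpleGraph.dist_eq_one_iff_adj.2 hadj).le
  have h2 := Set.ncard_le_ncard this (ball_finite o hconn 1)
  rwa [Set.ncard_pair hadj.ne] at h2

lemma bs_sum [Infinite V] (hconn : G.Connected) [∀ x : V, Fintype (G.neighborSet x)] :
    Summable fun x => ((bs G o (max (G.dist o x) 1) : ℝ) ^ 2)⁻¹ := by
  have hs : Summable fun n : ℕ => ((n : ℝ) ^ 2)⁻¹ := Real.summable_nat_pow_inv.2 (by norm_num)
  refine summable_of_sum_le (c := ∑' n : ℕ, ((n : ℝ) ^ 2)⁻¹) (fun x => by positivity) fun F => ?_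
  have key : ∑ x ∈ F, ((bs G o (max (G.dist o x) 1) : ℝ) ^ 2)⁻¹ ≤ ∑ n ∈ Finset.range (F.card + 1), ((n : ℝ) ^ 2)⁻¹ := by
    induction F using Finset.induction_on_max_value (fun x => G.dist o x) with
    | empty => simp
    | insert a s has hmax ih =>
      rw [Finset.sum_insert has, Finset.card_insert_of_notMem has, Finset.sum_range_succ _ (s.card + 1), add_comm]
      refine add_le_add ih ?_
      have h1 : s.card + 1 ≤ bs G o (max (G.dist o a) 1) := by
        rw [← Finset.card_insert_of_notMem has, ← Set.ncard_coe_finset]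
        refine Set.ncard_le_ncard ?_ (ball_finite o hconn _)
        intro y hy
        rcases Finset.mem_insert.1 (Finset.mem_coe.1 hy) with rfl | hy
        · exact le_max_left (G.dist o y) 1
        · exact (hmax y hy).trans (le_max_left (G.dist o a) 1)
      have h2 : ((s.card + 1 : ℕ) : ℝ) ≤ bs G o (max (G.dist o a) 1) := by exact_mod_cast h1
      have h3 : (0 : ℝ) < ((s.card + 1 : ℕ) : ℝ) := by positivity
      gcongr
  exact key.trans (hs.sum_le_tsum _ fun _ _ => by positivity)
end
end PM

/-- Proposition `prop: maximal b.c`: existence and extremality of the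
plus and minus measures. Under reasonable ferromagnetic interactions on an infinite
connected locally finite graph, with `f(k^{-r}) ≥ c₀ √(log|B_{k+j}(o)|/log|B_j(o)|)`,
the finite-volume measures with boundary conditions `ξ⁺_x = √(log|B_{d(o,x)}(o)|)`
(resp. `ξ⁻ = -ξ⁺`) converge to a `(2βM_f/c)`-regular Gibbs measure `ν⁺` (resp. `ν⁻`),
and every `a`-regular Gibbs measure `ν` satisfies `ν⁻ ⪯ ν ⪯ ν⁺`. -/
theorem stmt13 {V : Type*} [Countable V] (G : SimpleGraph V) [Infinite V]
    (hconn : G.Connected) [∀ x : V, Fintype (G.neighborSet x)] (o : V)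
    (J : V → V → ℝ) (f : ℝ → ℝ) (δf Mf r c : ℝ)
    (hδf : 0 < δf) (hMf : 0 < Mf) (hr : 0 < r) (hc : 0 < c) (hc1 : c < 1)
    (hJsymm : ∀ x y, J x y = J y x)
    (hferro : ∀ x y, 0 ≤ J x y)
    (hf1 : ∀ t, 1 ≤ f t)
    (hflog : ∀ t : ℝ, t ≠ 0 → |t| < δf → (Real.log (|t|⁻¹)) ^ ((1 : ℝ) / 2) ≤ f t)
    (hJsum : ∀ x, Summable fun y => |J x y| * f (J x y))
    (hJbound : ∀ x, ∑' y, |J x y| * f (J x y) ≤ Mf)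
    (hJconn : ∀ x y : V, ∃ (m : ℕ) (w : ℕ → V),
      (∀ i < m, J (w i) (w (i + 1)) ≠ 0) ∧ w 0 = x ∧ w m = y)
    (hJdist : ∀ x y : V, x ≠ y → |J x y| ≤ (G.dist x y : ℝ) ^ (-r))
    (hfeven : ∀ t, f (-t) = f t)
    (hfdec : AntitoneOn f (Set.Ioi 0))
    (hfc : ∀ t : ℝ, 0 ≤ t → c * f t ≤ f ((2 : ℝ) ^ r * t))
    (β : ℝ) (hβ : 0 ≤ β) (ρ : Measure ℝ)
    (hρ : ∀ a : ℝ, 0 < a →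
      0 < ∫⁻ u, ENNReal.ofReal (Real.exp (a * u ^ 2)) ∂ρ ∧
      ∫⁻ u, ENNReal.ofReal (Real.exp (a * u ^ 2)) ∂ρ < ⊤)
    (c₀ : ℝ) (hc₀ : 0 < c₀)
    (hball : ∀ j k : ℕ, 1 ≤ j → 1 ≤ k →
      c₀ * Real.sqrt (Real.log (({y : V | G.dist o y ≤ k + j}).ncard : ℝ) /
        Real.log (({y : V | G.dist o y ≤ j}).ncard : ℝ)) ≤ f ((k : ℝ) ^ (-r))) :
    ∃ νp νm : Measure (V → ℝ), IsProbabilityMeasure νp ∧ IsProbabilityMeasure νm ∧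
      IsRegularWRT (rhoMod ρ (2 * β * Mf / c)) νp ∧
      IsRegularWRT (rhoMod ρ (2 * β * Mf / c)) νm ∧
      IsGibbsMeasure J β ρ νp ∧ IsGibbsMeasure J β ρ νm ∧
      ConvergesTo J β ρ
        (fun x => Real.sqrt (Real.log (({y : V | G.dist o y ≤ G.dist o x}).ncard : ℝ)))
        νp ∧
      ConvergesTo J β ρ
        (fun x => -Real.sqrt (Real.log (({y : V | G.dist o y ≤ G.dist o x}).ncard : ℝ)))
        νm ∧
      ∀ a : ℝ, 0 < a → ∀ ν : Measure (V → ℝ), IsProbabilityMeasure ν →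
        IsRegularWRT (rhoMod ρ a) ν → IsGibbsMeasure J β ρ ν →
        StochDom νm ν ∧ StochDom ν νp := by
  have h0 : ∀ a : ℝ, ∫⁻ u, ENNReal.ofReal (Real.exp (a * u ^ 2)) ∂ρ < ⊤ := by
    intro a
    refine lt_of_le_of_lt ?_ (hρ (max a 1) (by positivity)).2
    refine lintegral_mono fun u => ENNReal.ofReal_le_ofReal (Real.exp_le_exp.2 ?_)
    exact mul_le_mul_of_nonneg_right (le_max_left _ _) (sq_nonneg u)
  set ζ : V → ℝ := fun x => Real.sqrt (Real.log (PM.bs G o (max (G.dist o x) 1) : ℝ)) with hζ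
  have hbs : ∀ n : ℕ, 1 ≤ n → (2 : ℝ) ≤ PM.bs G o n := fun n hn => by
    exact_mod_cast (PM.bs_one o hconn).trans (PM.bs_mono o hconn hn)
  have hlog : ∀ n : ℕ, 1 ≤ n → 0 < Real.log (PM.bs G o n : ℝ) := fun n hn =>
    Real.log_pos (by linarith [hbs n hn])
  have H : PM.Hyp J (fun x y => f (J x y)) β Mf (1 / c₀) ρ ζ := by
    refine ⟨hJsymm, hferro, fun x y => hf1 _, ?_, ?_, hMf, by positivity, ?_, ?_, ?_, hβ, ?_, ?_, h0⟩
    · intro x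
      simpa only [abs_of_nonneg (hferro _ _)] using hJsum x
    · intro x
      simpa only [abs_of_nonneg (hferro _ _)] using hJbound x
    · intro x
      exact Real.sqrt_pos.2 (hlog _ (le_max_right _ _))
    · intro x y hxy hJ
      set j := max (G.dist o x) 1 with hj
      set k := G.dist x y with hk
      have hj1 : 1 ≤ j := le_max_right _ _
      have hk1 : 1 ≤ k := hconn.pos_dist_of_ne hxy
      have hJ0 : 0 < J x y := lt_of_le_of_ne (hferro x y) (Ne.symm hJ)
      have hfk : f ((k : ℝ) ^ (-r)) ≤ f (J x y) := by
        have h1 := hJdist x y hxy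
        rw [abs_of_pos hJ0] at h1
        exact hfdec hJ0 (lt_of_lt_of_le hJ0 h1) h1
      have hb : c₀ * Real.sqrt (Real.log (PM.bs G o (k + j) : ℝ) / Real.log (PM.bs G o j : ℝ)) ≤
        f ((k : ℝ) ^ (-r)) := hball j k hj1 hk1
      have htri : max (G.dist o y) 1 ≤ k + j := by
        have := hconn.dist_triangle (u := o) (v := x) (w := y)
        have h2 : G.dist o x ≤ j := le_max_left _ _
        exact max_le (by omega) (by omega)
      have hzy : ζ y ≤ Real.sqrt (Real.log (PM.bs G o (k + j) : ℝ)) := by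
        apply Real.sqrt_le_sqrt
        apply Real.log_le_log
        · linarith [hbs (max (G.dist o y) 1) (le_max_right _ _)]
        · exact_mod_cast PM.bs_mono o hconn htri
      have hsplit : Real.sqrt (Real.log (PM.bs G o (k + j) : ℝ)) =
          Real.sqrt (Real.log (PM.bs G o (k + j) : ℝ) / Real.log (PM.bs G o j : ℝ)) * ζ x := by
        simp only [hζ]
        rw [← Real.sqrt_mul (div_nonneg (hlog _ (by omega)).le (hlog j hj1).le),
          div_mul_cancel₀ _ (hlog j hj1).ne']
      refine hzy.trans ?_
      rw [hsplit]
      refine mul_le_mul_of_nonneg_right ?_ (Real.sqrt_nonneg _)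
      rw [div_mul_eq_mul_div, one_mul, le_div_iff₀ hc₀, mul_comm]
      exact hb.trans hfk
    · refine (PM.bs_sum o hconn).congr fun x => ?_
      have h1 := hlog (max (G.dist o x) 1) (le_max_right _ _)
      have h2 := hbs (max (G.dist o x) 1) (le_max_right _ _)
      simp only [hζ]
      rw [Real.sq_sqrt h1.le, Real.exp_neg, two_mul, Real.exp_add, Real.exp_log (by linarith), sq]
    · have := h0 0
      simpa using this
    · intro h
      have := (hρ 1 one_pos).1
      rw [Measure.measure_univ_eq_zero.1 h] at this
      simp at this
  have ha : 3 * (β * Mf) / 2 ≤ 2 * β * Mf / c := by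
    rw [le_div_iff₀ hc]
    have : 0 ≤ β * Mf := mul_nonneg hβ hMf.le
    nlinarith
  obtain ⟨νp, p1, p2, p3, p4⟩ := H.plus ha
  obtain ⟨νm, m1, m2, m3, m4⟩ := H.minus ha
  have heq : ∀ x, x ≠ o → ζ x =
      Real.sqrt (Real.log (({y : V | G.dist o y ≤ G.dist o x}).ncard : ℝ)) := by
    intro x hx
    have : max (G.dist o x) 1 = G.dist o x := max_eq_left (hconn.pos_dist_of_ne hx.symm)
    simp only [hζ, this]
    rfl
  refine ⟨νp, νm, inferInstance, inferInstance, p3, m3, p2, m2, H.converges o heq p1,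
    H.converges o (fun x hx => by rw [Pi.neg_apply, heq x hx]) m1, ?_⟩
  intro a _ ν hν hreg hG
  exact ⟨m4 ν hν (H.MD_of_gibbs hG) (H.reg_sum hreg), p4 ν hν (H.MD_of_gibbs hG) (H.reg_sum hreg)⟩
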